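/- Let D be a convex domain in the Euclidean plane that is neither a parallelogram nor a centrally symmetric hexagon. If D admits a k-fold translative tiling of the plane for some positive integer k, then k ≥ 5. Equivalently, besides parallelograms and centrally symmetric hexagons, no convex domain can form a one-, two-, three- or four-fold translative tiling of the plane. -/

import Mathlib

open Pointwise

/-- `K + X` is a `k`-fold translative tiling of the plane: the translate multiset
`(x i)` is discrete, every point of the plane belongs to at least `k` of the translates
`K + x i`, and every point belongs to at most `k` of the translates `interior K + x i`
(multiplicity counted over the index set). -/
def IsKFoldTranslativeTiling {ι : Type} (K : Set (ℝ × ℝ)) (x : ι → ℝ × ℝ) (k : ℕ) : Prop :=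
  (∀ R : ℝ, {i : ι | ‖x i‖ ≤ R}.Finite) ∧
  (∀ p : ℝ × ℝ, ∃ s : Finset ι, k ≤ s.card ∧ ∀ i ∈ s, p - x i ∈ K) ∧
  (∀ p : ℝ × ℝ, ∀ s : Finset ι, (∀ i ∈ s, p - x i ∈ interior K) → s.card ≤ k)

/-- `P` is a (two-dimensional) convex polygon whose vertex set is the finite set `V`:
`P` is the convex hull of `V`, every element of `V` is an extreme point of `P`
(so `V` is exactly the vertex set), and `P` has nonempty interior. -/
def IsConvexPolygon (P : Set (ℝ × ℝ)) (V : Finset (ℝ × ℝ)) : Prop :=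
  P = convexHull ℝ (V : Set (ℝ × ℝ)) ∧
  (∀ v ∈ V, v ∈ Set.extremePoints ℝ P) ∧
  (interior P).Nonempty

/-- `P` is symmetric about some point `c`. -/
def IsCentrallySymmetric (P : Set (ℝ × ℝ)) : Prop :=
  ∃ c : ℝ × ℝ, ∀ p ∈ P, 2 • c - p ∈ P

/-- The segment `[a, b]` is an edge of the convex polygon `P` with vertex set `V`. -/
def IsEdge (P : Set (ℝ × ℝ)) (V : Finset (ℝ × ℝ)) (a b : ℝ × ℝ) : Prop :=
  a ∈ V ∧ b ∈ V ∧ a ≠ b ∧ segment ℝ a b ⊆ frontier P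

/-- `D` is a parallelogram: the set of points `v + s • a + t • b` with `s, t ∈ [0,1]`,
for some linearly independent vectors `a, b`. -/
def IsParallelogram (D : Set (ℝ × ℝ)) : Prop :=
  ∃ v a b : ℝ × ℝ, LinearIndependent ℝ ![a, b] ∧
    D = (fun st : ℝ × ℝ => v + st.1 • a + st.2 • b) ''
      (Set.Icc (0 : ℝ) 1 ×ˢ Set.Icc (0 : ℝ) 1)

/-- `D` is a centrally symmetric hexagon: a convex polygon with exactly `6` vertices
which is symmetric about a point. -/
def IsCentrallySymmetricHexagon (D : Set (ℝ × ℝ)) : Prop :=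
  ∃ V : Finset (ℝ × ℝ), IsConvexPolygon D V ∧ V.card = 6 ∧ IsCentrallySymmetric D

/-!
If `K + X` is a `k`-fold tiling and a point lies on the boundary of one translate, then another
translate through this point has interior disjoint from the first. Hence `K` has only finitely many
extreme points. Comparing the numbers of translates on the two sides of a line shows that the
polygon `K` has opposite edges that are parallel and of equal length, so `K` is a zonogon, with
`2 * m` edges say. For `m = 2` it is a parallelogram and for `m = 3` a centrally symmetric hexagon.

Let `m ≥ 4`. The same comparison shows, for an edge vector `e` and the vector `b` that carries this
edge to the opposite one, that any half-open segment with direction vector `e` contains as many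
points of `X` as its translate by `b`. Therefore either `b` is a period of `X` or `X` contains two
complete progressions of step `e`, on a line and on its translate by `b`, that do not correspond to
each other under `b`. In the second case enough translates have a vertex on a common line parallel
to `e` for an averaging argument along this line to give `k ≥ 5`. If the first case occurs for every
edge, then the differences of the vectors `b` are periods as well, among them all sums of two
consecutive edge vectors, and a point near a vertex of a translate lies in the interiors of at least
five translates that differ by such periods.
-/

section

open Set Filter Topology Bornology

/-! ### The cross product -/

/-- The planar cross product `a × b = a₁ b₂ - a₂ b₁`. Every linear functional on the plane has the
form `cross₂ r`, so `r` encodes the direction of an oriented line and `cross₂ r` the signed distance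
to that line. -/
def cross₂ (a b : ℝ × ℝ) : ℝ := a.1 * b.2 - a.2 * b.1

section Cross

variable (a b c : ℝ × ℝ) (t : ℝ)

@[simp] lemma cross₂_add_right : cross₂ a (b + c) = cross₂ a b + cross₂ a c := by
  simp [cross₂]; ring

@[simp] lemma cross₂_add_left : cross₂ (a + b) c = cross₂ a c + cross₂ b c := by
  simp [cross₂]; ring

@[simp] lemma cross₂_sub_right : cross₂ a (b - c) = cross₂ a b - cross₂ a c := by
  simp [cross₂]; ring

@[simp] lemma cross₂_sub_left : cross₂ (a - b) c = cross₂ a c - cross₂ b c := by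
  simp [cross₂]; ring

@[simp] lemma cross₂_smul_right : cross₂ a (t • b) = t * cross₂ a b := by
  simp [cross₂]; ring

@[simp] lemma cross₂_smul_left : cross₂ (t • a) b = t * cross₂ a b := by
  simp [cross₂]; ring

@[simp] lemma cross₂_neg_right : cross₂ a (-b) = -cross₂ a b := by
  simp [cross₂]; ring

@[simp] lemma cross₂_neg_left : cross₂ (-a) b = -cross₂ a b := by
  simp [cross₂]; ring

@[simp] lemma cross₂_self : cross₂ a a = 0 := by
  simp [cross₂]; ring

@[simp] lemma cross₂_zero_right : cross₂ a 0 = 0 := by simp [cross₂]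

@[simp] lemma cross₂_zero_left : cross₂ 0 a = 0 := by simp [cross₂]

lemma cross₂_comm : cross₂ a b = -cross₂ b a := by simp [cross₂]; ring

lemma cross₂_sum_right {α : Type*} (s : Finset α) (f : α → ℝ × ℝ) :
    cross₂ a (∑ i ∈ s, f i) = ∑ i ∈ s, cross₂ a (f i) := by
  simp only [cross₂, Prod.snd_sum, Prod.fst_sum, Finset.mul_sum, Finset.sum_sub_distrib]

end Cross

@[fun_prop]
lemma continuous_cross₂ {α : Type*} [TopologicalSpace α] {f g : α → ℝ × ℝ}
    (hf : Continuous f) (hg : Continuous g) : Continuous fun y => cross₂ (f y) (g y) := by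
  unfold cross₂; fun_prop

lemma cross₂_smul_eq_add {u v : ℝ × ℝ} (y : ℝ × ℝ) :
    cross₂ u v • y = cross₂ y v • u + cross₂ u y • v := by
  ext <;> simp [cross₂] <;> ring

lemma eq_add_of_cross₂_ne_zero {u v : ℝ × ℝ} (h : cross₂ u v ≠ 0) (y : ℝ × ℝ) :
    y = (cross₂ y v / cross₂ u v) • u + (cross₂ u y / cross₂ u v) • v := by
  rw [div_eq_inv_mul, div_eq_inv_mul, mul_smul, mul_smul, ← smul_add, ← cross₂_smul_eq_add,
    inv_smul_smul₀ h]

lemma exists_eq_smul_of_cross₂_eq_zero {r y : ℝ × ℝ} (hr : r ≠ 0) (h : cross₂ r y = 0) :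
    ∃ t : ℝ, y = t • r := by
  have h' : r.1 * y.2 = r.2 * y.1 := sub_eq_zero.1 h
  by_cases h1 : r.1 = 0
  · have h2 : r.2 ≠ 0 := fun h2 => hr (Prod.ext h1 h2)
    have hy : y.1 = 0 := by simpa [h1, h2] using h'
    exact ⟨y.2 / r.2, by ext <;> simp [h1, h2, hy]⟩
  · refine ⟨y.1 / r.1, ?_⟩
    ext
    · simp [h1]
    · simp; field_simp; linarith

lemma exists_forall_eq_cross₂ (f : StrongDual ℝ (ℝ × ℝ)) : ∃ r, ∀ y, f y = cross₂ r y := by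
  refine ⟨(f (0, 1), -f (1, 0)), fun y => ?_⟩
  have hy : y = y.1 • ((1 : ℝ), (0 : ℝ)) + y.2 • ((0 : ℝ), (1 : ℝ)) := by ext <;> simp
  conv_lhs => rw [hy, map_add, map_smul, map_smul]
  simp [cross₂]; ring

/-- The quarter turn of `r`, a direction pointing to the positive side of the line `ℝ r`. -/
def quarterTurn (r : ℝ × ℝ) : ℝ × ℝ := (-r.2, r.1)

lemma cross₂_quarterTurn_pos {r : ℝ × ℝ} (hr : r ≠ 0) : 0 < cross₂ r (quarterTurn r) := by
  have h : cross₂ r (quarterTurn r) = r.1 ^ 2 + r.2 ^ 2 := by simp [cross₂, quarterTurn]; ring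
  rw [h]
  by_cases h1 : r.1 = 0
  · have h2 : r.2 ≠ 0 := fun h2 => hr (Prod.ext h1 h2)
    positivity
  · positivity

lemma tendsto_add_smul_nhdsGT {E : Type*} [AddCommGroup E] [Module ℝ E] [TopologicalSpace E]
    [ContinuousAdd E] [ContinuousSMul ℝ E] (y d : E) :
    Tendsto (fun δ : ℝ => y + δ • d) (𝓝[>] 0) (𝓝 y) := by
  have h : Continuous fun δ : ℝ => y + δ • d := by fun_prop
  simpa using (h.tendsto 0).mono_left nhdsWithin_le_nhds

lemma eventually_add_smul_mem_interior {E : Type*} [AddCommGroup E] [Module ℝ E]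
    [TopologicalSpace E] [ContinuousAdd E] [ContinuousSMul ℝ E] {s : Set E} {p : E}
    (hp : p ∈ interior s) (d : E) : ∀ᶠ δ : ℝ in 𝓝[>] 0, p + δ • d ∈ interior s :=
  (tendsto_add_smul_nhdsGT p d).eventually_mem (isOpen_interior.mem_nhds hp)

/-- A convex domain: a compact convex subset of the plane with nonempty interior. -/
structure IsConvexDomain (D : Set (ℝ × ℝ)) : Prop where
  isCompact : IsCompact D
  convex : Convex ℝ D
  nonempty_interior : (interior D).Nonempty

section Interior

variable {D : Set (ℝ × ℝ)} {p r : ℝ × ℝ}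

lemma cross₂_lt_of_mem_interior {H : ℝ} (hr : r ≠ 0) (h : ∀ y ∈ D, cross₂ r y ≤ H)
    (hp : p ∈ interior D) : cross₂ r p < H := by
  obtain ⟨δ, hδ, hδ0⟩ := (((tendsto_add_smul_nhdsGT p (quarterTurn r)).eventually_mem
    (isOpen_interior.mem_nhds hp)).and self_mem_nhdsWithin).exists
  have hle := h _ (interior_subset hδ)
  have hpos := mul_pos (show 0 < δ from hδ0) (cross₂_quarterTurn_pos hr)
  simp only [cross₂_add_right, cross₂_smul_right] at hle
  linarith

lemma exists_forall_cross₂_le_of_disjoint {E : Set (ℝ × ℝ)} (hc : Convex ℝ D)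
    (hi : (interior D).Nonempty) (hE : Convex ℝ E) (hne : E.Nonempty)
    (hdisj : Disjoint (interior D) E) : ∃ r ≠ 0, ∀ y ∈ D, ∀ z ∈ E, cross₂ r y ≤ cross₂ r z := by
  obtain ⟨f, u, hf, hle, hge⟩ :=
    geometric_hahn_banach_of_nonempty_interior hc hE hdisj hi hne
  obtain ⟨r, hr⟩ := exists_forall_eq_cross₂ f
  refine ⟨r, ?_, fun y hy z hz => ?_⟩
  · rintro rfl
    exact hf (by ext <;> simp [hr])
  · rw [← hr, ← hr]
    exact (hle y hy).trans (hge z hz)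

lemma exists_forall_cross₂_le (hc : Convex ℝ D) (hi : (interior D).Nonempty)
    (hp : p ∉ interior D) : ∃ r ≠ 0, ∀ y ∈ D, cross₂ r y ≤ cross₂ r p := by
  simpa using exists_forall_cross₂_le_of_disjoint hc hi (convex_singleton p)
    (singleton_nonempty p) (disjoint_singleton_right.2 hp)

lemma exists_smul_eq_of_cross₂_eq_zero_of_ne {r s : ℝ × ℝ} (hr : r ≠ 0) (hs : s ≠ 0)
    (h : cross₂ s r = 0) : ∃ t : ℝ, t ≠ 0 ∧ s = t • r := by
  obtain ⟨t, rfl⟩ := exists_eq_smul_of_cross₂_eq_zero hr (y := s) (by rw [cross₂_comm, h, neg_zero])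
  exact ⟨t, fun ht => hs (by simp [ht]), rfl⟩

lemma add_smul_mem_interior_of_cross₂_lt (hc : Convex ℝ D) (hi : (interior D).Nonempty)
    {y p q : ℝ × ℝ} {t t₀ : ℝ} (hr : r ≠ 0) (hy : y ∈ D) (hy₀ : y + t₀ • r ∈ D) (ht : 0 < t)
    (htt₀ : t < t₀) (hp : p ∈ D) (hq : q ∈ D) (hyp : cross₂ r y < cross₂ r p)
    (hqy : cross₂ r q < cross₂ r y) : y + t • r ∈ interior D := by
  by_contra hint
  obtain ⟨s, hs, hle⟩ := exists_forall_cross₂_le hc hi hint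
  have hsr : cross₂ s r = 0 := by
    have h1 := hle _ hy
    have h2 := hle _ hy₀
    simp only [cross₂_add_right, cross₂_smul_right] at h1 h2
    nlinarith
  obtain ⟨c, hc0, rfl⟩ := exists_smul_eq_of_cross₂_eq_zero_of_ne hr hs hsr
  have h1 := hle p hp
  have h2 := hle q hq
  simp only [cross₂_add_right, cross₂_smul_right, cross₂_smul_left, cross₂_self, mul_zero,
    add_zero] at h1 h2
  rcases hc0.lt_or_gt with h | h <;> nlinarith

lemma add_smul_add_smul_mem_interior (hc : Convex ℝ D) (hi : (interior D).Nonempty)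
    {a u v : ℝ × ℝ} (ha : a ∈ D) (hu : a + u ∈ D) (hv : a + v ∈ D) (huv : cross₂ u v ≠ 0) {s t : ℝ}
    (hs : 0 < s) (ht : 0 < t) (hst : s + t < 1) : a + s • u + t • v ∈ interior D := by
  by_contra hint
  obtain ⟨r, hr, hle⟩ := exists_forall_cross₂_le hc hi hint
  have h0 := hle _ ha
  have h1 := hle _ hu
  have h2 := hle _ hv
  simp only [cross₂_add_right, cross₂_smul_right] at h0 h1 h2
  have hru : cross₂ r u = 0 := by nlinarith
  have hrv : cross₂ r v = 0 := by nlinarith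
  obtain ⟨c, rfl⟩ := exists_eq_smul_of_cross₂_eq_zero hr hru
  exact huv (by simp [hrv])

lemma add_mem_interior_of_cross₂_pos (hc : Convex ℝ D) (hi : (interior D).Nonempty)
    {a b c : ℝ × ℝ} (hp : p ∈ D) (hab : p + a + b ∈ D) (hbc : p + b + c ∈ D) (h₁ : 0 < cross₂ a b)
    (h₂ : 0 < cross₂ b c) (h₃ : 0 < cross₂ a c) : p + b ∈ interior D := by
  by_contra hint
  obtain ⟨r, hr, hle⟩ := exists_forall_cross₂_le hc hi hint
  have ha' := hle _ hab
  have hc' := hle _ hbc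
  have hp' := hle _ hp
  simp only [cross₂_add_right] at ha' hc' hp'
  have relation : cross₂ a c * cross₂ r b = cross₂ b c * cross₂ r a + cross₂ a b * cross₂ r c := by
    simp only [cross₂]; ring
  have hrb : cross₂ r b = 0 := by nlinarith
  have hrc : cross₂ r c = 0 := by nlinarith
  obtain ⟨s, rfl⟩ := exists_eq_smul_of_cross₂_eq_zero hr hrb
  exact h₂.ne' (by simp [hrc])

lemma eventually_add_smul_add_smul_mem_interior (hc : Convex ℝ D) (hi : (interior D).Nonempty)
    {a u w d : ℝ × ℝ} (ha : a ∈ D) (hu : a + u ∈ D) (hw : a + w ∈ D) {s : ℝ} (hs₀ : 0 < s)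
    (hs₁ : s < 1) (hd : 0 < cross₂ u w * cross₂ u d) :
    ∀ᶠ δ : ℝ in 𝓝[>] 0, a + s • u + δ • d ∈ interior D := by
  have hne : cross₂ u w ≠ 0 := fun h => by simp [h] at hd
  have hβ : 0 < cross₂ u d / cross₂ u w := by
    rw [← mul_div_mul_left _ _ hne]; exact div_pos hd (mul_self_pos.2 hne)
  have hd' := eq_add_of_cross₂_ne_zero hne d
  set α := cross₂ d w / cross₂ u w
  set β := cross₂ u d / cross₂ u w
  have hpos : ∀ᶠ δ : ℝ in 𝓝[>] 0, 0 < s + δ * α :=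
    (tendsto_add_smul_nhdsGT s α).eventually (lt_mem_nhds hs₀)
  have hlt : ∀ᶠ δ : ℝ in 𝓝[>] 0, s + δ * (α + β) < 1 :=
    (tendsto_add_smul_nhdsGT s (α + β)).eventually (gt_mem_nhds hs₁)
  filter_upwards [hpos, hlt, self_mem_nhdsWithin] with δ h₁ h₂ hδ
  have h := add_smul_add_smul_mem_interior hc hi ha hu hw hne h₁ (mul_pos hδ hβ) (by linarith)
  convert h using 1
  rw [hd']
  module

end Interior

/-! ### Discrete families and tilings -/

section Discrete

variable {ι E : Type*} [NormedAddCommGroup E] {x : ι → E} {D : Set E}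

lemma finite_preimage_of_isBounded (hx : ∀ R : ℝ, {i | ‖x i‖ ≤ R}.Finite) {B : Set E}
    (hB : IsBounded B) : (x ⁻¹' B).Finite := by
  obtain ⟨R, hR⟩ := hB.exists_norm_le
  exact (hx R).subset fun i hi => hR _ hi

lemma finite_setOf_sub_mem (hx : ∀ R : ℝ, {i | ‖x i‖ ≤ R}.Finite) (hD : IsBounded D) (z : E) :
    {i | z - x i ∈ D}.Finite := by
  obtain ⟨R, hR⟩ := hD.exists_norm_le
  refine (hx (‖z‖ + R)).subset fun i hi => ?_
  calc ‖x i‖ = ‖z - (z - x i)‖ := by rw [sub_sub_cancel]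
    _ ≤ ‖z‖ + ‖z - x i‖ := norm_sub_le _ _
    _ ≤ ‖z‖ + R := by gcongr; exact hR _ hi

lemma eventually_forall_sub_mem_imp (hx : ∀ R : ℝ, {i | ‖x i‖ ≤ R}.Finite) (hD : IsCompact D)
    (z : E) : ∀ᶠ z' in 𝓝 z, ∀ i, z' - x i ∈ D → z - x i ∈ D := by
  obtain ⟨R, hR⟩ := hD.isBounded.exists_norm_le
  have hclose : ∀ᶠ z' in 𝓝 z, ∀ i ∈ {i | ‖x i‖ ≤ ‖z‖ + 1 + R},
      z' - x i ∈ D → z - x i ∈ D := by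
    rw [eventually_all_finite (hx _)]
    intro i _
    by_cases h : z - x i ∈ D
    · exact Eventually.of_forall fun _ _ => h
    · have hcont : ContinuousAt (fun z' => z' - x i) z := by fun_prop
      filter_upwards [hcont.eventually_mem (hD.isClosed.isOpen_compl.mem_nhds h)] with z' hz' hz
      exact absurd hz hz'
  have hnorm : ∀ᶠ z' in 𝓝 z, ‖z'‖ < ‖z‖ + 1 :=
    continuousAt_id.norm.eventually (gt_mem_nhds (lt_add_one _))
  filter_upwards [hclose, hnorm] with z' h₁ h₂ i hi
  refine h₁ i ?_ hi
  calc ‖x i‖ = ‖z' - (z' - x i)‖ := by rw [sub_sub_cancel]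
    _ ≤ ‖z'‖ + ‖z' - x i‖ := norm_sub_le _ _
    _ ≤ ‖z‖ + 1 + R := add_le_add h₂.le (hR _ hi)

end Discrete

namespace IsKFoldTranslativeTiling

variable {ι : Type} {D : Set (ℝ × ℝ)} {x : ι → ℝ × ℝ} {k : ℕ}

lemma nonempty (hT : IsKFoldTranslativeTiling D x k) (hk : 0 < k) : Nonempty ι := by
  obtain ⟨s, hs, _⟩ := hT.2.1 0
  exact (Finset.card_pos.1 (hk.trans_le hs)).to_subtype.map Subtype.val

lemma finite_of_eventually_mem (hT : IsKFoldTranslativeTiling D x k) (hD : IsCompact D)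
    {z d : ℝ × ℝ} {S : Set ι} (h : ∀ i ∈ S, ∀ᶠ δ : ℝ in 𝓝[>] 0, z - x i + δ • d ∈ D) :
    S.Finite :=
  (finite_setOf_sub_mem hT.1 hD.isBounded z).subset fun i hi =>
    hD.isClosed.mem_of_tendsto (tendsto_add_smul_nhdsGT _ d) (h i hi)

lemma ncard_le_of_eventually_mem_interior (hT : IsKFoldTranslativeTiling D x k)
    (hD : IsCompact D) {z d : ℝ × ℝ} {S : Set ι}
    (h : ∀ i ∈ S, ∀ᶠ δ : ℝ in 𝓝[>] 0, z - x i + δ • d ∈ interior D) : S.ncard ≤ k := by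
  have hS : S.Finite := hT.finite_of_eventually_mem hD fun i hi =>
    (h i hi).mono fun _ hδ => interior_subset hδ
  obtain ⟨δ, hδ⟩ := ((eventually_all_finite hS).2 h).exists
  rw [ncard_eq_toFinset_card _ hS]
  refine hT.2.2 (z + δ • d) _ fun i hi => ?_
  rw [add_sub_right_comm]
  exact hδ i (hS.mem_toFinset.1 hi)

lemma le_ncard_of_eventually_notMem (hT : IsKFoldTranslativeTiling D x k)
    (hD : IsCompact D) {z d : ℝ × ℝ} {S : Set ι} (hS : S.Finite)
    (h : ∀ i ∉ S, z - x i ∈ D → ∀ᶠ δ : ℝ in 𝓝[>] 0, z - x i + δ • d ∉ D) : k ≤ S.ncard := by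
  have hfin := (finite_setOf_sub_mem hT.1 hD.isBounded z).sdiff (t := S)
  obtain ⟨δ, hδ, hnear⟩ := (((eventually_all_finite hfin).2 fun i hi => h i hi.2 hi.1).and
    ((tendsto_add_smul_nhdsGT z d).eventually (eventually_forall_sub_mem_imp hT.1 hD z))).exists
  obtain ⟨s, hs, hsD⟩ := hT.2.1 (z + δ • d)
  refine hs.trans ?_
  rw [← ncard_coe_finset]
  refine ncard_le_ncard (fun i hi => ?_) hS
  by_contra hiS
  have hmem := hsD i hi
  refine hδ i ⟨hnear i hmem, hiS⟩ ?_
  rwa [← add_sub_right_comm]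

lemma ncard_eq_of_eventually (hT : IsKFoldTranslativeTiling D x k) (hD : IsCompact D)
    {z d : ℝ × ℝ} {S : Set ι}
    (hin : ∀ i ∈ S, ∀ᶠ δ : ℝ in 𝓝[>] 0, z - x i + δ • d ∈ interior D)
    (hout : ∀ i ∉ S, z - x i ∈ D → ∀ᶠ δ : ℝ in 𝓝[>] 0, z - x i + δ • d ∉ D) : S.ncard = k :=
  (hT.ncard_le_of_eventually_mem_interior hD hin).antisymm <|
    hT.le_ncard_of_eventually_notMem hD (hT.finite_of_eventually_mem hD fun i hi =>
      (hin i hi).mono fun _ hδ => interior_subset hδ) hout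

end IsKFoldTranslativeTiling

/-- The points `A + s r` with parameter `s ∈ I` of the line through `A` in direction `r`. -/
def linePart (A r : ℝ × ℝ) (I : Set ℝ) : Set (ℝ × ℝ) := (fun s : ℝ => A + s • r) '' I

section LinePart

variable {A r y : ℝ × ℝ} {I J : Set ℝ}

lemma linePart_mono (h : I ⊆ J) : linePart A r I ⊆ linePart A r J := image_mono h

lemma cross₂_eq_of_mem_linePart (hy : y ∈ linePart A r I) : cross₂ r y = cross₂ r A := by
  obtain ⟨s, _, rfl⟩ := hy
  simp

lemma add_smul_mem_linePart_iff (hr : r ≠ 0) {s : ℝ} : A + s • r ∈ linePart A r I ↔ s ∈ I :=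
  (((add_right_injective A).comp (smul_left_injective ℝ hr)).mem_set_image)

lemma isBounded_linePart (hI : IsBounded I) : IsBounded (linePart A r I) :=
  (hI.isCompact_closure.image (by fun_prop)).isBounded.subset
    (image_mono subset_closure)

lemma vadd_mem_linePart_iff {v : ℝ × ℝ} : v + y ∈ linePart (v + A) r I ↔ y ∈ linePart A r I := by
  simp only [linePart, mem_image, add_assoc, add_right_inj]

lemma linePart_neg : linePart A (-r) I = linePart A r (-I) := by
  ext y
  simp only [linePart, mem_image, Set.mem_neg]
  constructor <;> rintro ⟨s, hs, rfl⟩ <;> exact ⟨-s, by simpa using hs, by simp⟩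

end LinePart

/-- The face of `D` on which `cross₂ r` is maximal is the segment from `A` to `A + τ r`. -/
structure IsFace (D : Set (ℝ × ℝ)) (r A : ℝ × ℝ) (τ : ℝ) : Prop where
  nonneg : 0 ≤ τ
  subset : linePart A r (Icc 0 τ) ⊆ D
  cross₂_le : ∀ y ∈ D, cross₂ r y ≤ cross₂ r A
  mem_of_cross₂_eq : ∀ y ∈ D, cross₂ r y = cross₂ r A → y ∈ linePart A r (Icc 0 τ)

/-! ### Faces -/

section Face

variable {D : Set (ℝ × ℝ)} {r A B d y : ℝ × ℝ} {τ τ' : ℝ}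

namespace IsFace

lemma left_mem (F : IsFace D r A τ) : A ∈ D := F.subset ⟨0, ⟨le_rfl, F.nonneg⟩, by simp⟩

lemma right_mem (F : IsFace D r A τ) : A + τ • r ∈ D :=
  F.subset ⟨τ, ⟨F.nonneg, le_rfl⟩, rfl⟩

lemma cross₂_lt_of_mem_interior (F : IsFace D r A τ) (hr : r ≠ 0) (hy : y ∈ interior D) :
    cross₂ r y < cross₂ r A :=
  _root_.cross₂_lt_of_mem_interior hr F.cross₂_le hy

lemma eventually_add_smul_mem_interior (F : IsFace D r A τ) (hD : IsConvexDomain D) (hr : r ≠ 0)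
    (hy : y ∈ linePart A r (Ioo 0 τ)) (hd : cross₂ r d < 0) :
    ∀ᶠ δ : ℝ in 𝓝[>] 0, y + δ • d ∈ interior D := by
  obtain ⟨s, hs, rfl⟩ := hy
  obtain ⟨o, ho⟩ := hD.nonempty_interior
  have hτ : 0 < τ := hs.1.trans hs.2
  have hlt := F.cross₂_lt_of_mem_interior hr ho
  have h := eventually_add_smul_add_smul_mem_interior hD.convex hD.nonempty_interior F.left_mem
    (u := τ • r) (w := o - A) (d := d) (s := s / τ) F.right_mem
    (by simpa using interior_subset ho) (div_pos hs.1 hτ) ((div_lt_one hτ).2 hs.2) (by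
      simp only [cross₂_smul_left, cross₂_sub_right]
      have := mul_pos_of_neg_of_neg (sub_neg.2 hlt) hd
      nlinarith [mul_pos (mul_pos hτ hτ) this])
  simpa only [smul_smul, div_mul_cancel₀ _ hτ.ne'] using h

lemma add_smul_notMem (F : IsFace D r A τ) (hy : cross₂ r y = cross₂ r A) (hd : 0 < cross₂ r d)
    {δ : ℝ} (hδ : 0 < δ) : y + δ • d ∉ D := fun h => by
  have hle := F.cross₂_le _ h
  simp only [cross₂_add_right, cross₂_smul_right, hy] at hle
  linarith [mul_pos hδ hd]

end IsFace

lemma eventually_add_mem_Ioo_iff (s a b : ℝ) :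
    ∀ᶠ δ : ℝ in 𝓝[>] 0, s + δ ∈ Ioo a b ↔ s ∈ Ico a b := by
  have hδb : ∀ᶠ δ : ℝ in 𝓝[>] 0, s < b → s + δ < b := by
    by_cases h : s < b
    · filter_upwards [Ioo_mem_nhdsGT (sub_pos.2 h)] with δ hδ _
      linarith [hδ.2]
    · exact Eventually.of_forall fun _ h' => absurd h' h
  have hδa : ∀ᶠ δ : ℝ in 𝓝[>] 0, s < a → s + δ < a := by
    by_cases h : s < a
    · filter_upwards [Ioo_mem_nhdsGT (sub_pos.2 h)] with δ hδ _
      linarith [hδ.2]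
    · exact Eventually.of_forall fun _ h' => absurd h' h
  filter_upwards [hδa, hδb, self_mem_nhdsWithin] with δ h₁ h₂ (hδ : 0 < δ)
  refine ⟨fun h => ⟨not_lt.1 fun h' => (h₁ h').not_gt h.1, by linarith [h.2]⟩,
    fun h => ⟨by linarith [h.1], h₂ h.2⟩⟩

lemma eventually_add_smul_mem_linePart_iff (hr : r ≠ 0) (A y : ℝ × ℝ) (a b : ℝ) :
    ∀ᶠ δ : ℝ in 𝓝[>] 0, y + δ • r ∈ linePart A r (Ioo a b) ↔ y ∈ linePart A r (Ico a b) := by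
  by_cases h : cross₂ r (y - A) = 0
  · obtain ⟨s, hs⟩ := exists_eq_smul_of_cross₂_eq_zero hr h
    obtain rfl : y = A + s • r := by rw [← hs]; abel
    filter_upwards [eventually_add_mem_Ioo_iff s a b] with δ hδ
    rw [add_assoc, ← add_smul, add_smul_mem_linePart_iff hr, add_smul_mem_linePart_iff hr, hδ]
  · refine Eventually.of_forall fun δ => iff_of_false (fun hmem => h ?_) (fun hmem => h ?_)
    all_goals simpa [sub_eq_zero] using cross₂_eq_of_mem_linePart hmem

lemma eventually_add_smul_mem_linePart_neg_iff (hr : r ≠ 0) (A y : ℝ × ℝ) (a b : ℝ) :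
    ∀ᶠ δ : ℝ in 𝓝[>] 0,
      y + δ • r ∈ linePart A (-r) (Ioo a b) ↔ y ∈ linePart A (-r) (Ioc a b) := by
  simpa only [linePart_neg, neg_Ioo, neg_Ioc] using
    eventually_add_smul_mem_linePart_iff hr A y (-b) (-a)

lemma IsFace.eventually_mem_of_cross₂_eq (F : IsFace D r A τ) (hr : r ≠ 0) (hy : y ∈ D)
    (hA : cross₂ r y = cross₂ r A) :
    ∀ᶠ δ : ℝ in 𝓝[>] 0, y + δ • r ∈ D → y + δ • r ∈ linePart A r (Ioo 0 τ) := by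
  filter_upwards [eventually_add_smul_mem_linePart_iff hr A y 0 τ, self_mem_nhdsWithin]
    with δ hδ (hδ₀ : 0 < δ) hmem
  obtain ⟨s, hs, rfl⟩ := F.mem_of_cross₂_eq y hy hA
  obtain ht := F.mem_of_cross₂_eq _ hmem (by simp)
  simp only [add_assoc, ← add_smul, add_smul_mem_linePart_iff hr] at hδ ht ⊢
  exact hδ.2 ⟨hs.1, by linarith [ht.2]⟩

lemma IsFace.eventually_mem_of_cross₂_neg_eq (G : IsFace D (-r) B τ') (hr : r ≠ 0) (hy : y ∈ D)
    (hB : cross₂ r y = cross₂ r B) :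
    ∀ᶠ δ : ℝ in 𝓝[>] 0, y + δ • r ∈ D → y + δ • r ∈ linePart B (-r) (Ioo 0 τ') := by
  filter_upwards [eventually_add_smul_mem_linePart_neg_iff hr B y 0 τ', self_mem_nhdsWithin]
    with δ hδ (hδ₀ : 0 < δ) hmem
  obtain ⟨s, hs, rfl⟩ := G.mem_of_cross₂_eq y hy (by simp [hB])
  have hpt : B + s • -r + δ • r = B + (s - δ) • -r := by module
  have ht := G.mem_of_cross₂_eq _ hmem (by simp)
  simp only [hpt, add_smul_mem_linePart_iff (neg_ne_zero.2 hr)] at hδ ht ⊢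
  exact hδ.2 ⟨by linarith [ht.1], hs.2⟩

lemma IsFace.eventually_mem_interior_or_mem_face (F : IsFace D r A τ) (G : IsFace D (-r) B τ')
    (hc : Convex ℝ D) (hi : (interior D).Nonempty) (hr : r ≠ 0) (hy : y ∈ D) :
    ∀ᶠ δ : ℝ in 𝓝[>] 0, y + δ • r ∈ D → y + δ • r ∈
      interior D ∪ linePart A r (Ioo 0 τ) ∪ linePart B (-r) (Ioo 0 τ') := by
  by_cases hA : cross₂ r y = cross₂ r A
  · exact (F.eventually_mem_of_cross₂_eq hr hy hA).mono fun δ hδ h => .inl (.inr (hδ h))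
  by_cases hB : cross₂ r y = cross₂ r B
  · exact (G.eventually_mem_of_cross₂_neg_eq hr hy hB).mono fun δ hδ h => .inr (hδ h)
  by_cases hstep : ∃ ε₀ : ℝ, 0 < ε₀ ∧ y + ε₀ • r ∈ D
  · obtain ⟨ε₀, hε₀, hmem⟩ := hstep
    filter_upwards [Ioo_mem_nhdsGT hε₀] with δ hδ _
    have hGy := G.cross₂_le y hy
    simp only [cross₂_neg_left, neg_le_neg_iff] at hGy
    exact .inl <| .inl <| add_smul_mem_interior_of_cross₂_lt hc hi hr hy hmem hδ.1 hδ.2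
      F.left_mem G.left_mem ((F.cross₂_le y hy).lt_of_ne hA) (hGy.lt_of_ne' hB)
  · filter_upwards [self_mem_nhdsWithin] with δ hδ hmem
    exact absurd ⟨δ, hδ, hmem⟩ hstep

end Face

namespace IsKFoldTranslativeTiling

variable {ι : Type} {D : Set (ℝ × ℝ)} {x : ι → ℝ × ℝ} {k : ℕ} {r A B z : ℝ × ℝ} {τ τ' : ℝ}

lemma ncard_interior_or_face (hT : IsKFoldTranslativeTiling D x k) (hD : IsConvexDomain D)
    (hr : r ≠ 0) (F : IsFace D r A τ) (G : IsFace D (-r) B τ')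
    (hz : ∀ i, z - x i ∈ D → z - x i ∈
      interior D ∪ linePart A r (Ioo 0 τ) ∪ linePart B (-r) (Ioo 0 τ')) :
    {i | z - x i ∈ interior D ∪ linePart A r (Ioo 0 τ)}.ncard = k := by
  have hq := cross₂_quarterTurn_pos hr
  refine hT.ncard_eq_of_eventually hD.isCompact (z := z) (d := -quarterTurn r) ?_ ?_
  · rintro i (hi | hi)
    · exact _root_.eventually_add_smul_mem_interior hi _
    · exact F.eventually_add_smul_mem_interior hD hr hi (by simpa using hq)
  · intro i hi hiD
    filter_upwards [self_mem_nhdsWithin] with δ (hδ : 0 < δ)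
    have hmem : z - x i ∈ linePart B (-r) (Ioo 0 τ') := (hz i hiD).resolve_left hi
    exact G.add_smul_notMem (cross₂_eq_of_mem_linePart hmem) (by simpa using hq) hδ

lemma ncard_openFace_eq (hT : IsKFoldTranslativeTiling D x k) (hD : IsConvexDomain D)
    (hr : r ≠ 0) (F : IsFace D r A τ) (G : IsFace D (-r) B τ')
    (hz : ∀ i, z - x i ∈ D → z - x i ∈
      interior D ∪ linePart A r (Ioo 0 τ) ∪ linePart B (-r) (Ioo 0 τ')) :
    {i | z - x i ∈ linePart A r (Ioo 0 τ)}.ncard =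
      {i | z - x i ∈ linePart B (-r) (Ioo 0 τ')}.ncard := by
  have hfin {E : Set (ℝ × ℝ)} (hE : IsBounded E) := finite_setOf_sub_mem hT.1 hE z
  have hint := hD.isCompact.isBounded.subset interior_subset
  have hsplit {r A : ℝ × ℝ} {τ : ℝ} (hr : r ≠ 0) (F : IsFace D r A τ) :
      {i | z - x i ∈ interior D ∪ linePart A r (Ioo 0 τ)}.ncard =
        {i | z - x i ∈ interior D}.ncard + {i | z - x i ∈ linePart A r (Ioo 0 τ)}.ncard :=
    ncard_union_eq (disjoint_left.2 fun i hi hi' =>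
      (F.cross₂_lt_of_mem_interior hr hi).ne (cross₂_eq_of_mem_linePart hi'))
      (hfin hint) (hfin (isBounded_linePart (Metric.isBounded_Ioo _ _)))
  have htop := hT.ncard_interior_or_face hD hr F G hz
  have hbot := hT.ncard_interior_or_face hD (neg_ne_zero.2 hr) G ((neg_neg r).symm ▸ F) fun i hi =>
    by simpa only [neg_neg, union_right_comm] using hz i hi
  rw [hsplit hr F] at htop
  rw [hsplit (neg_ne_zero.2 hr) G] at hbot
  omega

/-- Shift a point by a small multiple of `r`, so that it becomes generic, and compare the numbers
of translates met just above and just below it. -/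
lemma ncard_face_eq (hT : IsKFoldTranslativeTiling D x k) (hD : IsConvexDomain D) (hr : r ≠ 0)
    (F : IsFace D r A τ) (G : IsFace D (-r) B τ') (z : ℝ × ℝ) :
    {i | z - x i ∈ linePart A r (Ico 0 τ)}.ncard =
      {i | z - x i ∈ linePart B (-r) (Ioc 0 τ')}.ncard := by
  have hev : ∀ᶠ δ : ℝ in 𝓝[>] 0, ∀ i ∈ {i | z - x i ∈ D}, _ :=
    (eventually_all_finite (finite_setOf_sub_mem hT.1 hD.isCompact.isBounded z)).2 fun i hi =>
      (F.eventually_mem_interior_or_mem_face G hD.convex hD.nonempty_interior hr hi).and <|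
        (eventually_add_smul_mem_linePart_iff hr A (z - x i) 0 τ).and
          (eventually_add_smul_mem_linePart_neg_iff hr B (z - x i) 0 τ')
  obtain ⟨δ, hδ, hnear⟩ := (hev.and ((tendsto_add_smul_nhdsGT z r).eventually
    (eventually_forall_sub_mem_imp hT.1 hD.isCompact z))).exists
  simp only [← add_sub_right_comm] at hδ
  have hF : linePart A r (Ioo 0 τ) ⊆ D := (linePart_mono Ioo_subset_Icc_self).trans F.subset
  have hG : linePart B (-r) (Ioo 0 τ') ⊆ D := (linePart_mono Ioo_subset_Icc_self).trans G.subset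
  calc _ = {i | z + δ • r - x i ∈ linePart A r (Ioo 0 τ)}.ncard := by
        congr 1 with i
        refine ⟨fun h => ((hδ i ?_).2.1).2 h, fun h => ((hδ i (hnear i (hF h))).2.1).1 h⟩
        exact F.subset (linePart_mono Ico_subset_Icc_self h)
    _ = {i | z + δ • r - x i ∈ linePart B (-r) (Ioo 0 τ')}.ncard :=
        hT.ncard_openFace_eq hD hr F G fun i hi => (hδ i (hnear i hi)).1 hi
    _ = _ := by
        congr 1 with i
        refine ⟨fun h => ((hδ i (hnear i (hG h))).2.2).1 h, fun h => ((hδ i ?_).2.2).2 h⟩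
        exact G.subset (linePart_mono Ioc_subset_Icc_self h)

end IsKFoldTranslativeTiling

/-! ### Counting translation vectors on segments -/

section Growth

variable {k M : ℕ}

lemma sum_Ico_add_le_sum_Ico (v : ℤ → ℕ) {a b a' b' : ℤ} {l : ℕ} (ha : a' ≤ a + l)
    (hb : b + l ≤ b') : ∑ j ∈ Finset.Ico a b, v (j + l) ≤ ∑ j ∈ Finset.Ico a' b', v j := by
  calc _ = ∑ j ∈ Finset.Ico (a + l) (b + l), v j := by
        rw [← Finset.map_add_right_Ico, Finset.sum_map]; rfl
    _ ≤ _ := Finset.sum_le_sum_of_subset (Finset.Ico_subset_Ico ha hb)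

lemma sum_Ico_le_sum_Ico_add (v : ℤ → ℕ) {a b a' b' : ℤ} {l : ℕ} (ha : a' + l ≤ a)
    (hb : b ≤ b' + l) : ∑ j ∈ Finset.Ico a b, v j ≤ ∑ j ∈ Finset.Ico a' b', v (j + l) := by
  calc _ ≤ ∑ j ∈ Finset.Ico (a' + l) (b' + l), v j :=
        Finset.sum_le_sum_of_subset (Finset.Ico_subset_Ico ha hb)
    _ = _ := by rw [← Finset.map_add_right_Ico, Finset.sum_map]; rfl

lemma mul_sum_Ico_le_of_window_le {v w : ℤ → ℕ}
    (h : ∀ j, ∑ l ∈ Finset.range (M + 1), v (j + l) ≤ ∑ l ∈ Finset.range M, w (j + l)) (R : ℕ) :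
    (M + 1) * ∑ j ∈ Finset.Ico (-(R : ℤ)) R, v j ≤
      M * ∑ j ∈ Finset.Ico (-((R + (M + 1) : ℕ) : ℤ)) (R + (M + 1) : ℕ), w j := by
  set I := Finset.Ico (-(R : ℤ) - (M + 1)) R
  calc _ = ∑ _l ∈ Finset.range (M + 1), ∑ j ∈ Finset.Ico (-(R : ℤ)) R, v j := by simp
    _ ≤ ∑ l ∈ Finset.range (M + 1), ∑ j ∈ I, v (j + l) := by
      refine Finset.sum_le_sum fun l hl => sum_Ico_le_sum_Ico_add v ?_ ?_ <;>
        have := Finset.mem_range.1 hl <;> omega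
    _ = ∑ j ∈ I, ∑ l ∈ Finset.range (M + 1), v (j + l) := Finset.sum_comm
    _ ≤ ∑ j ∈ I, ∑ l ∈ Finset.range M, w (j + l) := Finset.sum_le_sum fun j _ => h j
    _ = ∑ l ∈ Finset.range M, ∑ j ∈ I, w (j + l) := Finset.sum_comm
    _ ≤ ∑ _l ∈ Finset.range M,
          ∑ j ∈ Finset.Ico (-((R + (M + 1) : ℕ) : ℤ)) (R + (M + 1) : ℕ), w j := by
      refine Finset.sum_le_sum fun l hl => sum_Ico_add_le_sum_Ico w ?_ ?_ <;>
        have := Finset.mem_range.1 hl <;> push_cast <;> omega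
    _ = _ := by simp

lemma pow_mul_le_pow_mul_sum_of_window_le {u : ℕ → ℤ → ℕ} (h : ∀ n j,
    ∑ l ∈ Finset.range (M + 1), u n (j + l) ≤ ∑ l ∈ Finset.range M, u (n + 1) (j + l)) (n : ℕ) :
    (M + 1) ^ n * u 0 0 ≤
      M ^ n * ∑ j ∈ Finset.Ico (-((1 + n * (M + 1) : ℕ) : ℤ)) (1 + n * (M + 1) : ℕ), u n j := by
  set S : ℕ → ℕ → ℕ := fun n R => ∑ j ∈ Finset.Ico (-(R : ℤ)) R, u n j
  change (M + 1) ^ n * u 0 0 ≤ M ^ n * S n (1 + n * (M + 1))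
  induction n with
  | zero =>
    simpa [S] using Finset.single_le_sum (f := u 0) (s := Finset.Ico (-1) 1) (a := 0)
      (fun _ _ => Nat.zero_le _) (by simp)
  | succ n ih =>
    calc (M + 1) ^ (n + 1) * u 0 0 = (M + 1) * ((M + 1) ^ n * u 0 0) := by ring
      _ ≤ (M + 1) * (M ^ n * S n (1 + n * (M + 1))) := Nat.mul_le_mul_left _ ih
      _ = M ^ n * ((M + 1) * S n (1 + n * (M + 1))) := by ring
      _ ≤ M ^ n * (M * S (n + 1) (1 + n * (M + 1) + (M + 1))) :=
        Nat.mul_le_mul_left _ (mul_sum_Ico_le_of_window_le (h n) _)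
      _ = M ^ (n + 1) * S (n + 1) (1 + (n + 1) * (M + 1)) := by rw [pow_succ]; ring_nf

lemma exists_pow_mul_lt_succ_pow (M k : ℕ) :
    ∃ n : ℕ, M ^ n * (2 * (1 + n * (M + 1)) * k) < (M + 1) ^ n := by
  set q : ℝ := M / (M + 1)
  have hq₀ : 0 ≤ q := by positivity
  have hq₁ : q < 1 := by rw [div_lt_one (by positivity)]; linarith
  have hlim := ((tendsto_pow_atTop_nhds_zero_of_lt_one hq₀ hq₁).mul_const (2 * k : ℝ)).add
    ((tendsto_self_mul_const_pow_of_lt_one hq₀ hq₁).mul_const (2 * (M + 1) * k : ℝ))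
  simp only [zero_mul, add_zero] at hlim
  obtain ⟨n, hn⟩ := (hlim.eventually (gt_mem_nhds one_pos)).exists
  refine ⟨n, ?_⟩
  have hpos : (0 : ℝ) < (M + 1 : ℝ) ^ n := by positivity
  suffices h : (M : ℝ) ^ n * (2 * (1 + n * (M + 1)) * k) < (M + 1) ^ n by exact_mod_cast h
  rw [← div_lt_one hpos]
  convert hn using 1
  simp only [q, div_pow]
  field_simp

lemma eq_zero_of_window_le {u : ℕ → ℤ → ℕ} (hu : ∀ n j, u n j ≤ k) (h : ∀ n j,
    ∑ l ∈ Finset.range (M + 1), u n (j + l) ≤ ∑ l ∈ Finset.range M, u (n + 1) (j + l)) :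
    u 0 0 = 0 := by
  by_contra h₀
  obtain ⟨n, hn⟩ := exists_pow_mul_lt_succ_pow M k
  refine hn.not_ge ?_
  set R := 1 + n * (M + 1)
  calc (M + 1) ^ n ≤ (M + 1) ^ n * u 0 0 := Nat.le_mul_of_pos_right _ (Nat.pos_of_ne_zero h₀)
    _ ≤ M ^ n * ∑ j ∈ Finset.Ico (-(R : ℤ)) R, u n j := pow_mul_le_pow_mul_sum_of_window_le h n
    _ ≤ M ^ n * ∑ _j ∈ Finset.Ico (-(R : ℤ)) R, k := by gcongr; exact hu _ _
    _ = M ^ n * (2 * R * k) := by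
      rw [Finset.sum_const, Int.card_Ico, smul_eq_mul]
      congr 3
      omega

end Growth

/-- The number of translation vectors `x i`, with multiplicity, on the half-open segment from `p`
(included) to `p - t r` (excluded). -/
noncomputable def segCount {ι : Type*} (x : ι → ℝ × ℝ) (r p : ℝ × ℝ) (t : ℝ) : ℕ :=
  {i | p - x i ∈ linePart 0 r (Ico 0 t)}.ncard

section SegCount

variable {ι : Type*} {x : ι → ℝ × ℝ} {r p : ℝ × ℝ} {a b : ℝ}

lemma finite_setOf_sub_mem_linePart (hx : ∀ R : ℝ, {i | ‖x i‖ ≤ R}.Finite) (r p : ℝ × ℝ) (t : ℝ) :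
    {i | p - x i ∈ linePart 0 r (Ico 0 t)}.Finite :=
  finite_setOf_sub_mem hx (isBounded_linePart (Metric.isBounded_Ico _ _)) p

lemma segCount_mono (hx : ∀ R : ℝ, {i | ‖x i‖ ≤ R}.Finite) (r p : ℝ × ℝ) (h : a ≤ b) :
    segCount x r p a ≤ segCount x r p b :=
  ncard_le_ncard (fun _ hi => linePart_mono (Ico_subset_Ico_right h) hi)
    (finite_setOf_sub_mem_linePart hx _ _ _)

lemma segCount_add (hx : ∀ R : ℝ, {i | ‖x i‖ ≤ R}.Finite) (hr : r ≠ 0) (ha : 0 ≤ a) (hb : 0 ≤ b)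
    (p : ℝ × ℝ) : segCount x r p (a + b) = segCount x r p a + segCount x r (p - a • r) b := by
  have hshift (y : ℝ × ℝ) :
      p - a • r - y ∈ linePart 0 r (Ico 0 b) ↔ p - y ∈ linePart 0 r (Ico a (a + b)) := by
    simp only [linePart, mem_image, zero_add, mem_Ico]
    constructor
    · rintro ⟨s, hs, h⟩
      exact ⟨a + s, ⟨by linarith, by linarith⟩, by rw [add_smul, h]; abel⟩
    · rintro ⟨s, hs, h⟩
      exact ⟨s - a, ⟨by linarith, by linarith⟩, by rw [sub_smul, h]; abel⟩
  unfold segCount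
  simp only [hshift]
  rw [← ncard_union_eq _ (finite_setOf_sub_mem_linePart hx r p a)
    (finite_setOf_sub_mem hx (isBounded_linePart (Metric.isBounded_Ico _ _)) p),
    ← Ico_union_Ico_eq_Ico ha (le_add_of_nonneg_right hb)]
  · simp only [linePart, image_union]; rfl
  · refine disjoint_left.2 ?_
    rintro i ⟨s, hs, h⟩ ⟨s', hs', h'⟩
    obtain rfl : s = s' := smul_left_injective ℝ hr (by simpa using h.trans h'.symm)
    exact hs'.1.not_gt hs.2

lemma segCount_nat_mul (hx : ∀ R : ℝ, {i | ‖x i‖ ≤ R}.Finite) (hr : r ≠ 0) {δ : ℝ} (hδ : 0 ≤ δ)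
    (p : ℝ × ℝ) (n : ℕ) :
    segCount x r p (n * δ) = ∑ l ∈ Finset.range n, segCount x r (p - (l * δ) • r) δ := by
  induction n with
  | zero => simp [segCount, linePart]
  | succ n ih =>
    rw [Finset.sum_range_succ, ← ih, ← segCount_add hx hr (by positivity) hδ]
    congr 1; push_cast; ring

end SegCount

namespace IsKFoldTranslativeTiling

variable {ι : Type} {D : Set (ℝ × ℝ)} {x : ι → ℝ × ℝ} {k : ℕ} {r A B w : ℝ × ℝ} {τ τ' : ℝ}

lemma exists_segCount_le (hT : IsKFoldTranslativeTiling D x k) (hi : (interior D).Nonempty)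
    (r : ℝ × ℝ) : ∃ δ : ℝ, 0 < δ ∧ ∀ p, segCount x r p δ ≤ k := by
  obtain ⟨o, ho⟩ := hi
  have hcont : ContinuousAt (fun δ : ℝ => o + δ • r) 0 := by fun_prop
  obtain ⟨δ, hδ, h⟩ := Metric.eventually_nhds_iff.1 <|
    hcont.eventually_mem (isOpen_interior.mem_nhds (by simpa using ho))
  refine ⟨δ, hδ, fun p => ?_⟩
  have hfin := finite_setOf_sub_mem_linePart hT.1 r p δ
  rw [segCount, ncard_eq_toFinset_card _ hfin]
  refine hT.2.2 (p + o) _ fun i hi => ?_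
  obtain ⟨s, hs, hsi⟩ := hfin.mem_toFinset.1 hi
  have hpo : p + o - x i = o + s • r := by
    simp only [zero_add] at hsi
    rw [hsi]; abel
  rw [hpo]
  exact h (by rw [Real.dist_eq, sub_zero, abs_of_nonneg hs.1]; exact hs.2)

/-- Cut the longer segment into `M + 1` pieces so short that `M` of them still cover the shorter
one: the numbers of translation vectors on these pieces then grow geometrically from row to row. -/
lemma le_of_segCount_eq (hT : IsKFoldTranslativeTiling D x k) (hk : 0 < k)
    (hi : (interior D).Nonempty) (hr : r ≠ 0) (hτ' : 0 ≤ τ')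
    (h : ∀ p, segCount x r p τ = segCount x r (p + w) τ') : τ ≤ τ' := by
  by_contra! hlt
  obtain ⟨δ₀, hδ₀, hcount⟩ := hT.exists_segCount_le hi r
  have hτ : 0 < τ := hτ'.trans_lt hlt
  obtain ⟨M, hM⟩ := exists_nat_gt (max (τ / δ₀) (τ / (τ - τ')))
  rw [max_lt_iff, div_lt_iff₀ hδ₀, div_lt_iff₀ (sub_pos.2 hlt)] at hM
  set δ := τ / (M + 1) with hδ
  have hδ_pos : 0 < δ := by positivity
  have hMδ : ((M + 1 : ℕ) : ℝ) * δ = τ := by rw [hδ]; push_cast; field_simp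
  have hδ_le : δ ≤ δ₀ := by rw [hδ, div_le_iff₀ (by positivity)]; nlinarith
  have hτ'_le : τ' ≤ M * δ := by
    have : δ ≤ τ - τ' := by rw [hδ, div_le_iff₀ (by positivity)]; nlinarith
    push_cast at hMδ
    linarith
  obtain ⟨i₀⟩ := hT.nonempty hk
  set q : ℕ → ℤ → ℝ × ℝ := fun n j => x i₀ + n • w - (j * δ) • r with hq
  have hrow (n : ℕ) (j : ℤ) (N : ℕ) :
      ∑ l ∈ Finset.range N, segCount x r (q n (j + l)) δ = segCount x r (q n j) (N * δ) := by
    rw [segCount_nat_mul hT.1 hr hδ_pos.le]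
    refine Finset.sum_congr rfl fun l _ => congrArg (segCount x r · δ) ?_
    simp only [hq]; push_cast; module
  have hzero : segCount x r (q 0 0) δ = 0 := by
    refine eq_zero_of_window_le (u := fun n j => segCount x r (q n j) δ) (k := k) (M := M)
      (fun n j => (segCount_mono hT.1 r _ hδ_le).trans (hcount _)) fun n j => ?_
    have hnext : q n j + w = q (n + 1) j := by simp only [hq]; module
    rw [hrow, hrow, hMδ, h, hnext]
    exact segCount_mono hT.1 r _ hτ'_le
  rw [segCount, ncard_eq_zero (finite_setOf_sub_mem_linePart hT.1 _ _ _)] at hzero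
  exact hzero.subset (show i₀ ∈ _ from ⟨0, ⟨le_rfl, hδ_pos⟩, by simp [hq]⟩)

lemma segCount_eq_of_isFace (hT : IsKFoldTranslativeTiling D x k) (hD : IsConvexDomain D)
    (hr : r ≠ 0) (F : IsFace D r A τ) (G : IsFace D (-r) B τ') (p : ℝ × ℝ) :
    segCount x r p τ = segCount x r (p + (A - B + τ' • r)) τ' := by
  unfold segCount
  convert hT.ncard_face_eq hD hr F G (p + A) using 2
  · ext i
    have hpA : p + A - x i = A + (p - x i) := by abel
    simp only [mem_ofPred_eq, hpA]
    simpa using (vadd_mem_linePart_iff (v := A) (A := 0)).symm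
  · ext i
    simp only [linePart, mem_ofPred_eq, mem_image, zero_add]
    constructor <;> rintro ⟨s, hs, h⟩ <;>
      refine ⟨τ' - s, ⟨by linarith [hs.2], by linarith [hs.1]⟩, ?_⟩
    · have hx : x i = p + (A - B + τ' • r) - s • r := by rw [h]; abel
      rw [hx]; module
    · have hx : x i = p + A - (B + s • -r) := by rw [h]; abel
      rw [hx]; module

lemma length_eq_of_isFace (hT : IsKFoldTranslativeTiling D x k) (hk : 0 < k)
    (hD : IsConvexDomain D) (hr : r ≠ 0) (F : IsFace D r A τ) (G : IsFace D (-r) B τ') :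
    τ = τ' := by
  refine (hT.le_of_segCount_eq hk hD.nonempty_interior hr G.nonneg
    (hT.segCount_eq_of_isFace hD hr F G)).antisymm ?_
  have hr' := neg_ne_zero.2 hr
  exact hT.le_of_segCount_eq hk hD.nonempty_interior hr' F.nonneg
    (hT.segCount_eq_of_isFace hD hr' G ((neg_neg r).symm ▸ F))

end IsKFoldTranslativeTiling

/-! ### Finitely many extreme points -/

section Face

variable {D : Set (ℝ × ℝ)} {r A p : ℝ × ℝ} {τ : ℝ} {I : Set ℝ}

lemma exists_isFace (hD : IsCompact D) (hc : Convex ℝ D) (hne : D.Nonempty) (hr : r ≠ 0) :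
    ∃ A τ, IsFace D r A τ := by
  obtain ⟨q, hq, hmax⟩ := hD.exists_isMaxOn hne
    (continuous_cross₂ continuous_const continuous_id : Continuous (cross₂ r)).continuousOn
  have hline : IsClosedEmbedding fun s : ℝ => q + s • r :=
    (Homeomorph.addLeft q).isClosedEmbedding.comp (isClosedEmbedding_smul_left hr)
  set I : Set ℝ := (fun s => q + s • r) ⁻¹' D with hI
  have hmem {s : ℝ} : q + s • r ∈ D ↔ s ∈ I := Iff.rfl
  have hIconv : Convex ℝ I := fun s hs t ht a b ha hb hab => by
    have h : q + (a • s + b • t) • r = a • (q + s • r) + b • (q + t • r) := by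
      obtain rfl := eq_sub_of_add_eq hab; module
    rw [← hmem, h]
    exact hc hs ht ha hb hab
  have hI₀ : I.Nonempty := ⟨0, by simpa [hI] using hq⟩
  have hIcc := eq_Icc_of_connected_compact ⟨hI₀, hIconv.isPreconnected⟩
    (hline.isCompact_preimage hD)
  set a := sInf I
  set b := sSup I
  rw [hIcc] at hI₀ hmem
  refine ⟨q + a • r, b - a, sub_nonneg.2 (nonempty_Icc.1 hI₀), ?_, fun y hy => ?_, ?_⟩
  · rintro _ ⟨s, hs, rfl⟩
    simp only [add_assoc, ← add_smul, hmem, mem_Icc] at hs ⊢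
    constructor <;> linarith [hs.1, hs.2]
  · simpa using hmax hy
  · intro y hy hcross
    obtain ⟨s, hs⟩ := exists_eq_smul_of_cross₂_eq_zero (y := y - q) hr (by
      simp only [cross₂_add_right, cross₂_smul_right, cross₂_self] at hcross
      rw [cross₂_sub_right, hcross]; ring)
    obtain rfl : y = q + s • r := by rw [← hs]; abel
    have hs' := hmem.1 hy
    exact ⟨s - a, ⟨by linarith [hs'.1], by linarith [hs'.2]⟩, by module⟩

lemma extremePoints_linePart (hr : r ≠ 0) :
    extremePoints ℝ (linePart A r I) = linePart A r (extremePoints ℝ I) := by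
  have hcomb {a b : ℝ} (hab : a + b = 1) (s t : ℝ) :
      a • (A + s • r) + b • (A + t • r) = A + (a • s + b • t) • r := by
    obtain rfl := eq_sub_of_add_eq hab; module
  have hinj {s t : ℝ} (h : A + s • r = A + t • r) : s = t :=
    smul_left_injective ℝ hr (add_left_cancel h)
  ext y
  constructor
  · rintro ⟨⟨s, hs, rfl⟩, hext⟩
    refine ⟨s, ⟨hs, fun t₁ ht₁ t₂ ht₂ ⟨a, b, ha, hb, hab, h⟩ => ?_⟩, rfl⟩
    refine hinj (hext ⟨t₁, ht₁, rfl⟩ ⟨t₂, ht₂, rfl⟩ ⟨a, b, ha, hb, hab, ?_⟩)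
    simp only [hcomb hab, h]
  · rintro ⟨s, ⟨hs, hext⟩, rfl⟩
    refine ⟨⟨s, hs, rfl⟩, ?_⟩
    rintro _ ⟨t₁, ht₁, rfl⟩ _ ⟨t₂, ht₂, rfl⟩ ⟨a, b, ha, hb, hab, h⟩
    simp only [hcomb hab] at h
    rw [hext ht₁ ht₂ ⟨a, b, ha, hb, hab, hinj h⟩]

namespace IsFace

lemma isExtreme (F : IsFace D r A τ) : IsExtreme ℝ D (linePart A r (Icc 0 τ)) := by
  refine ⟨F.subset, fun y hy z hz w hw ⟨a, b, ha, hb, hab, h⟩ => F.mem_of_cross₂_eq y hy ?_⟩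
  have hy' := F.cross₂_le y hy
  have hz' := F.cross₂_le z hz
  have hw' := cross₂_eq_of_mem_linePart hw
  simp only [← h, cross₂_add_right, cross₂_smul_right] at hw'
  refine hy'.antisymm (le_of_mul_le_mul_left ?_ ha)
  linear_combination cross₂ r A * hab + b * hz' - hw'

lemma extremePoints_eq (F : IsFace D r A τ) (hr : r ≠ 0) :
    linePart A r (Icc 0 τ) ∩ extremePoints ℝ D = {A, A + τ • r} := by
  rw [← F.isExtreme.extremePoints_eq, extremePoints_linePart hr, extremePoints_Icc F.nonneg]
  simp [linePart, image_pair]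

lemma left_mem_extremePoints (F : IsFace D r A τ) (hr : r ≠ 0) : A ∈ extremePoints ℝ D :=
  ((F.extremePoints_eq hr).superset (.inl rfl)).2

lemma right_mem_extremePoints (F : IsFace D r A τ) (hr : r ≠ 0) :
    A + τ • r ∈ extremePoints ℝ D :=
  ((F.extremePoints_eq hr).superset (.inr rfl)).2

lemma eq_or_eq_of_mem_extremePoints (F : IsFace D r A τ) (hr : r ≠ 0)
    (hp : p ∈ extremePoints ℝ D) (h : cross₂ r p = cross₂ r A) : p = A ∨ p = A + τ • r :=
  (F.extremePoints_eq hr).subset ⟨F.mem_of_cross₂_eq p hp.1 h, hp⟩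

end IsFace

end Face

section Frontier

variable {D : Set (ℝ × ℝ)} {p q y : ℝ × ℝ} {ρ : ℝ}

/-- A small sphere around `p` is connected and meets both `interior D` and the complement of `D`,
so it meets the boundary of `D`. -/
lemma exists_mem_sphere_notMem_interior (hD : IsConvexDomain D) (hp : p ∈ D)
    (hpi : p ∉ interior D) :
    ∀ᶠ ρ : ℝ in 𝓝[>] 0, ∃ q ∈ Metric.sphere p ρ, q ∈ D ∧ q ∉ interior D := by
  obtain ⟨o, ho⟩ := hD.nonempty_interior
  obtain ⟨r, hr, hle⟩ := exists_forall_cross₂_le hD.convex hD.nonempty_interior hpi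
  have hscale {v : ℝ × ℝ} (hv : v ≠ 0) (ρ : ℝ) (hρ : 0 ≤ ρ) :
      p + (ρ / ‖v‖) • v ∈ Metric.sphere p ρ := by
    rw [mem_sphere_iff_norm, add_sub_cancel_left, norm_smul, norm_div, norm_norm,
      div_mul_cancel₀ _ (norm_ne_zero_iff.2 hv), Real.norm_of_nonneg hρ]
  have hop : o - p ≠ 0 := fun h => hpi (sub_eq_zero.1 h ▸ ho)
  have hq : quarterTurn r ≠ 0 := fun h => by
    simpa [h] using cross₂_quarterTurn_pos hr
  filter_upwards [Ioo_mem_nhdsGT (norm_pos_iff.2 hop)] with ρ hρ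
  have hin : p + (ρ / ‖o - p‖) • (o - p) ∈ interior D :=
    hD.convex.add_smul_sub_mem_interior hp ho
      ⟨div_pos hρ.1 (norm_pos_iff.2 hop), (div_le_one (norm_pos_iff.2 hop)).2 hρ.2.le⟩
  have hout : p + (ρ / ‖quarterTurn r‖) • quarterTurn r ∉ D := fun h => by
    have := hle _ h
    simp only [cross₂_add_right, cross₂_smul_right] at this
    linarith [mul_pos (div_pos hρ.1 (norm_pos_iff.2 hq)) (cross₂_quarterTurn_pos hr)]
  by_contra! hcon
  obtain ⟨y, -, hy, hyD⟩ := isPreconnected_sphere (by simp [← Module.finrank_eq_rank]) p ρ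
    (interior D) Dᶜ isOpen_interior hD.isCompact.isClosed.isOpen_compl
    (fun y hy => (em (y ∈ D)).imp (hcon y hy) id)
    ⟨_, hscale hop ρ hρ.1.le, hin⟩ ⟨_, hscale hq ρ hρ.1.le, hout⟩
  exact hyD (interior_subset hy)

lemma cross₂_sub_ne_zero_of_mem_interior (hc : Convex ℝ D) (hp : p ∈ D) (hpi : p ∉ interior D)
    (hq : q ∈ D) (hqi : q ∉ interior D) (hqρ : q ∈ Metric.sphere p ρ) (hρ : 0 < ρ)
    (hy : y ∈ interior D) (hyρ : y ∉ Metric.ball p ρ) : cross₂ (q - p) (y - p) ≠ 0 := by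
  intro h
  have hqp : q - p ≠ 0 := fun h => Metric.ne_of_mem_sphere hqρ hρ.ne' (sub_eq_zero.1 h)
  obtain ⟨t, ht⟩ := exists_eq_smul_of_cross₂_eq_zero hqp h
  rw [mem_sphere_iff_norm] at hqρ
  rw [mem_ball_iff_norm, ht, norm_smul, hqρ, Real.norm_eq_abs,
    mul_lt_iff_lt_one_left hρ, not_lt] at hyρ
  rcases le_abs.1 hyρ with ht₁ | ht₁
  · refine hqi ?_
    convert hc.add_smul_sub_mem_interior hp hy (t := t⁻¹)
      ⟨by positivity, inv_le_one_of_one_le₀ ht₁⟩ using 1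
    rw [ht, smul_smul, inv_mul_cancel₀ (by positivity), one_smul, add_sub_cancel]
  · refine hpi ?_
    convert hc.add_smul_sub_mem_interior hq hy (t := (1 - t)⁻¹)
      ⟨inv_pos.2 (by linarith), inv_le_one_of_one_le₀ (by linarith)⟩ using 1
    have hyq : y - q = -(1 - t) • (q - p) := by
      rw [← sub_sub_sub_cancel_right y q p, ht]; module
    rw [hyq, smul_smul, mul_neg, inv_mul_cancel₀ (by linarith)]
    module

lemma mul_pos_of_isPreconnected {X : Type*} [TopologicalSpace X] {K : Set X} {f : X → ℝ}
    (hK : IsPreconnected K) (hf : ContinuousOn f K) (h₀ : ∀ y ∈ K, f y ≠ 0) {a b : X}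
    (ha : a ∈ K) (hb : b ∈ K) : 0 < f a * f b := by
  by_contra! hneg
  have hzero : (0 : ℝ) ∈ f '' K := by
    rcases mul_nonpos_iff.1 hneg with h | h
    · exact hK.intermediate_value hb ha hf ⟨h.2, h.1⟩
    · exact hK.intermediate_value ha hb hf h
  obtain ⟨y, hy, hy₀⟩ := hzero
  exact h₀ y hy hy₀

/-- The translates `D` and `v + D` touch along a line, which meets `D` in a face. -/
lemma finite_extremePoints_of_disjoint_interior {v : ℝ × ℝ} (hD : IsConvexDomain D)
    (hdisj : ∀ y ∈ interior D, y - v ∉ interior D) :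
    {p ∈ extremePoints ℝ D | p - v ∈ D}.Finite := by
  have hi := hD.nonempty_interior
  have hv (y : ℝ × ℝ) : y ∈ v +ᵥ D ↔ y - v ∈ D := by
    rw [mem_vadd_set_iff_neg_vadd_mem, vadd_eq_add, neg_add_eq_sub]
  have hvi : (interior (v +ᵥ D)).Nonempty := by simpa [interior_vadd] using hi
  have hvc : Convex ℝ (v +ᵥ D) := hD.convex.vadd v
  obtain ⟨r, hr, hle⟩ := exists_forall_cross₂_le_of_disjoint hD.convex hi hvc.interior hvi
    (disjoint_left.2 fun y hy hyv => hdisj y hy <| by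
      rwa [interior_vadd, mem_vadd_set_iff_neg_vadd_mem, vadd_eq_add, neg_add_eq_sub] at hyv)
  obtain ⟨A, τ, F⟩ := exists_isFace hD.isCompact hD.convex (hi.mono interior_subset) hr
  refine (toFinite {A, A + τ • r}).subset fun p hp => ?_
  refine F.eq_or_eq_of_mem_extremePoints hr hp.1 ((F.cross₂_le p hp.1.1).antisymm ?_)
  exact closure_minimal (hle A F.left_mem)
    (isClosed_le continuous_const (continuous_cross₂ continuous_const continuous_id))
    ((hvc.closure_interior_eq_closure_of_nonempty_interior hvi).ge
      (subset_closure ((hv p).2 hp.2)))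

end Frontier

namespace IsKFoldTranslativeTiling

variable {ι : Type} {D : Set (ℝ × ℝ)} {x : ι → ℝ × ℝ} {k : ℕ} {i₀ : ι} {p z : ℝ × ℝ}

lemma sub_const (hT : IsKFoldTranslativeTiling D x k) (c : ℝ × ℝ) :
    IsKFoldTranslativeTiling D (fun i => x i - c) k := by
  have hshift (z : ℝ × ℝ) (i : ι) : z - (x i - c) = z + c - x i := by abel
  refine ⟨fun R => ?_, fun z => ?_, fun z => ?_⟩
  · refine (hT.1 (R + ‖c‖)).subset fun i hi => ?_
    calc ‖x i‖ = ‖x i - c + c‖ := by rw [sub_add_cancel]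
      _ ≤ R + ‖c‖ := (norm_add_le _ _).trans (by gcongr; exact hi)
  · simpa only [hshift] using hT.2.1 (z + c)
  · simpa only [hshift] using hT.2.2 (z + c)

lemma lt_ncard_of_notMem_interior (hT : IsKFoldTranslativeTiling D x k) (hD : IsCompact D)
    (hz : z - x i₀ ∈ D) (hzi : z - x i₀ ∉ interior D) : k < {i | z - x i ∈ D}.ncard := by
  have hnear := eventually_forall_sub_mem_imp hT.1 hD z
  have hout : ∃ᶠ z' in 𝓝 z, z' - x i₀ ∉ D := fun hev => hzi <| by
    have hcont : Tendsto (fun y => y + x i₀) (𝓝 (z - x i₀)) (𝓝 z) := by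
      simpa using (continuous_add_const (x i₀)).tendsto (z - x i₀)
    exact mem_interior_iff_mem_nhds.2 ((hcont.eventually hev).mono fun y hy => by
      rwa [not_not, add_sub_cancel_right] at hy)
  obtain ⟨z', hz', hz'near⟩ := (hout.and_eventually hnear).exists
  obtain ⟨s, hs, hsD⟩ := hT.2.1 z'
  classical
  calc k < s.card + 1 := by omega
    _ = (insert i₀ s).card := (Finset.card_insert_of_notMem fun h => hz' (hsD i₀ h)).symm
    _ = ((insert i₀ s : Finset ι) : Set ι).ncard := (ncard_coe_finset _).symm
    _ ≤ _ := by
      refine ncard_le_ncard (fun i hi => ?_) (finite_setOf_sub_mem hT.1 hD.isBounded z)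
      rcases Finset.mem_insert.1 hi with rfl | hi
      · exact hz
      · exact hz'near i (hsD i hi)

/-- Otherwise choose `o i` in the common interior for each translate `i` through `p`, and a boundary
point `q` close to `p`, so that the line `p q` misses the hull of all `o i`. The more than `k`
translates through `q` all contain the segment `[p, q]` and have interior points on the same side
of it, so they overlap there. -/
lemma exists_sub_mem_disjoint_interior_of_eq_zero (hT : IsKFoldTranslativeTiling D x k)
    (hD : IsConvexDomain D) (h₀ : x i₀ = 0) (hp : p ∈ D) (hpi : p ∉ interior D) :
    ∃ i, p - x i ∈ D ∧ ∀ y ∈ interior D, y - x i ∉ interior D := by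
  by_contra! hcon
  choose! o ho ho' using hcon
  set K := convexHull ℝ (o '' {i | p - x i ∈ D})
  have hfin := finite_setOf_sub_mem hT.1 hD.isCompact.isBounded p
  have hKD : K ⊆ interior D :=
    convexHull_min (by rintro _ ⟨i, hi, rfl⟩; exact ho i hi) hD.convex.interior
  have hpK : Kᶜ ∈ 𝓝 p :=
    ((hfin.image o).isCompact_convexHull ℝ).isClosed.isOpen_compl.mem_nhds fun h => hpi (hKD h)
  obtain ⟨ε, hε, hball⟩ := Metric.mem_nhds_iff.1
    (inter_mem hpK (eventually_forall_sub_mem_imp hT.1 hD.isCompact p))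
  obtain ⟨ρ, ⟨q, hqρ, hq, hqi⟩, hρ⟩ := ((exists_mem_sphere_notMem_interior hD hp hpi).and
    (Ioo_mem_nhdsGT hε)).exists
  have hnear : ∀ i, q - x i ∈ D → p - x i ∈ D :=
    (hball (Metric.sphere_subset_closedBall.trans (Metric.closedBall_subset_ball hρ.2) hqρ)).2
  have hline : ∀ y ∈ K, cross₂ (q - p) (y - p) ≠ 0 := fun y hy =>
    cross₂_sub_ne_zero_of_mem_interior hD.convex hp hpi hq hqi hqρ hρ.1 (hKD hy) fun hyρ =>
      (hball (Metric.ball_subset_ball hρ.2.le hyρ)).1 hy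
  have hoK (i : ι) (hi : p - x i ∈ D) : o i ∈ K := subset_convexHull ℝ _ ⟨i, hi, rfl⟩
  have hi₀ : p - x i₀ ∈ D := by simpa [h₀] using hp
  refine (hT.lt_ncard_of_notMem_interior hD.isCompact (z := q) (i₀ := i₀)
    (by simpa [h₀] using hq) (by simpa [h₀] using hqi)).not_ge
    (hT.ncard_le_of_eventually_mem_interior hD.isCompact (z := p + (1 / 2 : ℝ) • (q - p))
      (d := o i₀ - p) fun i hi => ?_)
  have hside := mul_pos_of_isPreconnected (convex_convexHull ℝ _).isPreconnected
    (continuous_cross₂ continuous_const (by fun_prop)).continuousOn hline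
    (hoK i (hnear i hi)) (hoK i₀ hi₀)
  have hpush := eventually_add_smul_add_smul_mem_interior hD.convex hD.nonempty_interior
    (hnear i hi) (u := q - p) (w := o i - p) (d := o i₀ - p) (s := 1 / 2)
    (by rwa [add_comm, sub_add_sub_cancel])
    (by convert interior_subset (ho' i (hnear i hi)) using 1; abel)
    (by norm_num) (by norm_num) hside
  simpa only [add_sub_right_comm] using hpush

lemma exists_sub_mem_disjoint_interior (hT : IsKFoldTranslativeTiling D x k)
    (hD : IsConvexDomain D) (i₀ : ι) (hp : p ∈ D) (hpi : p ∉ interior D) :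
    ∃ i, p - (x i - x i₀) ∈ D ∧ ∀ y ∈ interior D, y - (x i - x i₀) ∉ interior D :=
  (hT.sub_const (x i₀)).exists_sub_mem_disjoint_interior_of_eq_zero hD (sub_self (x i₀)) hp hpi

lemma finite_extremePoints (hT : IsKFoldTranslativeTiling D x k) (hk : 0 < k)
    (hD : IsConvexDomain D) : (extremePoints ℝ D).Finite := by
  obtain ⟨i₀⟩ := hT.nonempty hk
  have hcover : extremePoints ℝ D ⊆ ⋃ i ∈ {i | ∃ p ∈ D, p - (x i - x i₀) ∈ D},
      {p ∈ extremePoints ℝ D | p - (x i - x i₀) ∈ D ∧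
        ∀ y ∈ interior D, y - (x i - x i₀) ∉ interior D} := fun p hp => by
    obtain ⟨i, hi, hdisj⟩ := hT.exists_sub_mem_disjoint_interior hD i₀ hp.1 fun hpi =>
      (disjoint_interior_extremePoints D).le_bot ⟨hpi, hp⟩
    exact mem_biUnion ⟨p, hp.1, hi⟩ ⟨hp, hi, hdisj⟩
  refine (Finite.biUnion ?_ fun i _ => ?_).subset hcover
  · refine (finite_preimage_of_isBounded hT.1
      ((hD.isCompact.isBounded.sub hD.isCompact.isBounded).add
        (isBounded_singleton (x := x i₀)))).subset ?_
    rintro i ⟨p, hp, hi⟩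
    exact ⟨_, ⟨p, hp, _, hi, rfl⟩, x i₀, rfl, by simp only; abel⟩
  · by_cases hdisj : ∀ y ∈ interior D, y - (x i - x i₀) ∉ interior D
    · exact (finite_extremePoints_of_disjoint_interior hD hdisj).subset fun p hp => ⟨hp.1, hp.2.1⟩
    · exact finite_empty.subset fun p hp => hdisj hp.2.2

lemma convexHull_extremePoints (hT : IsKFoldTranslativeTiling D x k) (hk : 0 < k)
    (hD : IsConvexDomain D) : convexHull ℝ (extremePoints ℝ D) = D := by
  rw [← ((hT.finite_extremePoints hk hD).isClosed_convexHull ℝ).closure_eq,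
    closure_convexHull_extremePoints hD.isCompact hD.convex]

end IsKFoldTranslativeTiling

/-! ### Edge vectors and the support function -/

section EdgeVectors

variable {D : Set (ℝ × ℝ)} {r r₀ A A' e v y : ℝ × ℝ} {τ τ' t : ℝ}

lemma IsFace.length_le (F : IsFace D r A τ) (F' : IsFace D r A' τ') (hr : r ≠ 0) : τ ≤ τ' := by
  have hA : cross₂ r A = cross₂ r A' :=
    (F'.cross₂_le A F.left_mem).antisymm (F.cross₂_le A' F'.left_mem)
  obtain ⟨s, hs, h⟩ := F'.mem_of_cross₂_eq A F.left_mem hA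
  obtain ⟨s', hs', h'⟩ := F'.mem_of_cross₂_eq (A + τ • r) F.right_mem (by simp [hA])
  have hτ : τ = s' - s := smul_left_injective ℝ hr (by
    simp only at h h' ⊢
    rw [← add_right_inj A, ← h', ← h]; module)
  linarith [hs.1, hs'.2]

lemma IsFace.smul (F : IsFace D r A τ) (ht : 0 < t) : IsFace D (t • r) A (τ / t) where
  nonneg := div_nonneg F.nonneg ht.le
  subset := by
    rintro _ ⟨s, hs, rfl⟩
    exact F.subset ⟨s * t, ⟨mul_nonneg hs.1 ht.le, (le_div_iff₀ ht).1 hs.2⟩, by simp [smul_smul]⟩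
  cross₂_le y hy := by
    simpa only [cross₂_smul_left] using mul_le_mul_of_nonneg_left (F.cross₂_le y hy) ht.le
  mem_of_cross₂_eq y hy h := by
    simp only [cross₂_smul_left] at h
    obtain ⟨s, hs, rfl⟩ := F.mem_of_cross₂_eq y hy (mul_left_cancel₀ ht.ne' h)
    exact ⟨s / t, ⟨div_nonneg hs.1 ht.le, (div_le_div_iff_of_pos_right ht).2 hs.2⟩, by
      simp [div_mul_cancel₀ _ ht.ne', smul_smul]⟩

/-- The edge vectors of a convex polygon, oriented so that the polygon lies to the left. -/
def edgeVectors (D : Set (ℝ × ℝ)) : Set (ℝ × ℝ) := {v | v ≠ 0 ∧ ∃ A, IsFace D v A 1}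

lemma finite_edgeVectors (hf : (extremePoints ℝ D).Finite) : (edgeVectors D).Finite := by
  refine ((hf.prod hf).image fun q => q.2 - q.1).subset ?_
  rintro v ⟨hv, A, F⟩
  exact ⟨(A, A + (1 : ℝ) • v), ⟨F.left_mem_extremePoints hv, F.right_mem_extremePoints hv⟩,
    by simp⟩

lemma IsFace.smul_mem_edgeVectors (F : IsFace D r A τ) (hr : r ≠ 0) (hτ : 0 < τ) :
    τ • r ∈ edgeVectors D :=
  ⟨smul_ne_zero hτ.ne' hr, A, div_self hτ.ne' ▸ F.smul hτ⟩

lemma IsFace.eq_or_eq_neg_of_mem_edgeVectors (F : IsFace D r A τ) (hr : r ≠ 0)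
    (hsymm : ∀ v ∈ edgeVectors D, -v ∈ edgeVectors D) (he : e ∈ edgeVectors D)
    (h : cross₂ r e = 0) : e = τ • r ∨ e = -(τ • r) := by
  have hlength {c : ℝ} (hc : 0 < c) (hcr : c • r ∈ edgeVectors D) : c = τ := by
    obtain ⟨-, B, G⟩ := hcr
    have G' := G.smul (inv_pos.2 hc)
    rw [inv_smul_smul₀ hc.ne', one_div, inv_inv] at G'
    exact (G'.length_le F hr).antisymm (F.length_le G' hr)
  obtain ⟨c, rfl⟩ := exists_eq_smul_of_cross₂_eq_zero hr h
  rcases lt_trichotomy c 0 with hc | rfl | hc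
  · have hneg := hsymm _ he
    rw [← neg_smul] at hneg
    rw [← hlength (neg_pos.2 hc) hneg]
    exact .inr (by module)
  · exact absurd (zero_smul ℝ r) he.1
  · exact .inl (by rw [hlength hc he])

lemma IsFace.sum_abs_cross₂_parallel (F : IsFace D r₀ A τ) (hr₀ : r₀ ≠ 0)
    (hsymm : ∀ v ∈ edgeVectors D, -v ∈ edgeVectors D) {S : Finset (ℝ × ℝ)}
    (hS : ∀ v, v ∈ S ↔ v ∈ edgeVectors D) (r : ℝ × ℝ) :
    ∑ v ∈ S with cross₂ r₀ v = 0, |cross₂ r v| = 2 * |cross₂ r (τ • r₀)| := by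
  classical
  have hpar {v : ℝ × ℝ} (hv : v ∈ S.filter (cross₂ r₀ · = 0)) : v = τ • r₀ ∨ v = -(τ • r₀) :=
    F.eq_or_eq_neg_of_mem_edgeVectors hr₀ hsymm ((hS v).1 (Finset.mem_filter.1 hv).1)
      (Finset.mem_filter.1 hv).2
  rcases F.nonneg.eq_or_lt with rfl | hτ
  · rw [Finset.sum_eq_zero fun v hv => ?_]
    · simp
    · have hv₀ : v = 0 := by simpa using hpar hv
      simp [hv₀]
  · have hedge := F.smul_mem_edgeVectors hr₀ hτ
    have hfilter : S.filter (cross₂ r₀ · = 0) = {τ • r₀, -(τ • r₀)} := by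
      ext v
      rw [Finset.mem_insert, Finset.mem_singleton]
      refine ⟨hpar, ?_⟩
      rintro (rfl | rfl)
      · exact Finset.mem_filter.2 ⟨(hS _).2 hedge, by simp⟩
      · exact Finset.mem_filter.2 ⟨(hS _).2 (hsymm _ hedge), by simp⟩
    rw [hfilter, Finset.sum_pair (self_ne_neg.2 hedge.1), cross₂_neg_right, abs_neg, two_mul]

end EdgeVectors

section SupportFunction

variable {D : Set (ℝ × ℝ)} {r r₀ A e w y : ℝ × ℝ} {τ : ℝ}

/-- The support function of `D` in terms of the cross product: the maximum of `cross₂ r` over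
`D`. -/
noncomputable def supportFunction (D : Set (ℝ × ℝ)) (r : ℝ × ℝ) : ℝ := sSup (cross₂ r '' D)

lemma cross₂_le_supportFunction (hD : IsCompact D) (hy : y ∈ D) :
    cross₂ r y ≤ supportFunction D r :=
  le_csSup (hD.image (continuous_cross₂ continuous_const continuous_id)).bddAbove ⟨y, hy, rfl⟩

lemma supportFunction_eq (hA : A ∈ D) (h : ∀ y ∈ D, cross₂ r y ≤ cross₂ r A) :
    supportFunction D r = cross₂ r A :=
  IsGreatest.csSup_eq ⟨mem_image_of_mem _ hA, forall_mem_image.2 h⟩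

lemma cross₂_le_of_forall_mem_extremePoints {M : ℝ} (hhull : convexHull ℝ (extremePoints ℝ D) = D)
    (h : ∀ v ∈ extremePoints ℝ D, cross₂ r v ≤ M) (hy : y ∈ D) : cross₂ r y ≤ M := by
  have hlin : IsLinearMap ℝ (cross₂ r) := ⟨cross₂_add_right r, fun t v => cross₂_smul_right r v t⟩
  rw [← hhull] at hy
  exact convexHull_min h (convex_halfSpace_le hlin M) hy

lemma IsFace.eventually_supportFunction_eq (F : IsFace D r₀ A τ) (hr₀ : r₀ ≠ 0)
    (hf : (extremePoints ℝ D).Finite) (hhull : convexHull ℝ (extremePoints ℝ D) = D) :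
    ∀ᶠ r in 𝓝 r₀, supportFunction D r = max (cross₂ r A) (cross₂ r (A + τ • r₀)) := by
  have hext : ∀ᶠ r in 𝓝 r₀, ∀ v ∈ extremePoints ℝ D,
      cross₂ r v ≤ max (cross₂ r A) (cross₂ r (A + τ • r₀)) := by
    rw [eventually_all_finite hf]
    intro v hv
    rcases (F.cross₂_le v hv.1).eq_or_lt with h | h
    · obtain rfl | rfl := F.eq_or_eq_of_mem_extremePoints hr₀ hv h
      · exact .of_forall fun r => le_max_left _ _
      · exact .of_forall fun r => le_max_right _ _
    · have hopen : IsOpen {r | cross₂ r v < cross₂ r A} := isOpen_lt (by fun_prop) (by fun_prop)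
      filter_upwards [hopen.mem_nhds h] with r hr
      exact le_max_of_le_left (le_of_lt hr)
  filter_upwards [hext] with r hr
  have hle (y : ℝ × ℝ) (hy : y ∈ D) := cross₂_le_of_forall_mem_extremePoints hhull hr hy
  rcases le_total (cross₂ r (A + τ • r₀)) (cross₂ r A) with h | h
  · rw [max_eq_left h] at hle ⊢
    exact supportFunction_eq F.left_mem hle
  · rw [max_eq_right h] at hle ⊢
    exact supportFunction_eq F.right_mem hle

lemma eq_zero_of_eventually_cross₂_eq_zero (h : ∀ᶠ r in 𝓝 r₀, cross₂ r w = 0) : w = 0 := by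
  by_contra hw
  obtain ⟨δ, hδ, hδ₀⟩ := (((tendsto_add_smul_nhdsGT r₀ (quarterTurn w)).eventually h).and
    self_mem_nhdsWithin).exists
  rw [cross₂_add_left, h.self_of_nhds, zero_add, cross₂_smul_left, cross₂_comm] at hδ
  have hpos := mul_pos (mem_Ioi.1 hδ₀) (cross₂_quarterTurn_pos hw)
  linarith

lemma exists_forall_eq_cross₂_of_eventually {g : ℝ × ℝ → ℝ}
    (h : ∀ r₀ ≠ 0, ∃ c, ∀ᶠ r in 𝓝 r₀, g r = cross₂ r c) : ∃ c, ∀ r ≠ 0, g r = cross₂ r c := by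
  choose! c hc using h
  have : PreconnectedSpace ({0}ᶜ : Set (ℝ × ℝ)) := isPreconnected_iff_preconnectedSpace.1
    (isConnected_compl_singleton_of_one_lt_rank (by simp [← Module.finrank_eq_rank])
      0).isPreconnected
  have hconst : IsLocallyConstant fun r : ({0}ᶜ : Set (ℝ × ℝ)) => c r := by
    refine (IsLocallyConstant.iff_eventually_eq _).2 fun r₀ => ?_
    filter_upwards [(continuous_subtype_val.tendsto r₀).eventually
      (hc r₀ r₀.2).eventually_nhds] with r hr
    refine sub_eq_zero.1 (eq_zero_of_eventually_cross₂_eq_zero (r₀ := (r : ℝ × ℝ)) ?_)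
    filter_upwards [hr, hc r r.2] with y hy hy'
    rw [cross₂_sub_right, ← hy, ← hy', sub_self]
  refine ⟨c (1, 0), fun r hr => ?_⟩
  rw [(hc r hr).self_of_nhds]
  exact congrArg _ (hconst.apply_eq_of_preconnectedSpace ⟨r, hr⟩ ⟨(1, 0), by simp⟩)

lemma exists_eventually_abs_cross₂_eq (h : cross₂ r₀ e ≠ 0) :
    ∃ e', ∀ᶠ r in 𝓝 r₀, |cross₂ r e| = cross₂ r e' := by
  rcases lt_or_gt_of_ne h with h | h
  · have hopen : IsOpen {r | cross₂ r e < 0} := isOpen_lt (by fun_prop) continuous_const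
    refine ⟨-e, ?_⟩
    filter_upwards [hopen.mem_nhds h] with r hr
    rw [cross₂_neg_right, abs_of_neg hr]
  · have hopen : IsOpen {r | 0 < cross₂ r e} := isOpen_lt continuous_const (by fun_prop)
    refine ⟨e, ?_⟩
    filter_upwards [hopen.mem_nhds h] with r hr
    exact abs_of_pos hr

/-- The kinks of the support function at the directions of the edges are those of the sum, so the
difference is locally linear away from the origin, hence linear. -/
lemma exists_supportFunction_eq_sum_abs (hD : IsCompact D) (hc : Convex ℝ D) (hne : D.Nonempty)
    (hf : (extremePoints ℝ D).Finite) (hhull : convexHull ℝ (extremePoints ℝ D) = D)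
    (hsymm : ∀ v ∈ edgeVectors D, -v ∈ edgeVectors D) {S : Finset (ℝ × ℝ)}
    (hS : ∀ v, v ∈ S ↔ v ∈ edgeVectors D) :
    ∃ c, ∀ r ≠ 0, supportFunction D r = cross₂ r c + (1 / 4) * ∑ v ∈ S, |cross₂ r v| := by
  suffices ∃ c, ∀ r ≠ 0, supportFunction D r - (1 / 4) * ∑ v ∈ S, |cross₂ r v| = cross₂ r c from
    this.imp fun c h r hr => sub_eq_iff_eq_add.1 (h r hr)
  refine exists_forall_eq_cross₂_of_eventually fun r₀ hr₀ => ?_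
  obtain ⟨A, τ, F⟩ := exists_isFace hD hc hne hr₀
  choose! v' hv' using fun v => exists_eventually_abs_cross₂_eq (r₀ := r₀) (e := v)
  refine ⟨A + (τ / 2) • r₀ - (1 / 4 : ℝ) • ∑ v ∈ S with ¬cross₂ r₀ v = 0, v' v, ?_⟩
  have habs : ∀ᶠ r in 𝓝 r₀, ∀ v ∈ S.filter fun v => ¬cross₂ r₀ v = 0,
      |cross₂ r v| = cross₂ r (v' v) :=
    (eventually_all_finset _).2 fun v hv => hv' v (Finset.mem_filter.1 hv).2
  filter_upwards [habs, F.eventually_supportFunction_eq hr₀ hf hhull] with r hr hsupp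
  rw [hsupp, ← Finset.sum_filter_add_sum_filter_not S (cross₂ r₀ · = 0),
    F.sum_abs_cross₂_parallel hr₀ hsymm hS, Finset.sum_congr rfl hr, max_def]
  simp only [cross₂_add_right, cross₂_sub_right, cross₂_smul_right, cross₂_sum_right]
  split_ifs with h
  · rw [abs_of_nonneg (by linarith)]; ring
  · rw [abs_of_nonpos (by linarith)]; ring

end SupportFunction

lemma IsKFoldTranslativeTiling.neg_mem_edgeVectors {ι : Type} {D : Set (ℝ × ℝ)} {x : ι → ℝ × ℝ}
    {k : ℕ} (hT : IsKFoldTranslativeTiling D x k) (hk : 0 < k) (hD : IsConvexDomain D) {v : ℝ × ℝ}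
    (hv : v ∈ edgeVectors D) : -v ∈ edgeVectors D := by
  obtain ⟨hv₀, A, F⟩ := hv
  obtain ⟨B, τ, G⟩ := exists_isFace hD.isCompact hD.convex
    (hD.nonempty_interior.mono interior_subset) (neg_ne_zero.2 hv₀)
  obtain rfl := hT.length_eq_of_isFace hk hD hv₀ F G
  exact ⟨neg_ne_zero.2 hv₀, B, G⟩

/-! ### Zonotopes -/

section Zonotope

variable {α : Type*} {D K : Set (ℝ × ℝ)}

/-- The zonotope with vertex `V` spanned by the vectors `e j` for `j ∈ s`. The coefficient functions
are defined on the whole index type, their values outside `s` being irrelevant. -/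
def zonotope (V : ℝ × ℝ) (s : Finset α) (e : α → ℝ × ℝ) : Set (ℝ × ℝ) :=
  (fun t : α → ℝ => V + ∑ j ∈ s, t j • e j) '' univ.pi fun _ => Icc 0 1

variable (V r : ℝ × ℝ) (s : Finset α) (e : α → ℝ × ℝ)

lemma isCompact_zonotope : IsCompact (zonotope V s e) :=
  (isCompact_univ_pi fun _ => isCompact_Icc).image (by fun_prop)

lemma convex_zonotope : Convex ℝ (zonotope V s e) := by
  rintro _ ⟨t, ht, rfl⟩ _ ⟨t', ht', rfl⟩ a b ha hb hab
  refine ⟨a • t + b • t', convex_pi (fun _ _ => convex_Icc 0 1) ht ht' ha hb hab, ?_⟩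
  obtain rfl := eq_sub_of_add_eq hab
  simp only [Pi.add_apply, Pi.smul_apply, add_smul, smul_assoc, Finset.sum_add_distrib,
    ← Finset.smul_sum]
  module

lemma supportFunction_zonotope : supportFunction (zonotope V s e) r =
    cross₂ r (V + (1 / 2 : ℝ) • ∑ j ∈ s, e j) + (1 / 2) * ∑ j ∈ s, |cross₂ r (e j)| := by
  have hmax : cross₂ r (V + ∑ j ∈ s, (if 0 ≤ cross₂ r (e j) then 1 else 0 : ℝ) • e j) =
      cross₂ r (V + (1 / 2 : ℝ) • ∑ j ∈ s, e j) + (1 / 2) * ∑ j ∈ s, |cross₂ r (e j)| := by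
    simp only [cross₂_add_right, cross₂_smul_right, cross₂_sum_right, Finset.mul_sum]
    rw [add_assoc, ← Finset.sum_add_distrib]
    congr 1
    refine Finset.sum_congr rfl fun j _ => ?_
    split_ifs with h
    · rw [abs_of_nonneg h]; ring
    · rw [abs_of_neg (not_le.1 h)]; ring
  rw [← hmax]
  refine supportFunction_eq ⟨_, fun j _ => ?_, rfl⟩ ?_
  · simp only
    split_ifs <;> simp
  · rintro _ ⟨t, ht, rfl⟩
    simp only [cross₂_add_right, cross₂_smul_right, cross₂_sum_right]
    refine add_le_add_right (Finset.sum_le_sum fun j _ => ?_) _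
    have hj := ht j trivial
    split_ifs with h
    · exact mul_le_mul_of_nonneg_right hj.2 h
    · rw [zero_mul]
      exact mul_nonpos_of_nonneg_of_nonpos hj.1 (not_le.1 h).le

lemma subset_of_supportFunction_le (hD : IsCompact D) (hc : Convex ℝ K) (hK : IsClosed K)
    (hne : K.Nonempty) (h : ∀ r ≠ 0, supportFunction D r ≤ supportFunction K r) : D ⊆ K := by
  intro p hp
  by_contra hpK
  obtain ⟨f, u, hf, hu⟩ := geometric_hahn_banach_closed_point hc hK hpK
  obtain ⟨r, hr⟩ := exists_forall_eq_cross₂ f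
  simp only [hr] at hf hu
  have hr₀ : r ≠ 0 := by
    rintro rfl
    simpa using (hf _ hne.some_mem).trans hu
  have hle : supportFunction K r ≤ u :=
    csSup_le (hne.image _) (forall_mem_image.2 fun y hy => (hf y hy).le)
  linarith [cross₂_le_supportFunction (r := r) hD hp, h r hr₀]

lemma eq_of_supportFunction_eq (hD : IsCompact D) (hDc : Convex ℝ D) (hDne : D.Nonempty)
    (hK : IsCompact K) (hKc : Convex ℝ K) (hKne : K.Nonempty)
    (h : ∀ r ≠ 0, supportFunction D r = supportFunction K r) : D = K :=
  (subset_of_supportFunction_le hD hKc hK.isClosed hKne fun r hr => (h r hr).le).antisymm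
    (subset_of_supportFunction_le hK hDc hD.isClosed hDne fun r hr => (h r hr).ge)

end Zonotope

section Sorting

variable {a b u w : ℝ × ℝ}

lemma exists_equiv_fin_strictMono {α β : Type*} [LinearOrder β] (s : Finset α) {f : α → β}
    (hf : InjOn f s) : ∃ e : Fin s.card ≃ s, StrictMono fun i => f (e i) := by
  refine ⟨(Tuple.sort fun i => f (s.equivFin.symm i)).trans s.equivFin.symm, ?_⟩
  refine (Tuple.monotone_sort fun i => f (s.equivFin.symm i)).strictMono_of_injective ?_
  exact hf.injective.comp (s.equivFin.symm.injective.comp (Equiv.injective _))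

lemma cross₂_pos_iff_div_lt_div (hu : 0 < cross₂ w u) (ha : 0 < cross₂ w a)
    (hb : 0 < cross₂ w b) :
    0 < cross₂ a b ↔ cross₂ u a / cross₂ w a < cross₂ u b / cross₂ w b := by
  have hplücker : cross₂ w a * cross₂ u b - cross₂ u a * cross₂ w b =
      cross₂ w u * cross₂ a b := by
    simp only [cross₂]; ring
  rw [div_lt_div_iff₀ ha hb, ← mul_pos_iff_of_pos_left hu, ← hplücker, sub_pos,
    mul_comm (cross₂ u b)]

lemma exists_equiv_fin_cross₂_pos {s : Finset (ℝ × ℝ)} (hw : ∀ v ∈ s, 0 < cross₂ w v)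
    (hs : ∀ a ∈ s, ∀ b ∈ s, cross₂ a b = 0 → a = b) :
    ∃ e : Fin s.card ≃ s, ∀ i j, i < j → 0 < cross₂ (e i) (e j) := by
  rcases eq_or_ne w 0 with rfl | hw₀
  · obtain rfl : s = ∅ := Finset.eq_empty_of_forall_notMem fun v hv => by simpa using hw v hv
    exact ⟨(Finset.equivFin ∅).symm, fun i => i.elim0⟩
  have hiff {a b : ℝ × ℝ} (ha : a ∈ s) (hb : b ∈ s) :=
    cross₂_pos_iff_div_lt_div (cross₂_quarterTurn_pos hw₀) (hw a ha) (hw b hb)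
  obtain ⟨e, he⟩ := exists_equiv_fin_strictMono s (f := fun v =>
    cross₂ (quarterTurn w) v / cross₂ w v) fun a ha b hb hab => by
      refine hs a ha b hb (le_antisymm ?_ ?_)
      · exact not_lt.1 fun h => ((hiff ha hb).1 h).ne hab
      · rw [cross₂_comm, Left.nonneg_neg_iff]
        exact not_lt.1 fun h => ((hiff hb ha).1 h).ne' hab
  exact ⟨e, fun i j hij => (hiff (e i).2 (e j).2).2 (he hij)⟩

lemma exists_forall_mem_cross₂_ne_zero {s : Set (ℝ × ℝ)} (hs : s.Finite) (h₀ : ∀ v ∈ s, v ≠ 0) :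
    ∃ w, ∀ v ∈ s, cross₂ w v ≠ 0 := by
  have := hs.to_subtype
  obtain ⟨f, hf⟩ := Module.exists_dual_forall_apply_ne_zero (K := ℝ) (fun v : s => (v : ℝ × ℝ))
    fun v => h₀ v v.2
  obtain ⟨w, hw⟩ := exists_forall_eq_cross₂ f.toContinuousLinearMap
  exact ⟨w, fun v hv => hw v ▸ hf ⟨v, hv⟩⟩

lemma exists_antiperiodic_extension {m : ℕ} [NeZero m] {e : Fin m → ℝ × ℝ}
    (he : ∀ i j, i < j → 0 < cross₂ (e i) (e j)) :
    ∃ e' : ℕ → ℝ × ℝ, e'.Antiperiodic m ∧ (∀ i j, i < j → j < i + m → 0 < cross₂ (e' i) (e' j)) ∧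
      ∀ j : Fin m, e' j = e j := by
  set e' : ℕ → ℝ × ℝ := fun j => (-1 : ℝ) ^ (j / m) • e (Fin.ofNat m j) with he'
  have hanti : e'.Antiperiodic m := fun j => by
    simp [he', Fin.ofNat, Nat.add_div_right _ (NeZero.pos m), pow_succ]
  have hlt (j : Fin m) : e' j = e j := by simp [he', Nat.div_eq_of_lt j.2]
  refine ⟨e', hanti, fun i => ?_, hlt⟩
  induction i using Nat.strong_induction_on with
  | _ i ih =>
    intro j hij hj
    rcases lt_or_ge i m with hi | hi
    · rcases lt_or_ge j m with hjm | hjm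
      · rw [hlt ⟨i, hi⟩, hlt ⟨j, hjm⟩]
        exact he _ _ hij
      · obtain ⟨j, rfl⟩ := Nat.exists_eq_add_of_le' hjm
        rw [hanti, cross₂_neg_right, ← cross₂_comm]
        exact ih j (by omega) i (by omega) (by omega)
    · obtain ⟨i, rfl⟩ := Nat.exists_eq_add_of_le' hi
      obtain ⟨j, rfl⟩ := Nat.exists_eq_add_of_le' (hi.trans hij.le)
      rw [hanti, hanti, cross₂_neg_left, cross₂_neg_right, neg_neg]
      exact ih i (by have := NeZero.pos m; omega) j (by omega) (by omega)

end Sorting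

/-! ### Zonogons -/

/-- `D` is a convex polygon with `2 * m` edges that is a zonotope; its edge vectors
`e 0, e 1, …, e (2 * m - 1)` are listed counterclockwise starting from the vertex `V` and continued
periodically. Opposite edges being opposite vectors, only the first `m` of them span the
zonotope. -/
structure CyclicZonogon (D : Set (ℝ × ℝ)) (m : ℕ) (V : ℝ × ℝ) (e : ℕ → ℝ × ℝ) : Prop where
  antiperiodic : e.Antiperiodic m
  cross₂_pos : ∀ i j, i < j → j < i + m → 0 < cross₂ (e i) (e j)
  eq_zonotope : D = zonotope V (Finset.range m) e
  nonempty_interior : (interior D).Nonempty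

/-- The vertex of a polygon reached from the vertex `V` by following the first `i` edges. -/
def vertex (V : ℝ × ℝ) (e : ℕ → ℝ × ℝ) (i : ℕ) : ℝ × ℝ := V + ∑ j ∈ Finset.range i, e j

section Vertex

variable {V : ℝ × ℝ} {e : ℕ → ℝ × ℝ}

lemma vertex_zero : vertex V e 0 = V := by simp [vertex]

lemma vertex_succ (i : ℕ) : vertex V e (i + 1) = vertex V e i + e i := by
  simp [vertex, Finset.sum_range_succ, add_assoc]

lemma vertex_add (i n : ℕ) :
    vertex V e (i + n) = vertex V e i + ∑ j ∈ Finset.range n, e (i + j) := by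
  simp only [vertex, Finset.sum_range_add, add_assoc]

end Vertex

section Zonotope

variable {α : Type*} {r V : ℝ × ℝ} {s : Finset α} {e : α → ℝ × ℝ} {a : α} {τ : ℝ}

lemma isCentrallySymmetric_zonotope : IsCentrallySymmetric (zonotope V s e) := by
  refine ⟨V + (1 / 2 : ℝ) • ∑ j ∈ s, e j, ?_⟩
  rintro _ ⟨t, ht, rfl⟩
  refine ⟨fun j => 1 - t j, fun j _ => ?_, ?_⟩
  · exact ⟨sub_nonneg.2 (ht j trivial).2, sub_le_self _ (ht j trivial).1⟩
  · simp only [sub_smul, one_smul, Finset.sum_sub_distrib]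
    module

lemma isFace_zonotope (ha : a ∈ s) (hea : e a = τ • r) (hτ : 0 ≤ τ)
    (h : ∀ j ∈ s, j ≠ a → cross₂ r (e j) < 0) : IsFace (zonotope V s e) r V τ := by
  classical
  have hle {t : α → ℝ} (ht : t ∈ univ.pi fun _ => Icc 0 1) :
      ∀ j ∈ s, t j * cross₂ r (e j) ≤ 0 := fun j hj => by
    rcases eq_or_ne j a with rfl | hja
    · simp [hea]
    · exact mul_nonpos_of_nonneg_of_nonpos (ht j trivial).1 (h j hj hja).le
  refine ⟨hτ, ?_, ?_, ?_⟩
  · rintro _ ⟨c, hc, rfl⟩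
    refine ⟨Pi.single a (c / τ), fun j _ => ?_, ?_⟩
    · rcases eq_or_ne j a with rfl | hja
      · simpa using ⟨div_nonneg hc.1 hτ, div_le_one_of_le₀ hc.2 hτ⟩
      · simp [hja]
    · rcases hτ.eq_or_lt with rfl | hτ
      · simp [Pi.single_apply, le_antisymm hc.2 hc.1]
      · simp [Pi.single_apply, ite_smul, ha, hea, smul_smul, div_mul_cancel₀ _ hτ.ne']
  · rintro _ ⟨t, ht, rfl⟩
    simpa only [cross₂_add_right, cross₂_sum_right, cross₂_smul_right, add_le_iff_nonpos_right]
      using Finset.sum_nonpos (hle ht)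
  · rintro _ ⟨t, ht, rfl⟩ hy
    simp only [cross₂_add_right, cross₂_sum_right, cross₂_smul_right, add_eq_left] at hy
    rw [Finset.sum_eq_zero_iff_of_nonpos (hle ht)] at hy
    refine ⟨t a * τ, ⟨mul_nonneg (ht a trivial).1 hτ, mul_le_of_le_one_left hτ (ht a trivial).2⟩,
      ?_⟩
    simp only
    rw [Finset.sum_eq_single_of_mem a ha fun j hj hja => ?_, hea, smul_smul]
    rw [(mul_eq_zero.1 (hy j hj)).resolve_right (h j hj hja).ne, zero_smul]

end Zonotope

namespace CyclicZonogon

variable {D : Set (ℝ × ℝ)} {m : ℕ} {V : ℝ × ℝ} {e : ℕ → ℝ × ℝ} (P : CyclicZonogon D m V e)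
include P

lemma isConvexDomain : IsConvexDomain D where
  isCompact := P.eq_zonotope ▸ isCompact_zonotope ..
  convex := P.eq_zonotope ▸ convex_zonotope ..
  nonempty_interior := P.nonempty_interior

lemma two_le : 2 ≤ m := by
  by_contra! hm
  obtain ⟨r, hr, h⟩ : ∃ r ≠ 0, ∀ j ∈ Finset.range m, cross₂ r (e j) = 0 := by
    rcases eq_or_ne (e 0) 0 with h | h
    · refine ⟨(1, 0), by simp, fun j hj => ?_⟩
      obtain rfl : j = 0 := by have := Finset.mem_range.1 hj; omega
      simp [h]
    · refine ⟨e 0, h, fun j hj => ?_⟩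
      obtain rfl : j = 0 := by have := Finset.mem_range.1 hj; omega
      simp
  have hV : ∀ y ∈ D, cross₂ r y = cross₂ r V := by
    rw [P.eq_zonotope]
    rintro _ ⟨t, -, rfl⟩
    simp +contextual [cross₂_sum_right, Finset.sum_eq_zero, h]
  obtain ⟨o, ho⟩ := P.nonempty_interior
  exact (cross₂_lt_of_mem_interior hr (fun y hy => (hV y hy).le) ho).ne
    (hV o (interior_subset ho))

lemma edge_ne_zero (i : ℕ) : e i ≠ 0 := fun h => by
  simpa [h] using P.cross₂_pos i (i + 1) (by omega) (by have := P.two_le; omega)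

lemma rotate_one : CyclicZonogon D m (V + e 0) fun j => e (j + 1) where
  antiperiodic j := by rw [← P.antiperiodic (j + 1), add_right_comm]
  cross₂_pos i j hij hj := P.cross₂_pos _ _ (by omega) (by omega)
  eq_zonotope := by
    have hsum {M : Type} [AddCommGroup M] (f : ℕ → M) :
        ∑ j ∈ Finset.range m, f (j + 1) = ∑ j ∈ Finset.range m, f j + f m - f 0 := by
      rw [eq_sub_iff_add_eq, ← Finset.sum_range_succ', Finset.sum_range_succ]
    have hm : e m = -e 0 := by simpa using P.antiperiodic 0
    rw [P.eq_zonotope]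
    refine eq_of_supportFunction_eq (isCompact_zonotope ..) (convex_zonotope ..) ?_
      (isCompact_zonotope ..) (convex_zonotope ..) ?_ fun r _ => ?_
    · exact ⟨V, 0, fun _ _ => by simp, by simp⟩
    · exact ⟨V + e 0, 0, fun _ _ => by simp, by simp⟩
    · rw [supportFunction_zonotope, supportFunction_zonotope, hsum e,
        hsum fun j => |cross₂ r (e j)|, hm]
      simp only [cross₂_add_right, cross₂_sub_right, cross₂_smul_right, cross₂_neg_right, abs_neg]
      ring
  nonempty_interior := P.nonempty_interior

lemma rotate (i : ℕ) : CyclicZonogon D m (vertex V e i) fun j => e (j + i) := by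
  induction i with
  | zero => simpa [vertex_zero] using P
  | succ i ih => simpa [vertex_succ, add_right_comm, add_assoc] using ih.rotate_one

lemma vertex_add_two_mul (i : ℕ) : vertex V e (i + 2 * m) = vertex V e i := by
  have hcancel : ∑ j ∈ Finset.range m, e (i + (m + j)) = -∑ j ∈ Finset.range m, e (i + j) := by
    rw [← Finset.sum_neg_distrib]
    exact Finset.sum_congr rfl fun j _ => by rw [← P.antiperiodic, add_left_comm, add_comm m]
  rw [vertex_add, two_mul, Finset.sum_range_add, hcancel, add_neg_cancel, add_zero]

lemma isFace (i : ℕ) : IsFace D (-e i) (vertex V e (i + 1)) 1 := by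
  have Q := P.rotate (i + 1)
  have hm := P.two_le
  rw [Q.eq_zonotope]
  refine isFace_zonotope (a := m - 1) (Finset.mem_range.2 (by omega)) ?_ zero_le_one ?_
  · rw [one_smul, ← P.antiperiodic i]
    congr 1; omega
  · intro j hj hjm
    rw [cross₂_neg_left, neg_neg_iff_pos]
    exact P.cross₂_pos _ _ (by omega) (by have := Finset.mem_range.1 hj; omega)

lemma vertex_mem_extremePoints (i : ℕ) : vertex V e i ∈ extremePoints ℝ D := by
  simpa [vertex_succ] using (P.isFace i).right_mem_extremePoints (neg_ne_zero.2 (P.edge_ne_zero i))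

lemma exists_forall_cross₂_vertex_le (r : ℝ × ℝ) :
    ∃ i < 2 * m, ∀ j, cross₂ r (vertex V e j) ≤ cross₂ r (vertex V e i) := by
  have hm := P.two_le
  obtain ⟨i, hi, h⟩ := Finset.exists_max_image (Finset.range (2 * m))
    (fun j => cross₂ r (vertex V e j)) ⟨0, Finset.mem_range.2 (by omega)⟩
  refine ⟨i, Finset.mem_range.1 hi, fun j => ?_⟩
  have hper : Function.Periodic (vertex V e) (2 * m) := P.vertex_add_two_mul
  rw [← hper.map_mod_nat]
  exact h _ (Finset.mem_range.2 (Nat.mod_lt _ (by omega)))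

lemma cross₂_edge_nonpos_of_le {r : ℝ × ℝ} {i j : ℕ} (hi : cross₂ r (e i) ≤ 0)
    (hm : 0 ≤ cross₂ r (e (i + 2 * m - 1))) (hij : i ≤ j) (hj : j < i + m) :
    cross₂ r (e j) ≤ 0 := by
  have h2 := P.two_le
  obtain ⟨l, hl, rfl⟩ : ∃ l < m, j = i + l := ⟨j - i, by omega, by omega⟩
  have hlast : e (i + 2 * m - 1) = -e (i + (m - 1)) := by
    rw [← P.antiperiodic]; congr 1; omega
  rw [hlast, cross₂_neg_right, neg_nonneg] at hm
  have hnonneg {a b : ℕ} (hab : a ≤ b) (hb : b < a + m) : 0 ≤ cross₂ (e a) (e b) := by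
    rcases hab.eq_or_lt with rfl | hab
    · simp
    · exact (P.cross₂_pos _ _ hab hb).le
  have h := congrArg (cross₂ r)
    (cross₂_smul_eq_add (u := e i) (v := e (i + (m - 1))) (e (i + l)))
  simp only [cross₂_add_right, cross₂_smul_right] at h
  refine nonpos_of_mul_nonpos_right (h.trans_le (add_nonpos ?_ ?_))
    (P.cross₂_pos i (i + (m - 1)) (by omega) (by omega))
  · exact mul_nonpos_of_nonneg_of_nonpos (hnonneg (by omega) (by omega)) hi
  · exact mul_nonpos_of_nonneg_of_nonpos (hnonneg (by omega) (by omega)) hm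

lemma cross₂_le_of_forall_vertex {r y : ℝ × ℝ} {M : ℝ}
    (h : ∀ i < 2 * m, cross₂ r (vertex V e i) ≤ M) (hy : y ∈ D) : cross₂ r y ≤ M := by
  obtain ⟨i, hi, hmax⟩ := P.exists_forall_cross₂_vertex_le r
  have hm := P.two_le
  have hsucc := hmax (i + 1)
  have hpred := hmax (i + 2 * m - 1)
  have hstep := vertex_succ (V := V) (e := e) (i + 2 * m - 1)
  rw [show i + 2 * m - 1 + 1 = i + 2 * m by omega, P.vertex_add_two_mul] at hstep
  rw [hstep, cross₂_add_right, le_add_iff_nonneg_right] at hpred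
  rw [vertex_succ, cross₂_add_right, add_le_iff_nonpos_right] at hsucc
  rw [(P.rotate i).eq_zonotope] at hy
  obtain ⟨t, ht, rfl⟩ := hy
  refine le_trans ?_ (h i hi)
  rw [cross₂_add_right, cross₂_sum_right, add_le_iff_nonpos_right]
  refine Finset.sum_nonpos fun j hj => ?_
  rw [cross₂_smul_right]
  exact mul_nonpos_of_nonneg_of_nonpos (ht j trivial).1 (P.cross₂_edge_nonpos_of_le hsucc hpred
    (by omega) (by have := Finset.mem_range.1 hj; omega))

lemma eq_convexHull : D = convexHull ℝ (vertex V e '' Iio (2 * m)) := by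
  refine Subset.antisymm (fun p hp => ?_) (convexHull_min ?_ P.isConvexDomain.convex)
  · by_contra hpK
    obtain ⟨f, u, hf, hu⟩ := geometric_hahn_banach_closed_point (convex_convexHull ℝ _)
      (((finite_Iio _).image _).isClosed_convexHull ℝ) hpK
    obtain ⟨r, hr⟩ := exists_forall_eq_cross₂ f
    simp only [hr] at hf hu
    exact hu.not_ge (P.cross₂_le_of_forall_vertex (fun i hi =>
      (hf _ (subset_convexHull ℝ _ (mem_image_of_mem _ hi))).le) hp)
  · rintro _ ⟨i, -, rfl⟩
    exact (P.vertex_mem_extremePoints i).1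

lemma vertex_ne_vertex_of_le {i j : ℕ} (hij : i < j) (hj : j ≤ i + m) :
    vertex V e i ≠ vertex V e j := by
  obtain ⟨n, rfl⟩ := Nat.exists_eq_add_of_lt hij
  rw [add_assoc, vertex_add, ne_eq, left_eq_add]
  intro h
  rcases Nat.eq_zero_or_pos n with rfl | hn
  · exact P.edge_ne_zero i (by simpa using h)
  · refine (Finset.sum_pos' (f := fun j => cross₂ (e i) (e (i + j))) (s := Finset.range (n + 1))
      (fun l hl => ?_) ⟨n, by simp, P.cross₂_pos _ _ (by omega) (by omega)⟩).ne' ?_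
    · rcases Nat.eq_zero_or_pos l with rfl | hl₀
      · simp
      · exact (P.cross₂_pos _ _ (by omega) (by have := Finset.mem_range.1 hl; omega)).le
    · rw [← cross₂_sum_right, h, cross₂_zero_right]

lemma injOn_vertex : InjOn (vertex V e) (Iio (2 * m)) := by
  have hne {i j : ℕ} (hij : i < j) (hj : j < 2 * m) : vertex V e i ≠ vertex V e j := by
    rcases le_or_gt j (i + m) with h | h
    · exact P.vertex_ne_vertex_of_le hij h
    · rw [← P.vertex_add_two_mul i]
      exact (P.vertex_ne_vertex_of_le (by omega) (by omega)).symm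
  intro i hi j hj hij
  rcases lt_trichotomy i j with h | h | h
  · exact absurd hij (hne h hj)
  · exact h
  · exact absurd hij.symm (hne h hi)

lemma exists_isConvexPolygon : ∃ W, IsConvexPolygon D W ∧ W.card = 2 * m := by
  classical
  refine ⟨(Finset.range (2 * m)).image (vertex V e), ⟨?_, ?_, P.nonempty_interior⟩, ?_⟩
  · simpa using P.eq_convexHull
  · simpa using fun i _ => P.vertex_mem_extremePoints i
  · rw [Finset.card_image_of_injOn (by simpa using P.injOn_vertex), Finset.card_range]

end CyclicZonogon

lemma CyclicZonogon.isParallelogram {D : Set (ℝ × ℝ)} {V : ℝ × ℝ} {e : ℕ → ℝ × ℝ}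
    (P : CyclicZonogon D 2 V e) : IsParallelogram D := by
  have h := P.cross₂_pos 0 1 (by omega) (by omega)
  refine ⟨V, e 0, e 1, LinearIndependent.pair_iff.2 fun s t hst => ?_, ?_⟩
  · have hs := congrArg (cross₂ · (e 1)) hst
    have ht := congrArg (cross₂ (e 0)) hst
    simpa [h.ne'] using And.intro hs ht
  · rw [P.eq_zonotope]
    ext y
    simp only [zonotope, Finset.sum_range_succ, Finset.sum_range_zero, zero_add, add_assoc]
    constructor
    · rintro ⟨t, ht, rfl⟩
      exact ⟨(t 0, t 1), ⟨ht 0 trivial, ht 1 trivial⟩, rfl⟩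
    · rintro ⟨⟨s, t⟩, ⟨hs, ht⟩, rfl⟩
      refine ⟨fun j => if j = 0 then s else t, fun j _ => ?_, by simp⟩
      simp only
      split_ifs <;> assumption

lemma CyclicZonogon.isCentrallySymmetricHexagon {D : Set (ℝ × ℝ)} {V : ℝ × ℝ}
    {e : ℕ → ℝ × ℝ} (P : CyclicZonogon D 3 V e) : IsCentrallySymmetricHexagon D := by
  obtain ⟨W, hW, hcard⟩ := P.exists_isConvexPolygon
  exact ⟨W, hW, hcard, P.eq_zonotope ▸ isCentrallySymmetric_zonotope⟩

section Existence

variable {D : Set (ℝ × ℝ)}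

lemma IsConvexDomain.edgeVectors_nonempty (hD : IsConvexDomain D)
    (hf : (extremePoints ℝ D).Finite) (hhull : convexHull ℝ (extremePoints ℝ D) = D)
    (hsymm : ∀ v ∈ edgeVectors D, -v ∈ edgeVectors D) : (edgeVectors D).Nonempty := by
  by_contra! h
  have hne := hD.nonempty_interior.mono interior_subset
  obtain ⟨c, hc⟩ := exists_supportFunction_eq_sum_abs hD.isCompact hD.convex hne hf hhull hsymm
    (S := ∅) (by simp [h])
  obtain ⟨o, ho⟩ := hD.nonempty_interior
  have hle {r : ℝ × ℝ} (hr : r ≠ 0) : ∀ y ∈ D, cross₂ r y ≤ cross₂ r c := fun y hy => by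
    simpa [hc r hr] using cross₂_le_supportFunction (r := r) hD.isCompact hy
  have hr : ((1, 0) : ℝ × ℝ) ≠ 0 := by simp
  have h₁ := cross₂_lt_of_mem_interior hr (hle hr) ho
  have h₂ := hle (neg_ne_zero.2 hr) o (interior_subset ho)
  simp only [cross₂_neg_left] at h₂
  linarith

lemma sum_abs_cross₂_eq_two_mul {S : Finset (ℝ × ℝ)} (hS : ∀ v ∈ S, -v ∈ S) {w : ℝ × ℝ}
    (hw : ∀ v ∈ S, cross₂ w v ≠ 0) (r : ℝ × ℝ) :
    ∑ v ∈ S, |cross₂ r v| = 2 * ∑ v ∈ S with 0 < cross₂ w v, |cross₂ r v| := by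
  rw [← Finset.sum_filter_add_sum_filter_not S (0 < cross₂ w ·), two_mul, add_right_inj]
  refine Finset.sum_nbij' Neg.neg Neg.neg ?_ ?_ (by simp) (by simp) (by simp)
  · intro v hv
    obtain ⟨hv, hle⟩ := Finset.mem_filter.1 hv
    exact Finset.mem_filter.2 ⟨hS v hv, by
      simpa using (not_lt.1 hle).lt_of_ne (hw v hv)⟩
  · intro v hv
    obtain ⟨hv, hlt⟩ := Finset.mem_filter.1 hv
    exact Finset.mem_filter.2 ⟨hS v hv, by simpa using hlt.le⟩

lemma eq_of_mem_edgeVectors_of_cross₂_eq_zero {a b w : ℝ × ℝ}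
    (hsymm : ∀ v ∈ edgeVectors D, -v ∈ edgeVectors D)
    (ha : a ∈ edgeVectors D) (hb : b ∈ edgeVectors D) (hwa : 0 < cross₂ w a) (hwb : 0 < cross₂ w b)
    (hab : cross₂ a b = 0) : a = b := by
  obtain ⟨ha₀, A, F⟩ := ha
  rcases F.eq_or_eq_neg_of_mem_edgeVectors ha₀ hsymm hb hab with h | h
  · simpa using h.symm
  · simp only [h, one_smul, cross₂_neg_right] at hwb
    linarith

/-- Half of the edge vectors, namely those in an open half plane not bounded by any of them, sorted
by slope. -/
lemma IsConvexDomain.exists_cyclicZonogon (hD : IsConvexDomain D)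
    (hf : (extremePoints ℝ D).Finite) (hhull : convexHull ℝ (extremePoints ℝ D) = D)
    (hsymm : ∀ v ∈ edgeVectors D, -v ∈ edgeVectors D) : ∃ m V e, CyclicZonogon D m V e := by
  classical
  set S := (finite_edgeVectors hf).toFinset
  have hS (v : ℝ × ℝ) : v ∈ S ↔ v ∈ edgeVectors D := Finite.mem_toFinset _
  have hne := hD.nonempty_interior.mono interior_subset
  obtain ⟨c, hc⟩ := exists_supportFunction_eq_sum_abs hD.isCompact hD.convex hne hf hhull hsymm hS
  obtain ⟨w, hw⟩ := exists_forall_mem_cross₂_ne_zero (finite_edgeVectors hf) fun v hv => hv.1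
  simp only [sum_abs_cross₂_eq_two_mul (S := S) (w := w) (by simpa [hS] using hsymm)
    (by simpa [hS] using hw)] at hc
  set E := S.filter (0 < cross₂ w ·)
  have hE {v : ℝ × ℝ} (hv : v ∈ E) : v ∈ edgeVectors D ∧ 0 < cross₂ w v := by
    simpa [E, hS] using hv
  have hcard : E.card ≠ 0 := by
    obtain ⟨v, hv⟩ := hD.edgeVectors_nonempty hf hhull hsymm
    refine Finset.card_ne_zero.2 ?_
    rcases (hw v hv).lt_or_gt with h | h
    · exact ⟨-v, by simp [E, hS, h, hsymm v hv]⟩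
    · exact ⟨v, by simp [E, hS, h, hv]⟩
  have : NeZero E.card := ⟨hcard⟩
  obtain ⟨f, hfpos⟩ := exists_equiv_fin_cross₂_pos (s := E) (fun v hv => (hE hv).2)
    fun a ha b hb hab => eq_of_mem_edgeVectors_of_cross₂_eq_zero hsymm (hE ha).1 (hE hb).1
      (hE ha).2 (hE hb).2 hab
  obtain ⟨e, hanti, hpos, he⟩ := exists_antiperiodic_extension (e := fun i => (f i : ℝ × ℝ)) hfpos
  refine ⟨E.card, c - (1 / 2 : ℝ) • ∑ j ∈ Finset.range E.card, e j, e, hanti, hpos, ?_,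
    hD.nonempty_interior⟩
  refine eq_of_supportFunction_eq hD.isCompact hD.convex hne (isCompact_zonotope ..)
    (convex_zonotope ..) ⟨_, 0, fun _ _ => by simp, rfl⟩ fun r hr => ?_
  rw [supportFunction_zonotope, hc r hr, sub_add_cancel, Finset.sum_range, ← Finset.sum_coe_sort E,
    ← f.sum_comp]
  simp only [he]
  ring

end Existence

lemma IsKFoldTranslativeTiling.exists_cyclicZonogon {ι : Type} {D : Set (ℝ × ℝ)} {x : ι → ℝ × ℝ}
    {k : ℕ} (hT : IsKFoldTranslativeTiling D x k) (hk : 0 < k) (hD : IsConvexDomain D) :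
    ∃ m V e, CyclicZonogon D m V e :=
  hD.exists_cyclicZonogon (hT.finite_extremePoints hk hD) (hT.convexHull_extremePoints hk hD)
    fun _ hv => hT.neg_mem_edgeVectors hk hD hv

/-! ### Periods and staggered rows -/

/-- The number of indices `i` with `x i = y`: the multiplicity with which the translate by `y`
occurs in the family `x`. -/
noncomputable def translateMultiplicity {ι : Type*} (x : ι → ℝ × ℝ) (y : ℝ × ℝ) : ℕ :=
  (x ⁻¹' {y}).ncard

/-- Along a line in direction `r` and along its translate by `b`, the family `x` contains two
complete arithmetic progressions of step `r` that do not correspond under the translation. -/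
def HasStaggeredRows {ι : Type*} (x : ι → ℝ × ℝ) (r b : ℝ × ℝ) : Prop :=
  ∃ (y : ℝ × ℝ) (l : ℝ), l ∈ Ioo 0 1 ∧
    ∀ n : ℤ, y + (n : ℝ) • r ∈ range x ∧ y + (l + n) • r + b ∈ range x

section TranslateMultiplicity

variable {ι : Type*} {x : ι → ℝ × ℝ} {r b : ℝ × ℝ} {t : ℝ}

lemma finite_preimage_singleton (hx : ∀ R : ℝ, {i | ‖x i‖ ≤ R}.Finite) (y : ℝ × ℝ) :
    (x ⁻¹' {y}).Finite :=
  finite_preimage_of_isBounded hx isBounded_singleton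

lemma translateMultiplicity_pos (hx : ∀ R : ℝ, {i | ‖x i‖ ≤ R}.Finite) {y : ℝ × ℝ} :
    0 < translateMultiplicity x y ↔ y ∈ range x :=
  ncard_pos (finite_preimage_singleton hx y)

lemma mem_range_add_iff (hx : ∀ R : ℝ, {i | ‖x i‖ ≤ R}.Finite)
    (h : Function.Periodic (translateMultiplicity x) b) (y : ℝ × ℝ) :
    y + b ∈ range x ↔ y ∈ range x := by
  rw [← translateMultiplicity_pos hx, ← translateMultiplicity_pos hx, h]

lemma finite_setOf_sub_smul_mem_range (hx : ∀ R : ℝ, {i | ‖x i‖ ≤ R}.Finite) (hr : r ≠ 0)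
    (p : ℝ × ℝ) (t : ℝ) : {s : ℝ | s ∈ Ico 0 t ∧ p - s • r ∈ range x}.Finite := by
  have hinj : Function.Injective fun s : ℝ => p - s • r :=
    sub_right_injective.comp (smul_left_injective ℝ hr)
  refine (((finite_setOf_sub_mem_linePart hx r p t).image x).preimage hinj.injOn).subset ?_
  rintro s ⟨hs, i, hi⟩
  exact ⟨i, ⟨s, hs, by rw [hi]; module⟩, hi⟩

lemma segCount_eq_sum_translateMultiplicity (hx : ∀ R : ℝ, {i | ‖x i‖ ≤ R}.Finite) (hr : r ≠ 0)
    {p : ℝ × ℝ} {S : Finset ℝ} (hS : ∀ s ∈ S, s ∈ Ico 0 t)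
    (hp : ∀ s ∈ Ico 0 t, p - s • r ∈ range x → s ∈ S) :
    segCount x r p t = ∑ s ∈ S, translateMultiplicity x (p - s • r) := by
  have hset : {i | p - x i ∈ linePart 0 r (Ico 0 t)} = ⋃ s ∈ S, x ⁻¹' {p - s • r} := by
    ext i
    have hiff (s : ℝ) : s • r = p - x i ↔ x i = p - s • r := by
      rw [eq_comm, sub_eq_iff_eq_add, eq_sub_iff_add_eq', eq_comm]
    simp only [linePart, zero_add, mem_image, mem_ofPred_eq, mem_iUnion, mem_preimage,
      mem_singleton_iff, exists_prop, hiff]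
    exact ⟨fun ⟨s, hs, h⟩ => ⟨s, hp s hs ⟨i, h⟩, h⟩, fun ⟨s, hs, h⟩ => ⟨s, hS s hs, h⟩⟩
  have hdisj : (S : Set ℝ).PairwiseDisjoint fun s => x ⁻¹' {p - s • r} := fun s _ s' _ hne =>
    Disjoint.preimage _ <| disjoint_singleton.2 fun h =>
      hne (smul_left_injective ℝ hr (sub_right_injective h))
  rw [segCount, hset]
  exact (S.finite_toSet.ncard_biUnion (fun s _ => finite_preimage_singleton hx _) hdisj).trans
    (finsum_mem_coe_finset _ S)

lemma eventually_segCount_eq (hx : ∀ R : ℝ, {i | ‖x i‖ ≤ R}.Finite) (hr : r ≠ 0) (p : ℝ × ℝ) :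
    ∀ᶠ δ : ℝ in 𝓝[>] 0, segCount x r p δ = translateMultiplicity x p := by
  have hne : ∀ᶠ δ : ℝ in 𝓝[>] 0, ∀ s ∈ {s : ℝ | s ∈ Ico 0 1 ∧ p - s • r ∈ range x},
      s < δ → s = 0 := by
    rw [Filter.eventually_all_finite (finite_setOf_sub_smul_mem_range hx hr p 1)]
    rintro s ⟨hs, -⟩
    rcases hs.1.eq_or_lt with rfl | hs0
    · simp
    · filter_upwards [Ioo_mem_nhdsGT hs0] with δ hδ hsδ
      exact absurd hδ.2 hsδ.not_gt
  filter_upwards [hne, Ioo_mem_nhdsGT one_pos] with δ hδ h01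
  rw [segCount_eq_sum_translateMultiplicity hx hr (S := {0}) (by simp [h01.1])
    fun s hs hp => by simpa using hδ s ⟨⟨hs.1, hs.2.trans h01.2⟩, hp⟩ hs.2]
  simp

lemma translateMultiplicity_add_eq_of_segCount_eq (hx : ∀ R : ℝ, {i | ‖x i‖ ≤ R}.Finite)
    (hr : r ≠ 0) (h : ∀ p, segCount x r p 1 = segCount x r (p + b) 1) (p : ℝ × ℝ) :
    translateMultiplicity x p + translateMultiplicity x (p + b - r) =
      translateMultiplicity x (p - r) + translateMultiplicity x (p + b) := by
  obtain ⟨δ, ⟨⟨⟨⟨hp, hpr⟩, hb⟩, hbr⟩, hδ : 0 < δ⟩⟩ :=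
    ((((eventually_segCount_eq hx hr p).and (eventually_segCount_eq hx hr (p - r))).and
      (eventually_segCount_eq hx hr (p + b))).and
      (eventually_segCount_eq hx hr (p + b - r))).and self_mem_nhdsWithin |>.exists
  have hsplit (q : ℝ × ℝ) : segCount x r q δ + segCount x r (q - δ • r) 1 =
      segCount x r q 1 + segCount x r (q - r) δ := by
    have hone := segCount_add hx hr zero_le_one hδ.le q
    rw [one_smul] at hone
    rw [← segCount_add hx hr hδ.le zero_le_one, ← hone, add_comm]
  have h₁ := h p
  have h₂ := h (p - δ • r)
  rw [sub_add_eq_add_sub] at h₂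
  have h₃ := hsplit p
  have h₄ := hsplit (p + b)
  omega

lemma periodic_translateMultiplicity_sub (hx : ∀ R : ℝ, {i | ‖x i‖ ≤ R}.Finite) (hr : r ≠ 0)
    (h : ∀ p, segCount x r p 1 = segCount x r (p + b) 1) :
    Function.Periodic
      (fun p => (translateMultiplicity x (p + b) : ℤ) - translateMultiplicity x p) r := fun p => by
  have hp := translateMultiplicity_add_eq_of_segCount_eq hx hr h (p + r)
  rw [add_sub_cancel_right, add_right_comm, add_sub_cancel_right] at hp
  dsimp only
  rw [add_right_comm]
  omega

lemma exists_sum_translateMultiplicity_sub_eq_zero (hx : ∀ R : ℝ, {i | ‖x i‖ ≤ R}.Finite)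
    (hr : r ≠ 0) (h : ∀ p, segCount x r p 1 = segCount x r (p + b) 1) (p : ℝ × ℝ) :
    ∃ S : Finset ℝ, 0 ∈ S ∧ ∑ s ∈ S, ((translateMultiplicity x (p - s • r + b) : ℤ) -
      translateMultiplicity x (p - s • r)) = 0 := by
  classical
  have hfin (q : ℝ × ℝ) := finite_setOf_sub_smul_mem_range hx hr q 1
  set S : Finset ℝ := insert 0 ((hfin p).toFinset ∪ (hfin (p + b)).toFinset) with hS
  have hSIco : ∀ s ∈ S, s ∈ Ico (0 : ℝ) 1 := by
    simp only [hS, Finset.mem_insert, Finset.mem_union, Finite.mem_toFinset]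
    rintro s (rfl | hs | hs)
    exacts [⟨le_rfl, one_pos⟩, hs.1, hs.1]
  refine ⟨S, Finset.mem_insert_self .., ?_⟩
  have hp := h p
  rw [segCount_eq_sum_translateMultiplicity hx hr hSIco fun s hs hi => ?_,
    segCount_eq_sum_translateMultiplicity hx hr hSIco fun s hs hi => ?_] at hp
  · simp only [sub_add_eq_add_sub, Finset.sum_sub_distrib, sub_eq_zero]
    exact_mod_cast hp.symm
  · exact Finset.mem_insert_of_mem (Finset.mem_union_right _ ((hfin _).mem_toFinset.2 ⟨hs, hi⟩))
  · exact Finset.mem_insert_of_mem (Finset.mem_union_left _ ((hfin p).mem_toFinset.2 ⟨hs, hi⟩))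

/-- The excess of the multiplicity at `p + b` over that at `p` is periodic with period `r` and sums
to zero over a period, so it vanishes unless it takes both signs. -/
lemma periodic_or_hasStaggeredRows (hx : ∀ R : ℝ, {i | ‖x i‖ ≤ R}.Finite) (hr : r ≠ 0)
    (h : ∀ p, segCount x r p 1 = segCount x r (p + b) 1) :
    Function.Periodic (translateMultiplicity x) b ∨ HasStaggeredRows x r b := by
  set f : ℝ × ℝ → ℤ := fun p =>
    (translateMultiplicity x (p + b) : ℤ) - translateMultiplicity x p with hf
  have hper (p : ℝ × ℝ) (n : ℤ) : f (p + (n : ℝ) • r) = f p := by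
    rw [Int.cast_smul_eq_zsmul]
    exact (periodic_translateMultiplicity_sub hx hr h).zsmul n p
  by_contra! hcon
  obtain ⟨hnot, hrow⟩ := hcon
  obtain ⟨p, hp⟩ : ∃ p, f p ≠ 0 := by
    by_contra! hzero
    exact hnot fun p => by have := hzero p; simp only [hf] at this; omega
  obtain ⟨S, h0, hsum⟩ := exists_sum_translateMultiplicity_sub_eq_zero hx hr h p
  obtain ⟨s₁, -, h₁ : 0 < f (p - s₁ • r)⟩ := Finset.exists_pos_of_sum_zero_of_exists_nonzero _ hsum
    ⟨0, h0, by simpa using hp⟩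
  obtain ⟨s₂, -, h₂ : 0 < -f (p - s₂ • r)⟩ := Finset.exists_pos_of_sum_zero_of_exists_nonzero
    (fun s => -f (p - s • r)) (by rw [Finset.sum_neg_distrib, neg_eq_zero]; exact hsum)
    ⟨0, h0, by simpa using hp⟩
  have h₁' (n : ℤ) : f (p - s₂ • r + (Int.fract (s₂ - s₁) + n) • r) = f (p - s₁ • r) := by
    rw [← hper (p - s₁ • r) (n - ⌊s₂ - s₁⌋), Int.fract]
    push_cast
    congr 1
    module
  refine hrow ⟨p - s₂ • r, Int.fract (s₂ - s₁),
    ⟨(Int.fract_nonneg _).lt_of_ne fun h0 => ?_, Int.fract_lt_one _⟩, fun n => ⟨?_, ?_⟩⟩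
  · have := h₁' 0
    rw [← h0, Int.cast_zero, add_zero, zero_smul, add_zero] at this
    omega
  · rw [← translateMultiplicity_pos hx]
    have := hper (p - s₂ • r) n
    simp only [hf] at this h₂
    omega
  · rw [← translateMultiplicity_pos hx]
    have := h₁' n
    simp only [hf] at this h₁
    omega

end TranslateMultiplicity

/-- The translation vector that carries the edge `e 0` of a zonogon with `2 * m` edges to the
opposite edge: the sum of the edges strictly between the two. -/
def oppositeShift (e : ℕ → ℝ × ℝ) (m : ℕ) : ℝ × ℝ := ∑ j ∈ Finset.range (m - 1), e (j + 1)

section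

variable {D : Set (ℝ × ℝ)} {m : ℕ} {V : ℝ × ℝ} {e : ℕ → ℝ × ℝ}

lemma CyclicZonogon.vertex_add_self (P : CyclicZonogon D m V e) (j : ℕ) :
    vertex V e (j + m) = V + vertex V e m - vertex V e j := by
  induction j with
  | zero => simp [vertex_zero]
  | succ j ih =>
    rw [add_right_comm, vertex_succ, ih, P.antiperiodic, vertex_succ]
    abel

lemma CyclicZonogon.vertex_succ_eq_add_oppositeShift (P : CyclicZonogon D m V e) :
    vertex V e (m + 1) = V + oppositeShift e m := by
  obtain ⟨n, rfl⟩ : ∃ n, m = n + 1 := ⟨m - 1, by have := P.two_le; omega⟩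
  have hanti := P.antiperiodic 0
  rw [zero_add] at hanti
  rw [vertex_succ, vertex, Finset.sum_range_succ', hanti, oppositeShift, Nat.add_sub_cancel]
  abel

lemma CyclicZonogon.sub_mem (P : CyclicZonogon D m V e) {y : ℝ × ℝ} (hy : y ∈ D) :
    V + vertex V e m - y ∈ D := by
  rw [P.eq_zonotope] at hy ⊢
  obtain ⟨t, ht, rfl⟩ := hy
  refine ⟨1 - t, fun j hj => ?_, ?_⟩
  · exact ⟨sub_nonneg.2 (ht j hj).2, sub_le_self _ (ht j hj).1⟩
  · simp only [vertex, Pi.sub_apply, Pi.one_apply, sub_smul, one_smul, Finset.sum_sub_distrib]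
    abel

lemma CyclicZonogon.sub_mem_interior (P : CyclicZonogon D m V e) {y : ℝ × ℝ}
    (hy : y ∈ interior D) : V + vertex V e m - y ∈ interior D := by
  refine mem_interior.2 ⟨(V + vertex V e m - ·) ⁻¹' interior D, fun z hz => ?_,
    isOpen_interior.preimage (by fun_prop), by simpa using hy⟩
  simpa using P.sub_mem (interior_subset hz)

variable {ι : Type} {x : ι → ℝ × ℝ} {k : ℕ}

namespace IsKFoldTranslativeTiling

lemma segCount_edge_eq (hT : IsKFoldTranslativeTiling D x k) (P : CyclicZonogon D m V e)
    (i : ℕ) (p : ℝ × ℝ) : segCount x (e i) p 1 =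
      segCount x (e i) (p + (vertex V e (i + m + 1) - vertex V e i)) 1 := by
  have F := P.isFace (i + m)
  rw [P.antiperiodic, neg_neg] at F
  rw [hT.segCount_eq_of_isFace P.isConvexDomain (P.edge_ne_zero i) F (P.isFace i), vertex_succ i]
  congr 2
  module

lemma periodic_oppositeShift_or_hasStaggeredRows (hT : IsKFoldTranslativeTiling D x k)
    (P : CyclicZonogon D m V e) :
    Function.Periodic (translateMultiplicity x) (oppositeShift e m) ∨
      HasStaggeredRows x (e 0) (oppositeShift e m) :=
  periodic_or_hasStaggeredRows hT.1 (P.edge_ne_zero 0) fun p => by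
    rw [hT.segCount_edge_eq P, zero_add, vertex_zero, P.vertex_succ_eq_add_oppositeShift,
      add_sub_cancel_left]

lemma translateMultiplicity_vertex_pair (hT : IsKFoldTranslativeTiling D x k)
    (P : CyclicZonogon D m V e) (z : ℝ × ℝ) (i : ℕ) :
    translateMultiplicity x (z - vertex V e i) + translateMultiplicity x (z - vertex V e (i + m)) =
      translateMultiplicity x (z - V) + translateMultiplicity x (z - vertex V e m) := by
  induction i with
  | zero => rw [vertex_zero, zero_add]
  | succ i ih =>
    have h := translateMultiplicity_add_eq_of_segCount_eq hT.1 (P.edge_ne_zero i)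
      (hT.segCount_edge_eq P i) (z - vertex V e (i + m + 1))
    rw [sub_add_sub_cancel, sub_sub, sub_sub, ← vertex_succ, vertex_succ (i + m), P.antiperiodic,
      neg_add_cancel_right, ← P.antiperiodic, ← vertex_succ] at h
    rw [add_right_comm, ← ih]
    omega

lemma vertex_mem_range_or (hT : IsKFoldTranslativeTiling D x k) (P : CyclicZonogon D m V e)
    {z : ℝ × ℝ} {i : ℕ} (h : z - vertex V e i ∈ range x ∨ z - vertex V e (i + m) ∈ range x)
    (j : ℕ) : z - vertex V e j ∈ range x ∨ z - vertex V e (j + m) ∈ range x := by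
  simp only [← translateMultiplicity_pos hT.1] at *
  have hi := hT.translateMultiplicity_vertex_pair P z i
  have hj := hT.translateMultiplicity_vertex_pair P z j
  omega

end IsKFoldTranslativeTiling

end

/-! ### Averaging along a line -/

/-- The indices of the translates that do not contain `z` in their interior, but whose interior is
entered when moving from `z` in direction `d`. -/
def enteringIndices {ι : Type*} (D : Set (ℝ × ℝ)) (x : ι → ℝ × ℝ) (d z : ℝ × ℝ) : Set ι :=
  {i | z - x i ∉ interior D ∧ ∀ᶠ δ : ℝ in 𝓝[>] 0, z - x i + δ • d ∈ interior D}

section Counting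

open MeasureTheory

lemma sum_mul_le_of_forall_sum_le {α : Type*} {Q : Finset α} {a w : α → ℝ} {σ L R M : ℝ}
    (hσ : 0 ≤ σ) (hLR : L ≤ R) (hLa : ∀ q ∈ Q, L ≤ a q) (haR : ∀ q ∈ Q, a q + σ ≤ R)
    (h : ∀ t, ∑ q ∈ Q with t ∈ Ioo (a q) (a q + σ), w q ≤ M) :
    (∑ q ∈ Q, w q) * σ ≤ M * (R - L) := by
  have hint (q : α) : Integrable ((Ioo (a q) (a q + σ)).indicator fun _ => w q)
      (volume.restrict (Icc L R)) := (integrable_const _).indicator measurableSet_Ioo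
  calc (∑ q ∈ Q, w q) * σ
      = ∑ q ∈ Q, ∫ t in Icc L R, (Ioo (a q) (a q + σ)).indicator (fun _ => w q) t := by
        rw [Finset.sum_mul]
        refine Finset.sum_congr rfl fun q hq => ?_
        have hsub : Ioo (a q) (a q + σ) ⊆ Icc L R := fun t ht =>
          ⟨(hLa q hq).trans ht.1.le, ht.2.le.trans (haR q hq)⟩
        rw [integral_indicator_const _ measurableSet_Ioo, measureReal_restrict_apply
          measurableSet_Ioo, inter_eq_left.2 hsub, Real.volume_real_Ioo_of_le (by linarith),
          add_sub_cancel_left, smul_eq_mul, mul_comm]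
    _ = ∫ t in Icc L R, ∑ q ∈ Q, (Ioo (a q) (a q + σ)).indicator (fun _ => w q) t :=
        (integral_finsetSum _ fun q _ => hint q).symm
    _ ≤ ∫ _ in Icc L R, M := by
        refine integral_mono (integrable_finsetSum _ fun q _ => hint q) (integrable_const _) ?_
        intro t
        simpa only [indicator_apply, ← Finset.sum_filter] using h t
    _ = M * (R - L) := by
        rw [setIntegral_const, Real.volume_real_Icc_of_le hLR, smul_eq_mul, mul_comm]

lemma le_of_forall_nat_mul_le {a b c : ℝ} (h : ∀ N : ℕ, N * a ≤ N * b + c) : a ≤ b := by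
  by_contra! hab
  obtain ⟨N, hN⟩ := exists_nat_gt (c / (a - b))
  rw [div_lt_iff₀ (sub_pos.2 hab), mul_sub] at hN
  linarith [h N]

lemma sum_le_of_card_le_two {α : Type*} {s : Finset α} {f : α → ℕ} {M : ℕ}
    (hs : s.card ≤ 2) (h₁ : ∀ a ∈ s, f a ≤ M)
    (h₂ : ∀ a ∈ s, ∀ b ∈ s, a ≠ b → f a + f b ≤ M) : ∑ a ∈ s, f a ≤ M := by
  classical
  obtain h | h | h : s.card = 0 ∨ s.card = 1 ∨ s.card = 2 := by omega
  · simp [Finset.card_eq_zero.1 h]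
  · obtain ⟨a, rfl⟩ := Finset.card_eq_one.1 h
    simpa using h₁
  · obtain ⟨a, b, hab, rfl⟩ := Finset.card_eq_two.1 h
    rw [Finset.sum_pair hab]
    exact h₂ a (by simp) b (by simp) hab

end Counting

namespace IsKFoldTranslativeTiling

variable {ι : Type} {D : Set (ℝ × ℝ)} {x : ι → ℝ × ℝ} {k : ℕ} {d z : ℝ × ℝ}

lemma finite_enteringIndices (hT : IsKFoldTranslativeTiling D x k) (hD : IsCompact D) :
    (enteringIndices D x d z).Finite :=
  hT.finite_of_eventually_mem hD fun _ hi => hi.2.mono fun _ hδ => interior_subset hδ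

lemma card_add_ncard_enteringIndices_le (hT : IsKFoldTranslativeTiling D x k) (hD : IsCompact D)
    {A : Finset ι} (hA : ∀ i ∈ A, z - x i ∈ interior D) :
    A.card + (enteringIndices D x d z).ncard ≤ k := by
  rw [← ncard_coe_finset, ← ncard_union_eq (disjoint_left.2 fun i hi hi' => hi'.1 (hA i hi))
    A.finite_toSet (hT.finite_enteringIndices hD)]
  refine hT.ncard_le_of_eventually_mem_interior hD (d := d) (z := z) ?_
  rintro i (hi | hi)
  · exact eventually_add_smul_mem_interior (hA i hi) d
  · exact hi.2

/-- Integrates `card_add_ncard_enteringIndices_le` along the line `p + t • r`. -/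
lemma sum_mul_le_of_forall_mem_interior (hT : IsKFoldTranslativeTiling D x k) (hD : IsCompact D)
    {α : Type*} {Q : Finset α} {F : α → ι} {a : α → ℝ} {w : α → ℕ} {s M : ℕ} {p r : ℝ × ℝ}
    {σ L R : ℝ} (hs : ∀ t : ℝ, s ≤ (enteringIndices D x d (p + t • r)).ncard)
    (hσ : 0 ≤ σ) (hLR : L ≤ R) (hLa : ∀ q ∈ Q, L ≤ a q) (haR : ∀ q ∈ Q, a q + σ ≤ R)
    (hint : ∀ q ∈ Q, ∀ t ∈ Ioo (a q) (a q + σ), p + t • r - x (F q) ∈ interior D)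
    (hw : ∀ i, ∀ Q' ⊆ Q, (∀ q ∈ Q', F q = i) → ∑ q ∈ Q', w q ≤ M) :
    (∑ q ∈ Q, (w q : ℝ)) * σ ≤ M * (k - s) * (R - L) := by
  classical
  refine sum_mul_le_of_forall_sum_le hσ hLR hLa haR fun t => ?_
  set Qt := {q ∈ Q | t ∈ Ioo (a q) (a q + σ)} with hQt
  have hcard : (Qt.image F).card + s ≤ k := by
    refine (Nat.add_le_add_left (hs t) _).trans (hT.card_add_ncard_enteringIndices_le hD ?_)
    simp only [hQt, Finset.mem_image, Finset.mem_filter]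
    rintro _ ⟨q, ⟨hq, ht⟩, rfl⟩
    exact hint q hq t ht
  have hsum : ∑ q ∈ Qt, w q ≤ M * (Qt.image F).card := by
    rw [← Finset.sum_fiberwise_of_maps_to (g := F) fun q hq => Finset.mem_image_of_mem F hq,
      mul_comm, ← smul_eq_mul]
    refine Finset.sum_le_card_nsmul _ _ _ fun i _ => hw i _ ?_ fun q hq =>
      (Finset.mem_filter.1 hq).2
    exact (Finset.filter_subset _ _).trans (Finset.filter_subset _ _)
  calc ∑ q ∈ Qt, (w q : ℝ) ≤ M * (Qt.image F).card := by exact_mod_cast hsum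
    _ ≤ M * (k - s) := by
      gcongr
      rw [le_sub_iff_add_le]
      exact_mod_cast hcard

end IsKFoldTranslativeTiling

section

variable {D : Set (ℝ × ℝ)} {m : ℕ} {V : ℝ × ℝ} {e : ℕ → ℝ × ℝ}

lemma CyclicZonogon.strictMonoOn_cross₂_vertex (P : CyclicZonogon D m V e) :
    StrictMonoOn (fun j => cross₂ (e 0) (vertex V e j)) (Icc 1 m) := by
  refine strictMonoOn_of_lt_succ ordConnected_Icc fun j _ hj hj' => ?_
  rw [Nat.succ_eq_succ, Nat.succ_eq_add_one] at hj' ⊢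
  rw [vertex_succ, cross₂_add_right, lt_add_iff_pos_right]
  exact P.cross₂_pos 0 j hj.1 (by have := hj'.2; omega)

lemma CyclicZonogon.eq_of_smul_sub_vertex_eq (P : CyclicZonogon D m V e) {i j : ℕ} {s t : ℝ}
    (hi : i ∈ Icc 1 m) (hj : j ∈ Icc 1 m)
    (h : s • e 0 - vertex V e i = t • e 0 - vertex V e j) : s = t ∧ i = j := by
  have hij : i = j := P.strictMonoOn_cross₂_vertex.injOn hi hj <| by
    simpa using congrArg (cross₂ (e 0)) h
  subst hij
  exact ⟨smul_left_injective ℝ (P.edge_ne_zero 0) (sub_left_injective h), rfl⟩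

/-- A point `y` arises at most once from a vertex with index in `Icc 1 m` and at most once from an
opposite vertex, because the heights of the vertices above the edge `e 0` are distinct. -/
lemma CyclicZonogon.sum_le_two_of_forall_eq (P : CyclicZonogon D m V e) {y : ℝ × ℝ} {c : ℕ → ℝ}
    {S : Finset ℕ} {w : ℕ → ℕ} {Q : Finset (ℕ × ℕ)} {ε : ℕ × ℕ → Bool}
    (hc : Function.Injective c) (hS : ∀ j ∈ S, j ∈ Icc 1 m) (hw : ∀ j ∈ S, w j ≤ 2)
    (hw₂ : ∀ j ∈ S, ∀ j' ∈ S, cross₂ (e 0) (vertex V e j) + cross₂ (e 0) (vertex V e j') =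
      cross₂ (e 0) (V + vertex V e m) → w j + w j' ≤ 2) (hQ : ∀ q ∈ Q, q.2 ∈ S)
    (hy : ∀ q ∈ Q, y = c q.1 • e 0 -
      bif ε q then vertex V e q.2 else V + vertex V e m - vertex V e q.2) :
    ∑ q ∈ Q, w q.2 ≤ 2 := by
  have hinj : InjOn ε Q := fun q hq q' hq' h => by
    have heq := (hy q hq).symm.trans (hy q' hq')
    suffices c q.1 = c q'.1 ∧ q.2 = q'.2 from Prod.ext (hc this.1) this.2
    have hj := hS _ (hQ q hq)
    have hj' := hS _ (hQ q' hq')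
    rw [← h] at heq
    cases hε : ε q <;> simp only [hε, cond_true, cond_false] at heq
    · have hneg : (-c q.1) • e 0 - vertex V e q.2 = (-c q'.1) • e 0 - vertex V e q'.2 := by
        linear_combination (norm := module) -heq
      exact (P.eq_of_smul_sub_vertex_eq hj hj' hneg).imp_left neg_injective.eq_iff.1
    · exact P.eq_of_smul_sub_vertex_eq hj hj' heq
  have hopp {q q' : ℕ × ℕ} (hq : q ∈ Q) (hq' : q' ∈ Q) (h : ε q = true) (h' : ε q' = false) :
      w q.2 + w q'.2 ≤ 2 := hw₂ _ (hQ q hq) _ (hQ q' hq') <| by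
    have heq := congrArg (cross₂ (e 0)) ((hy q hq).symm.trans (hy q' hq'))
    simp only [h, h', cond_true, cond_false, cross₂_sub_right, cross₂_add_right,
      cross₂_smul_right, cross₂_self] at heq ⊢
    linarith
  refine sum_le_of_card_le_two ?_ (fun q hq => hw _ (hQ q hq)) fun q hq q' hq' hne => ?_
  · simpa using Finset.card_le_card_of_injOn ε (fun q _ => Finset.mem_univ (ε q)) hinj
  · cases h : ε q <;> cases h' : ε q'
    · exact absurd (hinj hq hq' (h.trans h'.symm)) hne
    · rw [add_comm]; exact hopp hq' hq h' h
    · exact hopp hq hq' h h'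
    · exact absurd (hinj hq hq' (h.trans h'.symm)) hne

namespace IsKFoldTranslativeTiling

variable {ι : Type} {x : ι → ℝ × ℝ} {k : ℕ}

lemma sum_mul_le_of_vertices (hT : IsKFoldTranslativeTiling D x k) (P : CyclicZonogon D m V e)
    {p d : ℝ × ℝ} {c : ℕ → ℝ} {s : ℕ} {S : Finset ℕ} {w : ℕ → ℕ} {σ : ℝ}
    (hc : Function.Injective c) (hcn : ∀ n : ℕ, c n ∈ Icc 0 (n / 2 + 1 : ℝ))
    (hcx : ∀ n, ∃ i, p + c n • e 0 - vertex V e i ∈ range x)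
    (hs : ∀ t : ℝ, s ≤ (enteringIndices D x d (p + t • e 0)).ncard)
    (hS : ∀ j ∈ S, j ∈ Icc 1 m) (hσ : 0 ≤ σ)
    (hint : ∀ j ∈ S, ∀ t ∈ Ioo 0 σ, vertex V e j - t • e 0 ∈ interior D)
    (hw : ∀ j ∈ S, w j ≤ 2)
    (hw₂ : ∀ j ∈ S, ∀ j' ∈ S, cross₂ (e 0) (vertex V e j) + cross₂ (e 0) (vertex V e j') =
      cross₂ (e 0) (V + vertex V e m) → w j + w j' ≤ 2) :
    (∑ j ∈ S, (w j : ℝ)) * σ ≤ k - s := by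
  have hF (q : ℕ × ℕ) : ∃ (i : ι) (ε : Bool), x i = p + c q.1 • e 0 -
      bif ε then vertex V e q.2 else V + vertex V e m - vertex V e q.2 := by
    obtain ⟨i₀, hi₀⟩ := hcx q.1
    rw [← P.vertex_add_self]
    rcases hT.vertex_mem_range_or P (Or.inl hi₀) q.2 with ⟨i, hi⟩ | ⟨i, hi⟩
    exacts [⟨i, true, hi⟩, ⟨i, false, hi⟩]
  choose F ε hF using hF
  refine le_of_forall_nat_mul_le (c := (k - s) * (2 + 4 * σ)) fun N => ?_
  have hQ := hT.sum_mul_le_of_forall_mem_interior P.isConvexDomain.isCompact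
    (Q := Finset.range N ×ˢ S) (F := F) (w := fun q => w q.2) (M := 2)
    (a := fun q => if ε q then c q.1 - σ else c q.1) (L := -σ) (R := N / 2 + 1 + σ)
    hs hσ (by linarith [(Nat.cast_nonneg N : (0 : ℝ) ≤ N)]) ?_ ?_ ?_ ?_
  · simp only [Finset.sum_product, Finset.sum_const, Finset.card_range, nsmul_eq_mul] at hQ
    push_cast at hQ
    linarith
  · intro q _
    have := (hcn q.1).1
    split_ifs <;> linarith
  · intro q hq
    have := (hcn q.1).2
    have : (q.1 : ℝ) ≤ N := by
      exact_mod_cast (Finset.mem_range.1 (Finset.mem_product.1 hq).1).le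
    split_ifs <;> linarith
  · intro q hq t ht
    have hj := (Finset.mem_product.1 hq).2
    rw [hF]
    cases hε : ε q <;> simp only [hε, if_true, Bool.false_eq_true, if_false, cond_true,
      cond_false] at ht ⊢
    · convert P.sub_mem_interior (hint _ hj (t - c q.1) ⟨by linarith [ht.1], by linarith [ht.2]⟩)
        using 1
      module
    · convert hint _ hj (c q.1 - t) ⟨by linarith [ht.2], by linarith [ht.1]⟩ using 1
      module
  · intro i Q' hQ' hi
    refine P.sum_le_two_of_forall_eq (y := x i - p) (ε := ε) hc hS hw hw₂
      (fun q hq => (Finset.mem_product.1 (hQ' hq)).2) fun q hq => ?_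
    rw [← hi q hq, hF]
    abel

end IsKFoldTranslativeTiling

end

section

variable {D : Set (ℝ × ℝ)} {m : ℕ} {V : ℝ × ℝ} {e : ℕ → ℝ × ℝ} {ι : Type} {x : ι → ℝ × ℝ}

lemma exists_injective_forall_mem_Icc {l : ℝ} (hl : l ∈ Ioo 0 1) :
    ∃ c : ℕ → ℝ, Function.Injective c ∧ (∀ n : ℕ, c n ∈ Icc 0 (n / 2 + 1 : ℝ)) ∧
      ∀ n, ∃ a : ℤ, c n = a ∨ c n = l + a := by
  have hfloor (n : ℕ) : ⌊((n / 2 : ℕ) : ℝ) + (n % 2 : ℕ) * l⌋ = (n / 2 : ℕ) := by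
    rw [Int.floor_eq_iff, Int.cast_natCast]
    rcases n.mod_two_eq_zero_or_one with h | h <;> simp [h, hl.1.le, hl.2]
  refine ⟨fun n => (n / 2 : ℕ) + (n % 2 : ℕ) * l, fun n n' h => ?_, fun n => ⟨?_, ?_⟩, fun n => ?_⟩
  · have hdiv : n / 2 = n' / 2 := by
      have := congrArg Int.floor h
      simpa only [hfloor, Nat.cast_inj] using this
    have hmod : n % 2 = n' % 2 := by
      simpa [hdiv, hl.1.ne'] using h
    omega
  · have := hl.1
    positivity
  · have hle : ((n / 2 : ℕ) : ℝ) ≤ n / 2 := Nat.cast_div_le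
    rcases n.mod_two_eq_zero_or_one with h | h <;> simp only [h, Nat.cast_zero, Nat.cast_one] <;>
      linarith [hl.2]
  · refine ⟨(n / 2 : ℕ), ?_⟩
    rw [Int.cast_natCast]
    rcases n.mod_two_eq_zero_or_one with h | h <;> simp [h, add_comm]

namespace CyclicZonogon

lemma vertex_mem (P : CyclicZonogon D m V e) (i : ℕ) : vertex V e i ∈ D :=
  (P.vertex_mem_extremePoints i).1

lemma add_sum_mem (P : CyclicZonogon D m V e) {A : Finset ℕ} (hA : A ⊆ Finset.range m) :
    V + ∑ j ∈ A, e j ∈ D := by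
  rw [P.eq_zonotope]
  refine ⟨indicator A 1, fun j _ => ?_, ?_⟩
  · by_cases h : j ∈ A <;> simp [h]
  · simp [indicator_apply, ite_smul, Finset.sum_ite_mem, Finset.inter_eq_right.2 hA]

lemma add_sum_Ico_mem_interior (P : CyclicZonogon D m V e) {i j : ℕ} (hi : 0 < i) (hij : i < j)
    (hjm : j < m) : V + ∑ l ∈ Finset.Ico i j, e l ∈ interior D := by
  obtain ⟨i, rfl⟩ := Nat.exists_eq_add_one.2 hi
  have hne : (Finset.Ico (i + 1) j).Nonempty := Finset.nonempty_Ico.2 hij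
  have hpos {l : ℕ} (hl : l ∈ Finset.Ico (i + 1) j) :
      0 < cross₂ (e i) (e l) ∧ 0 < cross₂ (e l) (e j) := by
    rw [Finset.mem_Ico] at hl
    exact ⟨P.cross₂_pos _ _ (by omega) (by omega), P.cross₂_pos _ _ (by omega) (by omega)⟩
  have hmem {a b : ℕ} (hb : b ≤ m) : V + ∑ l ∈ Finset.Ico a b, e l ∈ D :=
    P.add_sum_mem fun l hl => Finset.mem_range.2 ((Finset.mem_Ico.1 hl).2.trans_le hb)
  refine add_mem_interior_of_cross₂_pos P.isConvexDomain.convex P.nonempty_interior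
    (a := e i) (c := e j) ?_ ?_ ?_ ?_ ?_ (P.cross₂_pos _ _ (by omega) (by omega))
  · simpa using P.add_sum_mem (Finset.empty_subset _)
  · rw [add_assoc, ← Finset.sum_eq_sum_Ico_succ_bot (by omega)]
    exact hmem hjm.le
  · rw [add_assoc, ← Finset.sum_Ico_succ_top (by omega)]
    exact hmem hjm
  · rw [cross₂_sum_right]
    exact Finset.sum_pos (fun l hl => (hpos hl).1) hne
  · rw [cross₂_comm, cross₂_sum_right, ← Finset.sum_neg_distrib]
    exact Finset.sum_pos (fun l hl => by rw [← cross₂_comm]; exact (hpos hl).2) hne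

lemma vertex_sub_edge_mem_interior (P : CyclicZonogon D m V e) {j : ℕ} (hj : 2 ≤ j) (hjm : j < m) :
    vertex V e j - e 0 ∈ interior D := by
  have h := P.add_sum_Ico_mem_interior one_pos hj hjm
  rwa [← add_sub_cancel_left (e 0) (∑ l ∈ Finset.Ico 1 j, e l), ← add_sub_assoc,
    ← Finset.sum_eq_sum_Ico_succ_bot (by omega), ← Finset.range_eq_Ico] at h

lemma vertex_sub_smul_mem_interior (P : CyclicZonogon D m V e) {j : ℕ} (hj : 2 ≤ j) (hjm : j < m)
    {L t : ℝ} (hL : vertex V e j - L • e 0 ∈ D) (ht : t ∈ Ioo 0 L) :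
    vertex V e j - t • e 0 ∈ interior D := by
  have hc := P.isConvexDomain.convex
  have h1 := P.vertex_sub_edge_mem_interior hj hjm
  rcases le_or_gt t 1 with h | h
  · convert hc.add_smul_sub_mem_interior (P.vertex_mem j) h1 ⟨ht.1, h⟩ using 1
    module
  · have hL1 : 0 < L - 1 := by linarith [ht.2]
    convert hc.add_smul_sub_mem_interior hL h1 (t := (L - t) / (L - 1))
      ⟨div_pos (by linarith [ht.2]) hL1, (div_le_one hL1).2 (by linarith)⟩ using 1
    have hdiv : (L - t) / (L - 1) * (L - 1) = L - t := div_mul_cancel₀ _ hL1.ne'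
    rw [show vertex V e j - e 0 - (vertex V e j - L • e 0) = (L - 1) • e 0 by module, smul_smul,
      hdiv]
    module

lemma exists_forall_vertex_sub_smul_mem_interior (P : CyclicZonogon D m V e) :
    ∃ L > (1 : ℝ), ∀ j, 2 ≤ j → j < m → ∀ t ∈ Ioo 0 L, vertex V e j - t • e 0 ∈ interior D := by
  have hnear : ∀ᶠ δ : ℝ in 𝓝[>] 0, ∀ j ∈ Finset.Ico 2 m,
      vertex V e j - e 0 + δ • -e 0 ∈ interior D := by
    rw [Finset.eventually_all]
    intro j hj
    rw [Finset.mem_Ico] at hj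
    exact eventually_add_smul_mem_interior (P.vertex_sub_edge_mem_interior hj.1 hj.2) _
  obtain ⟨δ, h, hδ : 0 < δ⟩ := (hnear.and self_mem_nhdsWithin).exists
  refine ⟨1 + δ, by linarith, fun j hj hjm t ht => P.vertex_sub_smul_mem_interior hj hjm ?_ ht⟩
  convert interior_subset (h j (Finset.mem_Ico.2 ⟨hj, hjm⟩)) using 1
  module

lemma vertex_add_smul_notMem_interior (P : CyclicZonogon D m V e) (u : ℝ) :
    vertex V e (m + 1) + u • e 0 ∉ interior D := fun h => by
  have F := P.isFace m
  rw [← zero_add m, P.antiperiodic, neg_neg, zero_add] at F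
  simpa using cross₂_lt_of_mem_interior (P.edge_ne_zero 0) F.cross₂_le h

lemma eventually_vertex_add_smul_add_smul_mem_interior (P : CyclicZonogon D m V e) {u : ℝ}
    (hu₀ : 0 ≤ u) (hu₁ : u < 1) :
    ∀ᶠ δ : ℝ in 𝓝[>] 0, vertex V e (m + 1) + u • e 0 + δ • (e 0 - e 1) ∈ interior D := by
  have h0 : vertex V e (m + 1) + e 0 ∈ D := by
    rw [vertex_succ, ← zero_add m, P.antiperiodic, neg_add_cancel_right]
    exact P.vertex_mem _
  have h1 : vertex V e (m + 1) + -e 1 ∈ D := by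
    rw [← P.antiperiodic, add_comm 1, ← vertex_succ]
    exact P.vertex_mem _
  filter_upwards [Ioo_mem_nhdsGT (show 0 < (1 - u) / 2 by linarith)] with δ hδ
  have hne : cross₂ (e 0) (-e 1) ≠ 0 := by
    rw [cross₂_neg_right]
    exact (neg_neg_of_pos (P.cross₂_pos 0 1 one_pos (by have := P.two_le; omega))).ne
  convert add_smul_add_smul_mem_interior P.isConvexDomain.convex P.nonempty_interior
    (P.vertex_mem (m + 1)) h0 h1 hne (s := u + δ) (t := δ) (by linarith [hδ.1]) hδ.1
    (by linarith [hδ.2]) using 1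
  module

lemma exists_mem_enteringIndices (P : CyclicZonogon D m V e) {y : ℝ × ℝ}
    (hy : ∀ n : ℤ, y + (n : ℝ) • e 0 ∈ range x) (t : ℝ) :
    ∃ i ∈ enteringIndices D x (e 0 - e 1) (y + vertex V e (m + 1) + t • e 0),
      x i = y + (⌊t⌋ : ℝ) • e 0 := by
  obtain ⟨i, hi⟩ := hy ⌊t⌋
  have hsub : y + vertex V e (m + 1) + t • e 0 - x i = vertex V e (m + 1) + Int.fract t • e 0 := by
    rw [hi, Int.fract]; module
  refine ⟨i, ⟨?_, ?_⟩, hi⟩ <;> rw [hsub]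
  · exact P.vertex_add_smul_notMem_interior _
  · exact P.eventually_vertex_add_smul_add_smul_mem_interior (Int.fract_nonneg t)
      (Int.fract_lt_one t)

end CyclicZonogon

variable {k : ℕ}

lemma IsKFoldTranslativeTiling.sum_mul_le_of_hasStaggeredRows
    (hT : IsKFoldTranslativeTiling D x k) (P : CyclicZonogon D m V e)
    (h : HasStaggeredRows x (e 0) (oppositeShift e m)) {d : ℝ × ℝ} {s : ℕ} {S : Finset ℕ}
    {w : ℕ → ℕ} {σ : ℝ}
    (hs : ∀ y, (∀ n : ℤ, y + (n : ℝ) • e 0 ∈ range x) →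
      ∀ t : ℝ, s ≤ (enteringIndices D x d (y + vertex V e (m + 1) + t • e 0)).ncard)
    (hS : ∀ j ∈ S, j ∈ Icc 1 m) (hσ : 0 ≤ σ)
    (hint : ∀ j ∈ S, ∀ t ∈ Ioo 0 σ, vertex V e j - t • e 0 ∈ interior D)
    (hw : ∀ j ∈ S, w j ≤ 2)
    (hw₂ : ∀ j ∈ S, ∀ j' ∈ S, cross₂ (e 0) (vertex V e j) + cross₂ (e 0) (vertex V e j') =
      cross₂ (e 0) (V + vertex V e m) → w j + w j' ≤ 2) :
    (∑ j ∈ S, (w j : ℝ)) * σ ≤ k - s := by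
  obtain ⟨y, l, hl, hrow⟩ := h
  obtain ⟨c, hc, hcn, hca⟩ := exists_injective_forall_mem_Icc hl
  refine hT.sum_mul_le_of_vertices P (p := y + vertex V e (m + 1)) hc hcn (fun n => ?_)
    (hs y fun n => (hrow n).1) hS hσ hint hw hw₂
  obtain ⟨a, ha | ha⟩ := hca n <;> rw [ha]
  · refine ⟨m + 1, ?_⟩
    rw [add_right_comm, add_sub_cancel_right]
    exact (hrow a).1
  · refine ⟨0, ?_⟩
    rw [P.vertex_succ_eq_add_oppositeShift, vertex_zero]
    convert (hrow a).2 using 1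
    abel

end

section

variable {ι : Type} {x : ι → ℝ × ℝ}

lemma HasStaggeredRows.neg {r b : ℝ × ℝ} (h : HasStaggeredRows x r b) :
    HasStaggeredRows x (-r) (-b) := by
  obtain ⟨y, l, hl, hrow⟩ := h
  refine ⟨y + l • r + b, l, hl, fun n => ⟨?_, ?_⟩⟩
  · convert (hrow (-n)).2 using 1
    push_cast
    module
  · convert (hrow (-n)).1 using 1
    push_cast
    module

variable {D : Set (ℝ × ℝ)} {k m : ℕ} {V : ℝ × ℝ} {e : ℕ → ℝ × ℝ}

namespace IsKFoldTranslativeTiling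

lemma one_le_ncard_enteringIndices (hT : IsKFoldTranslativeTiling D x k)
    (P : CyclicZonogon D m V e) {y : ℝ × ℝ} (hy : ∀ n : ℤ, y + (n : ℝ) • e 0 ∈ range x) (t : ℝ) :
    1 ≤ (enteringIndices D x (e 0 - e 1) (y + vertex V e (m + 1) + t • e 0)).ncard := by
  obtain ⟨i, hi, -⟩ := P.exists_mem_enteringIndices hy t
  exact (ncard_pos (hT.finite_enteringIndices P.isConvexDomain.isCompact)).2 ⟨i, hi⟩

lemma five_le_of_hasStaggeredRows_of_five_le (hT : IsKFoldTranslativeTiling D x k)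
    (P : CyclicZonogon D m V e) (hm : 5 ≤ m) (h : HasStaggeredRows x (e 0) (oppositeShift e m)) :
    5 ≤ k := by
  obtain ⟨L, hL, hint⟩ := P.exists_forall_vertex_sub_smul_mem_interior
  have hS : ∀ j ∈ Finset.Icc 2 4, 2 ≤ j ∧ j < m := fun j hj => by
    rw [Finset.mem_Icc] at hj; omega
  have hle := hT.sum_mul_le_of_hasStaggeredRows P h (S := Finset.Icc 2 4) (w := 1)
    (fun y hy t => hT.one_le_ncard_enteringIndices P hy t)
    (fun j hj => ⟨by have := hS j hj; omega, (hS j hj).2.le⟩) (zero_le_one.trans hL.le)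
    (fun j hj => hint j (hS j hj).1 (hS j hj).2) (by simp) (by simp)
  norm_num at hle
  have : (4 : ℝ) < k := by linarith
  exact_mod_cast this

/-- If the two products differ, then one of the two chords can be given the weight `2`, and a total
weight of `3` is too much for `k < 5`. -/
lemma cross₂_eq_of_hasStaggeredRows (hT : IsKFoldTranslativeTiling D x k)
    (P : CyclicZonogon D 4 V e) (h : HasStaggeredRows x (e 0) (oppositeShift e 4)) (hk : k < 5) :
    cross₂ (e 0) (e 1) = cross₂ (e 0) (e 3) := by
  by_contra hne
  obtain ⟨L, hL, hint⟩ := P.exists_forall_vertex_sub_smul_mem_interior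
  obtain ⟨w, hw, hw₂, hw₃⟩ : ∃ w : ℕ → ℕ, (∀ j ∈ ({2, 3} : Finset ℕ), w j ≤ 2) ∧
      (∀ j ∈ ({2, 3} : Finset ℕ), ∀ j' ∈ ({2, 3} : Finset ℕ),
        cross₂ (e 0) (vertex V e j) + cross₂ (e 0) (vertex V e j') =
          cross₂ (e 0) (V + vertex V e 4) → w j + w j' ≤ 2) ∧ w 2 + w 3 = 3 := by
    by_cases h' : cross₂ (e 0) (e 1) = cross₂ (e 0) (e 2) + cross₂ (e 0) (e 3)
    · refine ⟨fun j => if j = 2 then 1 else 2, by simp, ?_, by simp⟩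
      simp only [Finset.mem_insert, Finset.mem_singleton, forall_eq_or_imp, forall_eq, vertex,
        Finset.sum_range_succ, Finset.sum_range_zero, cross₂_add_right, cross₂_zero_right,
        cross₂_self]
      grind [P.cross₂_pos 0 2]
    · refine ⟨fun j => if j = 2 then 2 else 1, by simp, ?_, by simp⟩
      simp only [Finset.mem_insert, Finset.mem_singleton, forall_eq_or_imp, forall_eq, vertex,
        Finset.sum_range_succ, Finset.sum_range_zero, cross₂_add_right, cross₂_zero_right,
        cross₂_self]
      grind [P.cross₂_pos 0 2]
  have hS : ∀ j ∈ ({2, 3} : Finset ℕ), 2 ≤ j ∧ j < 4 := by simp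
  have hle := hT.sum_mul_le_of_hasStaggeredRows P h
    (fun y hy t => hT.one_le_ncard_enteringIndices P hy t)
    (fun j hj => ⟨by have := hS j hj; omega, (hS j hj).2.le⟩) (zero_le_one.trans hL.le)
    (fun j hj => hint j (hS j hj).1 (hS j hj).2) hw hw₂
  have hw₃' : (w 2 : ℝ) + w 3 = 3 := by exact_mod_cast hw₃
  rw [Finset.sum_pair (by norm_num), hw₃'] at hle
  have : (k : ℝ) ≤ 4 := by exact_mod_cast Nat.lt_succ_iff.1 hk
  push_cast at hle
  linarith

end IsKFoldTranslativeTiling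

namespace CyclicZonogon

lemma exists_sub_eq_smul (P : CyclicZonogon D 4 V e)
    (h : cross₂ (e 0) (e 1) = cross₂ (e 0) (e 3)) : ∃ γ > (0 : ℝ), e 1 - e 3 = γ • e 0 := by
  obtain ⟨γ, hγ⟩ := exists_eq_smul_of_cross₂_eq_zero (P.edge_ne_zero 0) (y := e 1 - e 3)
    (by rw [cross₂_sub_right, h, sub_self])
  refine ⟨γ, ?_, hγ⟩
  have h03 := P.cross₂_pos 0 3 (by norm_num) (by norm_num)
  have h13 := P.cross₂_pos 1 3 (by norm_num) (by norm_num)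
  have hmul := congrArg (cross₂ · (e 3)) hγ
  simp only [cross₂_sub_left, cross₂_self, cross₂_smul_left, sub_zero] at hmul
  exact pos_of_mul_pos_left (hmul ▸ h13) h03.le

lemma vertex_sub_smul_mem_interior_of_sub_eq_smul (P : CyclicZonogon D 4 V e) {γ : ℝ}
    (hγ : e 1 - e 3 = γ • e 0) : ∀ j ∈ ({2, 3} : Finset ℕ), ∀ t ∈ Ioo 0 (1 + γ),
      vertex V e j - t • e 0 ∈ interior D := by
  intro j hj t ht
  have hj' : 2 ≤ j ∧ j < 4 := by
    simp only [Finset.mem_insert, Finset.mem_singleton] at hj; omega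
  refine P.vertex_sub_smul_mem_interior hj'.1 hj'.2 ?_ ht
  have hchord : vertex V e 2 - (1 + γ) • e 0 = V + e 3 := by
    rw [add_smul, ← hγ]
    simp only [vertex, Finset.sum_range_succ, Finset.sum_range_zero]
    module
  obtain rfl | rfl : j = 2 ∨ j = 3 := by omega
  · simpa [hchord] using P.add_sum_mem (A := {3}) (by decide)
  · have := P.add_sum_mem (A := {3, 2}) (by decide)
    rwa [Finset.sum_pair (by norm_num), ← add_assoc, ← hchord, sub_add_eq_add_sub,
      ← vertex_succ] at this

end CyclicZonogon

namespace IsKFoldTranslativeTiling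

lemma exists_sub_eq_smul_of_hasStaggeredRows (hT : IsKFoldTranslativeTiling D x k)
    (P : CyclicZonogon D 4 V e) (h : HasStaggeredRows x (e 0) (oppositeShift e 4)) (hk : k < 5) :
    ∃ γ ∈ Ioo (0 : ℝ) 1, e 1 - e 3 = γ • e 0 := by
  obtain ⟨γ, hγ₀, hγ⟩ := P.exists_sub_eq_smul (hT.cross₂_eq_of_hasStaggeredRows P h hk)
  refine ⟨γ, ⟨hγ₀, ?_⟩, hγ⟩
  have hle := hT.sum_mul_le_of_hasStaggeredRows P h (S := {2, 3}) (w := 1)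
    (fun y hy t => hT.one_le_ncard_enteringIndices P hy t) (by simp) (by positivity)
    (P.vertex_sub_smul_mem_interior_of_sub_eq_smul hγ) (by simp) (by simp)
  norm_num at hle
  have : (k : ℝ) ≤ 4 := by exact_mod_cast Nat.lt_succ_iff.1 hk
  linarith

lemma five_le_of_hasStaggeredRows_of_hasStaggeredRows (hT : IsKFoldTranslativeTiling D x k)
    (P : CyclicZonogon D 4 V e) (h : HasStaggeredRows x (e 0) (oppositeShift e 4))
    (h' : HasStaggeredRows x (e 1) (oppositeShift (fun j => e (j + 1)) 4)) : 5 ≤ k := by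
  by_contra! hk
  obtain ⟨γ, ⟨hγ₀, hγ₁⟩, hγ⟩ := hT.exists_sub_eq_smul_of_hasStaggeredRows P h hk
  obtain ⟨γ', ⟨-, hγ₁'⟩, hγ'⟩ := hT.exists_sub_eq_smul_of_hasStaggeredRows (P.rotate 1) h' hk
  have h4 : e 4 = -e 0 := P.antiperiodic 0
  simp only [Nat.reduceAdd, h4] at hγ'
  have he1 : e 1 = e 3 + γ • e 0 := by rw [← hγ]; module
  have he2 : e 2 = γ' • e 1 - e 0 := by rw [← hγ']; module
  have hcross : cross₂ (e 2) (e 3) = (γ * γ' - 1) * cross₂ (e 0) (e 3) := by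
    rw [he2, he1]
    simp only [cross₂_sub_left, cross₂_smul_left, cross₂_add_left, cross₂_self]
    ring
  have h03 := P.cross₂_pos 0 3 (by norm_num) (by norm_num)
  have h23 := P.cross₂_pos 2 3 (by norm_num) (by norm_num)
  have := pos_of_mul_pos_left (hcross ▸ h23) h03.le
  nlinarith

lemma one_lt_ncard_enteringIndices (hT : IsKFoldTranslativeTiling D x k)
    (P : CyclicZonogon D m V e) {y : ℝ × ℝ} {γ : ℝ} (hγ : γ ∈ Ioo 0 1)
    (hy : ∀ n : ℤ, y + (n : ℝ) • e 0 ∈ range x)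
    (hy' : ∀ n : ℤ, y + γ • e 0 + (n : ℝ) • e 0 ∈ range x) (t : ℝ) :
    1 < (enteringIndices D x (e 0 - e 1) (y + vertex V e (m + 1) + t • e 0)).ncard := by
  obtain ⟨i, hi, hxi⟩ := P.exists_mem_enteringIndices hy t
  obtain ⟨j, hj, hxj⟩ := P.exists_mem_enteringIndices hy' (t - γ)
  rw [show y + γ • e 0 + vertex V e (m + 1) + (t - γ) • e 0 = y + vertex V e (m + 1) + t • e 0 by
    module] at hj
  refine (one_lt_ncard (hT.finite_enteringIndices P.isConvexDomain.isCompact)).2 ⟨i, hi, j, hj, ?_⟩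
  rintro rfl
  rw [hxi, add_assoc, ← add_smul, add_right_inj] at hxj
  have hfloor : (⌊t⌋ : ℝ) = γ + ⌊t - γ⌋ := smul_left_injective ℝ (P.edge_ne_zero 0) hxj
  have h₁ : (⌊t - γ⌋ : ℝ) < ⌊t⌋ := by linarith [hγ.1]
  have h₂ : (⌊t⌋ : ℝ) < ((⌊t - γ⌋ + 1 : ℤ) : ℝ) := by push_cast; linarith [hγ.2]
  rw [Int.cast_lt] at h₁ h₂
  omega

lemma forall_add_smul_mem_range (hT : IsKFoldTranslativeTiling D x k)
    (P : CyclicZonogon D 4 V e) (h : HasStaggeredRows x (e 0) (oppositeShift e 4)) (hk : k < 5)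
    {γ : ℝ} (hγ : e 1 - e 3 = γ • e 0) {y : ℝ × ℝ} (hy : ∀ n : ℤ, y + (n : ℝ) • e 0 ∈ range x)
    (n : ℤ) : y + γ • e 0 + (n : ℝ) • e 0 ∈ range x := by
  have h4 : e 4 = -e 0 := P.antiperiodic 0
  have h5 : e 5 = -e 1 := P.antiperiodic 1
  have h6 : e 6 = -e 2 := P.antiperiodic 2
  have hper₁ := (hT.periodic_oppositeShift_or_hasStaggeredRows (P.rotate 1)).resolve_right
    fun h' => hk.not_ge (hT.five_le_of_hasStaggeredRows_of_hasStaggeredRows P h h')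
  have hper₃ := (hT.periodic_oppositeShift_or_hasStaggeredRows (P.rotate 3)).resolve_right
    fun h' => hk.not_ge <|
      hT.five_le_of_hasStaggeredRows_of_hasStaggeredRows (P.rotate 3) h' <| by
        convert h.neg using 1
        simp [oppositeShift, ← P.antiperiodic _, ← Finset.sum_neg_distrib]
  have hsum : oppositeShift (fun j => e (j + 1)) 4 + oppositeShift (fun j => e (j + 3)) 4 =
      -((2 + γ) • e 0) := by
    simp only [oppositeShift, Nat.reduceSub, Finset.sum_range_succ, Finset.sum_range_zero,
      Nat.reduceAdd, h4, h5, h6, add_smul, ← hγ]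
    module
  rw [← mem_range_add_iff hT.1 (hper₁.add_period hper₃), hsum]
  convert hy (n - 2) using 1
  push_cast
  module

lemma five_le_of_hasStaggeredRows_of_four (hT : IsKFoldTranslativeTiling D x k)
    (P : CyclicZonogon D 4 V e) (h : HasStaggeredRows x (e 0) (oppositeShift e 4)) : 5 ≤ k := by
  by_contra! hk
  obtain ⟨γ, hγI, hγ⟩ := hT.exists_sub_eq_smul_of_hasStaggeredRows P h hk
  have hle := hT.sum_mul_le_of_hasStaggeredRows P h (S := {2, 3}) (w := 1)
    (fun y hy t => hT.one_lt_ncard_enteringIndices P hγI hy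
      (hT.forall_add_smul_mem_range P h hk hγ hy) t)
    (by simp) (by linarith [hγI.1]) (P.vertex_sub_smul_mem_interior_of_sub_eq_smul hγ)
    (by simp) (by simp)
  norm_num at hle
  have : (k : ℝ) ≤ 4 := by exact_mod_cast Nat.lt_succ_iff.1 hk
  linarith [hγI.1]

lemma five_le_of_hasStaggeredRows (hT : IsKFoldTranslativeTiling D x k)
    (P : CyclicZonogon D m V e) (hm : 4 ≤ m) (h : HasStaggeredRows x (e 0) (oppositeShift e m)) :
    5 ≤ k := by
  obtain rfl | hm := hm.eq_or_lt
  · exact hT.five_le_of_hasStaggeredRows_of_four P h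
  · exact hT.five_le_of_hasStaggeredRows_of_five_le P hm h

end IsKFoldTranslativeTiling

end

/-! ### Overlaps at a vertex -/

section

variable {ι : Type} {x : ι → ℝ × ℝ} {D : Set (ℝ × ℝ)} {k m : ℕ} {V : ℝ × ℝ} {e : ℕ → ℝ × ℝ}

lemma IsKFoldTranslativeTiling.card_le_of_periodic (hT : IsKFoldTranslativeTiling D x k)
    (hk : 0 < k) (hD : IsCompact D) {p d : ℝ × ℝ} {G : Finset (ℝ × ℝ)}
    (hG : ∀ g ∈ G, Function.Periodic (translateMultiplicity x) g ∧
      ∀ᶠ δ : ℝ in 𝓝[>] 0, p + g + δ • d ∈ interior D) : G.card ≤ k := by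
  obtain ⟨i₀⟩ := hT.nonempty hk
  have hex (g : G) : ∃ i, x i = x i₀ - g := by
    refine (mem_range_add_iff hT.1 (hG g g.2).1 _).1 ?_
    rw [sub_add_cancel]
    exact mem_range_self i₀
  choose f hf using hex
  have hinj : Function.Injective f := fun g g' h => by
    simpa [hf] using congrArg x h
  rw [← Fintype.card_coe, ← Nat.card_eq_fintype_card, ← ncard_range_of_injective hinj]
  refine hT.ncard_le_of_eventually_mem_interior hD (z := x i₀ + p) (d := d) ?_
  rintro _ ⟨g, rfl⟩
  convert (hG g g.2).2 using 4
  rw [hf]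
  abel

/-- The diagonal of a polygon with edges `e i` that joins the end points of two consecutive edges:
the vectors which turn out to be periods of the family of translates. -/
def shortDiagonal (e : ℕ → ℝ × ℝ) (i : ℕ) : ℝ × ℝ := e i + e (i + 1)

namespace CyclicZonogon

lemma cross₂_shortDiagonal_pos (P : CyclicZonogon D m V e) {i j : ℕ} (hij : i < j)
    (hj : j < i + m) : 0 < cross₂ (shortDiagonal e i) (shortDiagonal e j) := by
  have h₁ : 0 ≤ cross₂ (e i) (e (j + 1)) := by
    rcases eq_or_lt_of_le (show j + 1 ≤ i + m by omega) with h | h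
    · rw [h, P.antiperiodic, cross₂_neg_right, cross₂_self, neg_zero]
    · exact (P.cross₂_pos i (j + 1) (by omega) h).le
  have h₂ : 0 ≤ cross₂ (e (i + 1)) (e j) := by
    rcases eq_or_lt_of_le (show i + 1 ≤ j by omega) with h | h
    · rw [h, cross₂_self]
    · exact (P.cross₂_pos (i + 1) j h (by omega)).le
  simp only [shortDiagonal, cross₂_add_left, cross₂_add_right]
  linarith [P.cross₂_pos i j hij hj, P.cross₂_pos (i + 1) (j + 1) (by omega) (by omega)]

lemma antiperiodic_shortDiagonal (P : CyclicZonogon D m V e) :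
    (shortDiagonal e).Antiperiodic m := fun i => by
  rw [shortDiagonal, shortDiagonal, P.antiperiodic, add_right_comm, P.antiperiodic]
  abel

lemma shortDiagonal_ne_zero (P : CyclicZonogon D m V e) (i : ℕ) : shortDiagonal e i ≠ 0 := fun h =>
  (P.cross₂_shortDiagonal_pos i.lt_succ_self (by have := P.two_le; omega)).ne'
    (by rw [h, cross₂_zero_left])

lemma shortDiagonal_ne_shortDiagonal_succ (P : CyclicZonogon D m V e) (i : ℕ) :
    shortDiagonal e i ≠ shortDiagonal e (i + 1) := fun h =>
  (P.cross₂_shortDiagonal_pos i.lt_succ_self (by have := P.two_le; omega)).ne'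
    (by rw [h, cross₂_self])

lemma eventually_add_sum_add_smul_mem_interior (P : CyclicZonogon D m V e) (hm : 4 ≤ m)
    {A : Finset ℕ} (hA : A ⊆ Finset.range 2) :
    ∀ᶠ δ : ℝ in 𝓝[>] 0, V + ∑ j ∈ A, e j + δ • ((2 : ℝ) • e 2 + e 3) ∈ interior D := by
  have hlt {j : ℕ} (hj : j ∈ A) : j < 2 := Finset.mem_range.1 (hA hj)
  have h2 : 2 ∉ A := fun h => by simpa using hlt h
  have h3 : 3 ∉ insert 2 A := fun h => by
    simpa using hlt (Finset.mem_of_mem_insert_of_ne h (by simp))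
  have hmem : insert 3 (insert 2 A) ⊆ Finset.range m := by
    intro j hj
    simp only [Finset.mem_insert] at hj
    rw [Finset.mem_range]
    have := @hlt j
    grind
  have hsub := (Finset.subset_insert 3 (insert 2 A)).trans hmem
  filter_upwards [Ioo_mem_nhdsGT (show (0 : ℝ) < 1 / 2 by norm_num)] with δ hδ
  convert add_smul_add_smul_mem_interior P.isConvexDomain.convex P.nonempty_interior
    (P.add_sum_mem ((Finset.subset_insert 2 A).trans hsub)) (u := e 2) (v := e 2 + e 3) (s := δ)
    (t := δ) ?_ ?_ ?_ hδ.1 hδ.1 (by linarith [hδ.2]) using 1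
  · module
  · convert P.add_sum_mem hsub using 1
    rw [Finset.sum_insert h2]
    abel
  · convert P.add_sum_mem hmem using 1
    rw [Finset.sum_insert h3, Finset.sum_insert h2]
    abel
  · rw [cross₂_add_right, cross₂_self, zero_add]
    exact (P.cross₂_pos 2 3 (by omega) (by omega)).ne'

lemma add_shortDiagonal_mem_interior (P : CyclicZonogon D m V e) {j : ℕ} (hj : 0 < j)
    (hjm : j + 2 < m) : V + shortDiagonal e j ∈ interior D := by
  convert P.add_sum_Ico_mem_interior hj (show j < j + 2 by omega) hjm using 2
  simp [shortDiagonal, Finset.sum_Ico_succ_top]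

lemma add_edge_mem_interior (P : CyclicZonogon D m V e) {j : ℕ} (hj : 0 < j)
    (hjm : j + 1 < m) : V + e j ∈ interior D := by
  convert P.add_sum_Ico_mem_interior hj j.lt_succ_self hjm using 2
  simp

end CyclicZonogon

end

section

lemma card_insert_zero_image {g : ℕ → ℝ × ℝ} {n : ℕ} (hne : ∀ i < n, g i ≠ 0)
    (hg : ∀ i j, i < j → j < n → 0 < cross₂ (g i) (g j)) :
    (insert 0 ((Finset.range n).image g)).card = n + 1 := by
  rw [Finset.card_insert_of_notMem, Finset.card_image_of_injOn, Finset.card_range]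
  · intro i hi j hj h
    rw [Finset.mem_coe, Finset.mem_range] at hi hj
    by_contra hij
    obtain hij | hij := Nat.lt_or_gt_of_ne hij
    · simpa [h] using hg i j hij hj
    · simpa [h] using hg j i hij hi
  · simpa using hne

lemma exists_add_ne_of_antiperiodic_five {E : Type*} [AddCommGroup E] {f : ℕ → E}
    (hf : f.Antiperiodic 5) (hne : ∀ i, f i ≠ 0) (hne' : ∀ i, f i ≠ f (i + 1)) :
    ∃ i, f i + f (i + 3) ≠ f (i + 1) ∧ f i + f (i + 3) ≠ f (i + 2) := by
  by_contra! h
  have hadd (i : ℕ) : f i + f (i + 3) = f (i + 2) := by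
    refine h i fun h₀ => ?_
    have h₂ : f (i + 2) = f i + f (i + 4) := by
      have := h (i + 2)
      rw [add_assoc, show 2 + 3 = 5 by rfl, hf] at this
      grind
    have := h (i + 1)
    grind
  have h₃ := hadd 3
  have hf₀ := hf 0
  have hf₁ := hf 1
  have := hadd 0
  have := hne' 1
  grind

variable {ι : Type} {x : ι → ℝ × ℝ} {D : Set (ℝ × ℝ)} {k m : ℕ} {V : ℝ × ℝ} {e : ℕ → ℝ × ℝ}

lemma CyclicZonogon.oppositeShift_sub_oppositeShift (P : CyclicZonogon D m V e) (i : ℕ) :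
    oppositeShift (fun j => e (j + i)) m - oppositeShift (fun j => e (j + (i + 1))) m =
      shortDiagonal e i := by
  obtain ⟨n, rfl⟩ : ∃ n, m = n + 2 := ⟨m - 2, by have := P.two_le; omega⟩
  have hlast : e (n + 1 + (i + 1)) = -e i := by
    rw [← P.antiperiodic]
    congr 1
    ring
  have hshift (j : ℕ) : e (j + 1 + 1 + i) = e (j + 1 + (i + 1)) := by
    congr 1
    ring
  rw [oppositeShift, oppositeShift, show n + 2 - 1 = n + 1 by omega, Finset.sum_range_succ',
    Finset.sum_range_succ]
  simp only [hlast, hshift, shortDiagonal, zero_add, add_comm 1 i]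
  abel

namespace IsKFoldTranslativeTiling

lemma periodic_oppositeShift (hT : IsKFoldTranslativeTiling D x k) (P : CyclicZonogon D m V e)
    (hm : 4 ≤ m) (hk : k < 5) :
    Function.Periodic (translateMultiplicity x) (oppositeShift e m) :=
  (hT.periodic_oppositeShift_or_hasStaggeredRows P).resolve_right fun h =>
    hk.not_ge (hT.five_le_of_hasStaggeredRows P hm h)

lemma periodic_shortDiagonal (hT : IsKFoldTranslativeTiling D x k) (P : CyclicZonogon D m V e)
    (hm : 4 ≤ m) (hk : k < 5) (i : ℕ) :
    Function.Periodic (translateMultiplicity x) (shortDiagonal e i) := by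
  rw [← P.oppositeShift_sub_oppositeShift]
  exact (hT.periodic_oppositeShift (P.rotate i) hm hk).sub_period
    (hT.periodic_oppositeShift (P.rotate (i + 1)) hm hk)

lemma periodic_edge (hT : IsKFoldTranslativeTiling D x k) (P : CyclicZonogon D 4 V e)
    (hk : k < 5) (i : ℕ) : Function.Periodic (translateMultiplicity x) (e i) := by
  have hi : e i = shortDiagonal e (i + 5) - oppositeShift (fun j => e (j + (i + 3))) 4 := by
    have h4 : e (i + 4) = -e i := P.antiperiodic i
    simp only [oppositeShift, shortDiagonal, Nat.reduceSub, Finset.sum_range_succ,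
      Finset.sum_range_zero]
    rw [show 0 + 1 + (i + 3) = i + 4 by ring, show 1 + 1 + (i + 3) = i + 5 by ring,
      show 2 + 1 + (i + 3) = i + 5 + 1 by ring, h4]
    abel
  rw [hi]
  exact (hT.periodic_shortDiagonal P le_rfl hk _).sub_period
    (hT.periodic_oppositeShift (P.rotate (i + 3)) le_rfl hk)

lemma forall_mem_insert_image_shortDiagonal (hT : IsKFoldTranslativeTiling D x k)
    (P : CyclicZonogon D m V e) (hm : 4 ≤ m) (hk : k < 5) :
    ∀ g ∈ insert 0 ((Finset.range (m - 2)).image (shortDiagonal e)),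
      Function.Periodic (translateMultiplicity x) g ∧
        ∀ᶠ δ : ℝ in 𝓝[>] 0, V + g + δ • ((2 : ℝ) • e 2 + e 3) ∈ interior D := by
  simp only [Finset.forall_mem_insert, Finset.forall_mem_image, Finset.mem_range]
  refine ⟨⟨by simp [Function.Periodic], ?_⟩, fun j hj => ⟨hT.periodic_shortDiagonal P hm hk j, ?_⟩⟩
  · simpa using P.eventually_add_sum_add_smul_mem_interior hm (Finset.empty_subset _)
  · obtain rfl | hj₀ := j.eq_zero_or_pos
    · simpa [Finset.sum_range_succ, shortDiagonal] using
        P.eventually_add_sum_add_smul_mem_interior hm subset_rfl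
    · exact eventually_add_smul_mem_interior
        (P.add_shortDiagonal_mem_interior hj₀ (by omega)) _

lemma five_le_of_six_le (hT : IsKFoldTranslativeTiling D x k) (hk : 0 < k)
    (P : CyclicZonogon D m V e) (hm : 6 ≤ m) : 5 ≤ k := by
  by_contra! hk₅
  have hcard := hT.card_le_of_periodic hk P.isConvexDomain.isCompact
    (hT.forall_mem_insert_image_shortDiagonal P (by omega) hk₅)
  rw [card_insert_zero_image (fun i _ => P.shortDiagonal_ne_zero i) fun i j hij hj =>
    P.cross₂_shortDiagonal_pos hij (by omega)] at hcard
  omega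

lemma five_le_of_eq_five (hT : IsKFoldTranslativeTiling D x k) (hk : 0 < k)
    (P : CyclicZonogon D 5 V e) : 5 ≤ k := by
  wlog h : shortDiagonal e 0 + shortDiagonal e 3 ≠ shortDiagonal e 1 ∧
    shortDiagonal e 0 + shortDiagonal e 3 ≠ shortDiagonal e 2 generalizing V e
  · obtain ⟨i, hi⟩ := exists_add_ne_of_antiperiodic_five P.antiperiodic_shortDiagonal
      P.shortDiagonal_ne_zero fun i => P.shortDiagonal_ne_shortDiagonal_succ i
    refine this (P.rotate i) ?_
    simpa [shortDiagonal, add_comm, add_left_comm, add_assoc] using hi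
  by_contra! hk₅
  have hint : V + (shortDiagonal e 0 + shortDiagonal e 3) ∈ interior D := by
    have hedge := P.add_edge_mem_interior (j := 2) (by norm_num) (by norm_num)
    convert P.sub_mem_interior hedge using 1
    simp only [vertex, shortDiagonal, Finset.sum_range_succ, Finset.sum_range_zero]
    abel
  have hnot : shortDiagonal e 0 + shortDiagonal e 3 ∉
      insert 0 ((Finset.range 3).image (shortDiagonal e)) := by
    have h₀ : 0 < cross₂ (shortDiagonal e 0 + shortDiagonal e 3) (shortDiagonal e 3) := by
      rw [cross₂_add_left, cross₂_self, add_zero]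
      exact P.cross₂_shortDiagonal_pos (by norm_num) (by norm_num)
    have hne : shortDiagonal e 0 + shortDiagonal e 3 ≠ 0 := fun h => by simp [h] at h₀
    simp [Finset.range_add_one, hne, h.1, h.2, P.shortDiagonal_ne_zero]
  have hper := (hT.periodic_shortDiagonal P (by norm_num) hk₅ 0).add_period
    (hT.periodic_shortDiagonal P (by norm_num) hk₅ 3)
  have hcard := hT.card_le_of_periodic hk P.isConvexDomain.isCompact <|
    (Finset.forall_mem_insert _ _ _).2 ⟨⟨hper, eventually_add_smul_mem_interior hint _⟩,
      hT.forall_mem_insert_image_shortDiagonal P (by norm_num) hk₅⟩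
  rw [Finset.card_insert_of_notMem hnot, card_insert_zero_image
    (fun i _ => P.shortDiagonal_ne_zero i) fun i j hij hj =>
    P.cross₂_shortDiagonal_pos hij (by omega)] at hcard
  omega

lemma forall_mem_insert_image_edge (hT : IsKFoldTranslativeTiling D x k)
    (P : CyclicZonogon D 4 V e) (hk : k < 5) :
    ∀ g ∈ insert (e 0 + e 1) (insert 0 ((Finset.range 3).image e)),
      Function.Periodic (translateMultiplicity x) g ∧
        ∀ᶠ δ : ℝ in 𝓝[>] 0, V + g + δ • ((2 : ℝ) • e 2 + e 3) ∈ interior D := by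
  have hper := hT.periodic_edge P hk
  simp only [Finset.forall_mem_insert, Finset.forall_mem_image, Finset.mem_range]
  refine ⟨⟨(hper 0).add_period (hper 1), ?_⟩, ⟨by simp [Function.Periodic], ?_⟩,
    fun j hj => ⟨hper j, ?_⟩⟩
  · simpa [Finset.sum_range_succ] using P.eventually_add_sum_add_smul_mem_interior le_rfl subset_rfl
  · simpa using P.eventually_add_sum_add_smul_mem_interior le_rfl (Finset.empty_subset _)
  · obtain rfl | hj₀ := j.eq_zero_or_pos
    · simpa using P.eventually_add_sum_add_smul_mem_interior le_rfl
        (show {0} ⊆ Finset.range 2 by decide)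
    · exact eventually_add_smul_mem_interior (P.add_edge_mem_interior hj₀ (by omega)) _

lemma five_le_of_eq_four (hT : IsKFoldTranslativeTiling D x k) (hk : 0 < k)
    (P : CyclicZonogon D 4 V e) : 5 ≤ k := by
  by_contra! hk₅
  have hnot : e 0 + e 1 ∉ insert 0 ((Finset.range 3).image e) := by
    have h₁ : 0 < cross₂ (e 0 + e 1) (e 1) := by
      simpa using P.cross₂_pos 0 1 (by norm_num) (by norm_num)
    have h₂ : 0 < cross₂ (e 0 + e 1) (e 2) := by
      simpa using add_pos (P.cross₂_pos 0 2 (by norm_num) (by norm_num))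
        (P.cross₂_pos 1 2 (by norm_num) (by norm_num))
    have hne : e 0 + e 1 ≠ 0 := fun h => by simp [h] at h₁
    have hne₂ : e 0 + e 1 ≠ e 2 := fun h => by simp [h] at h₂
    simp [Finset.range_add_one, hne, hne₂, P.edge_ne_zero]
  have hcard := hT.card_le_of_periodic hk P.isConvexDomain.isCompact
    (hT.forall_mem_insert_image_edge P hk₅)
  rw [Finset.card_insert_of_notMem hnot, card_insert_zero_image
    (fun i _ => P.edge_ne_zero i) fun i j hij hj => P.cross₂_pos i j hij (by omega)] at hcard
  omega

lemma five_le_of_four_le (hT : IsKFoldTranslativeTiling D x k) (hk : 0 < k)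
    (P : CyclicZonogon D m V e) (hm : 4 ≤ m) : 5 ≤ k := by
  obtain rfl | rfl | hm : m = 4 ∨ m = 5 ∨ 6 ≤ m := by omega
  · exact hT.five_le_of_eq_four hk P
  · exact hT.five_le_of_eq_five hk P
  · exact hT.five_le_of_six_le hk P hm

end IsKFoldTranslativeTiling

end

end

/-- Theorem 2: a convex domain which is neither a parallelogram nor a centrally
symmetric hexagon admits no `k`-fold translative tiling of the plane with `k ≤ 4`. -/
theorem no_low_multiplicity_tiling (D : Set (ℝ × ℝ))
    (hD : IsCompact D) (hconv : Convex ℝ D) (hint : (interior D).Nonempty)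
    (hnotpar : ¬ IsParallelogram D) (hnothex : ¬ IsCentrallySymmetricHexagon D)
    (k : ℕ) (hk : 0 < k) (ι : Type) (x : ι → ℝ × ℝ)
    (htile : IsKFoldTranslativeTiling D x k) :
    5 ≤ k := by
  obtain ⟨m, V, e, P⟩ := htile.exists_cyclicZonogon hk ⟨hD, hconv, hint⟩
  obtain rfl | rfl | hm : m = 2 ∨ m = 3 ∨ 4 ≤ m := by have := P.two_le; omega
  · exact absurd P.isParallelogram hnotpar
  · exact absurd P.isCentrallySymmetricHexagon hnothex
  · exact htile.five_le_of_four_le hk P hm
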